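/- arXiv:2604.01992 — 4 statements merged into one kernel-verified Lean document; each statement's English description precedes it below -/
import Mathlib

section
/- Let (K, v_K) be a field with a non-trivial real-valued valuation, let L = K(T) be the field of rational functions in one variable over K, and let w be any real-valued valuation on L extending v_K, with ring of integers L° = {f ∈ L : w(f) ≥ 0}. Then H₁(𝕃_{L°/K°}) = 0, i.e. the L°-module Algebra.H1Cotangent K° L° is trivial. -/
set_option synthInstance.maxHeartbeats 800000
set_option maxHeartbeats 1600000

noncomputable section

/-- The unit ball (ring of integers) of a real-valued additive semi-valuation. -/
def AddValuation.unitBall {A : Type*} [CommRing A] (v : AddValuation A (WithTop ℝ)) :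
    Subring A where
  carrier := {a | 0 ≤ v a}
  zero_mem' := by simp only [Set.mem_setOf_eq, AddValuation.map_zero]; exact le_top
  one_mem' := by simp only [Set.mem_setOf_eq, AddValuation.map_one]; exact le_refl _
  add_mem' := by
    intro a b ha hb
    exact le_trans (le_min ha hb) (v.map_add a b)
  mul_mem' := by
    intro a b ha hb
    simp only [Set.mem_setOf_eq, AddValuation.map_mul]
    exact add_nonneg ha hb
  neg_mem' := by
    intro a ha
    simpa only [Set.mem_setOf_eq, AddValuation.map_neg] using ha

/-- A real-valued additive valuation on a field is *non-trivial* if it does not vanish on all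
of `K^×`. -/
def AddValuation.IsNontrivial {K : Type*} [Field K] (v : AddValuation K (WithTop ℝ)) : Prop :=
  ∃ x : K, x ≠ 0 ∧ v x ≠ 0


set_option linter.all false


namespace HOne

section Elliott
variable {Λ : Type*} [AddCommGroup Λ]

/-- The cone spanned by a family. -/
def ECone (v : Λ →+ ℝ) {ι : Type} [Fintype ι] (e : ι → Λ) : Set Λ :=
  {s | ∃ k : ι → ℤ, (∀ i, 0 ≤ k i ∨ v (e i) = 0) ∧ s = ∑ i, k i • e i}

theorem op_sum {ι : Type} [Fintype ι] [DecidableEq ι] (e : ι → Λ) (k : ι → ℤ) (i j : ι)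
    (hij : i ≠ j) (c : ℤ) :
    ∑ l, (Function.update k j (k j + c * k i)) l • (Function.update e i (e i - c • e j)) l
      = ∑ l, k l • e l := by
  have h1 : ∀ l, (Function.update k j (k j + c * k i)) l • (Function.update e i (e i - c • e j)) l
      = k l • e l + ((if l = j then (c * k i) • e l else 0) - (if l = i then (k l * c) • e j else 0)) := by
    intro l
    by_cases h : l = j
    · subst h
      simp [hij.symm, add_smul]
    · by_cases h' : l = i
      · subst h'
        simp [h, mul_smul, sub_eq_add_neg]
      · simp [h, h']
  simp_rw [h1]
  rw [Finset.sum_add_distrib, Finset.sum_sub_distrib]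
  simp [mul_comm]

theorem op_cone (v : Λ →+ ℝ) {ι : Type} [Fintype ι] [DecidableEq ι] (e : ι → Λ)
    (he : ∀ i, 0 ≤ v (e i)) (i j : ι) (hij : i ≠ j) (hv : v (e j) ≤ v (e i)) :
    (∀ l, 0 ≤ v (Function.update e i (e i - (1:ℤ) • e j) l)) ∧
    ECone v e ⊆ ECone v (Function.update e i (e i - (1:ℤ) • e j)) := by
  constructor
  · intro l
    by_cases h : l = i
    · subst h; simp; linarith
    · simp [h, he]
  · rintro s ⟨k, hk, rfl⟩
    refine ⟨Function.update k j (k j + 1 * k i), ?_, (op_sum e k i j hij 1).symm⟩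
    intro l
    by_cases h : l = j
    · subst h
      rw [Function.update_self, Function.update_of_ne hij.symm]
      rcases hk l with h1 | h1
      · rcases hk i with h2 | h2
        · left; omega
        · right; have := he l; linarith
      · exact Or.inr h1
    · rw [Function.update_of_ne h]
      by_cases h' : l = i
      · subst h'
        rcases hk l with h1 | h1
        · exact Or.inl h1
        · right
          have := he j
          have h3 : v (e j) = 0 := by linarith
          simp [h1, h3]
      · rw [Function.update_of_ne h']; exact hk l

theorem op_cone' (v : Λ →+ ℝ) {ι : Type} [Fintype ι] [DecidableEq ι] (e : ι → Λ)
    (he : ∀ i, 0 ≤ v (e i)) (i j : ι) (hij : i ≠ j) (hi : v (e i) = 0) (hj : v (e j) = 0) :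
    (∀ l, 0 ≤ v (Function.update e i (e i - (-1:ℤ) • e j) l)) ∧
    ECone v e ⊆ ECone v (Function.update e i (e i - (-1:ℤ) • e j)) := by
  constructor
  · intro l
    by_cases h : l = i
    · subst h; simp [hi, hj]
    · simp [h, he]
  · rintro s ⟨k, hk, rfl⟩
    refine ⟨Function.update k j (k j + (-1) * k i), ?_, (op_sum e k i j hij (-1)).symm⟩
    intro l
    by_cases h' : l = i
    · subst h'; right; simp [hi, hj]
    · by_cases h : l = j
      · subst h; right; simp [h', hj]
      · simpa [h, h'] using hk l

/-- Conclusion of the core lemma. -/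
def ECore (v : Λ →+ ℝ) {ι : Type} [Fintype ι] (e : ι → Λ) : Prop :=
  ∃ e' : ι → Λ, (∀ i, 0 ≤ v (e' i)) ∧ ECone v e ⊆ ECone v e' ∧ ∃ i, e' i = 0

theorem ECore.mono {v : Λ →+ ℝ} {ι : Type} [Fintype ι] {e e₁ : ι → Λ}
    (h : ECone v e ⊆ ECone v e₁) (h1 : ECore v e₁) : ECore v e := by
  obtain ⟨e', a, b, c⟩ := h1
  exact ⟨e', a, h.trans b, c⟩

theorem core_inner [IsAddTorsionFree Λ] (v : Λ →+ ℝ) {ι : Type} [Fintype ι] [DecidableEq ι] (Q c : ℕ)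
    (hQ : 0 < Q)
    (IH : ∀ (e : ι → Λ) (q : ι → ℤ), (∀ i, 0 ≤ v (e i)) → ∑ i, q i • e i = 0 → q ≠ 0 →
      (∀ i, |q i| ≤ Q) → (Finset.univ.filter (fun i => |q i| = Q)).card < c → ECore v e) (j : ι) :
    ∀ (n : ℕ) (e : ι → Λ) (q : ι → ℤ), (∀ i, 0 ≤ v (e i)) → ∑ i, q i • e i = 0 →
      (∀ i, |q i| ≤ Q) → (Finset.univ.filter (fun i => |q i| = Q)).card ≤ c →
      q j = -Q → (Finset.univ.filter (fun i => 0 < q i)).card ≤ n → ECore v e := by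
  intro n
  induction n using Nat.strong_induction_on with
  | _ n ih =>
  intro e q he hq hb hc hj hn
  have dec : ∀ (i : ι) (a : ℤ), |q i| = Q → |a| < Q →
      (Finset.univ.filter (fun l => |Function.update q i a l| = Q)).card < c := by
    intro i a h1 h2
    refine lt_of_lt_of_le (Finset.card_lt_card ?_) hc
    rw [Finset.ssubset_iff_of_subset]
    · refine ⟨i, by simp [h1], ?_⟩
      simp; exact h2.ne
    · intro l
      by_cases h : l = i
      · subst h; simp [h2.ne]
      · simp [h]
  have bd : ∀ (i : ι) (a : ℤ), |a| ≤ Q → ∀ l, |Function.update q i a l| ≤ Q := by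
    intro i a h2 l
    by_cases h : l = i
    · subst h; simpa
    · simp [h, hb]
  have hjQ : |q j| = Q := by rw [hj]; simp
  by_cases hP : ∃ i, 0 < q i
  · by_cases hP2 : ∃ i, 0 < q i ∧ v (e j) ≤ v (e i)
    · obtain ⟨i, hi, hv⟩ := hP2
      have hij : i ≠ j := by rintro rfl; omega
      obtain ⟨a1, a2⟩ := op_cone v e he i j hij hv
      refine ECore.mono a2 (IH _ (Function.update q j (q j + 1 * q i)) a1
        ((op_sum e q i j hij 1).trans hq) ?_ (bd _ _ ?_) (dec _ _ hjQ ?_))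
      · intro h0
        have := congrFun h0 i
        simp [hij] at this; omega
      · have := hb i; rw [abs_le] at *; omega
      · have := hb i; rw [abs_le] at *; rw [abs_lt]; omega
    · push Not at hP2
      obtain ⟨i, hi⟩ := hP
      have hv := hP2 i hi
      have hij : j ≠ i := by rintro rfl; omega
      obtain ⟨a1, a2⟩ := op_cone v e he j i hij hv.le
      have hcard : (Finset.univ.filter (fun l => 0 < Function.update q i (q i + 1 * q j) l)).card
          < (Finset.univ.filter (fun l => 0 < q l)).card := by
        refine Finset.card_lt_card ?_
        have hbi := hb i
        rw [abs_le] at hbi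
        rw [Finset.ssubset_iff_of_subset]
        · refine ⟨i, by simp [hi], ?_⟩
          simp; omega
        · intro l
          by_cases h : l = i
          · subst h; simp; omega
          · simp [h]
      have hlt : |q i + 1 * q j| < Q := by
        have := hb i; rw [abs_le] at this; rw [abs_lt]; omega
      refine ECore.mono a2 (ih _ (lt_of_lt_of_le hcard hn) _ (Function.update q i (q i + 1 * q j)) a1
        ((op_sum e q j i hij 1).trans hq) (bd _ _ hlt.le) ?_ ?_ le_rfl)
      · refine le_trans (Finset.card_le_card ?_) hc
        intro l
        by_cases h : l = i
        · subst h; simp; intro h; exact absurd h (by simpa using hlt.ne)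
        · simp [h]
      · simp [hij, hj]
  · push Not at hP
    have hz : ∀ i, q i ≠ 0 → v (e i) = 0 := by
      have h1 : ∑ i, (-(q i : ℝ)) * v (e i) = 0 := by
        have := congrArg v hq
        simp only [map_sum, map_zsmul, map_zero, zsmul_eq_mul] at this
        simp only [neg_mul, Finset.sum_neg_distrib, this, neg_zero]
      rw [Finset.sum_eq_zero_iff_of_nonneg] at h1
      · intro i hi
        have := h1 i (Finset.mem_univ _)
        simpa [hi] using this
      · intro i _
        refine mul_nonneg ?_ (he i)
        have : ((q i : ℤ) : ℝ) ≤ 0 := by exact_mod_cast hP i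
        linarith
    by_cases hs : ∃ i, i ≠ j ∧ q i ≠ 0
    · obtain ⟨i, hij, hi⟩ := hs
      have hi' : q i < 0 := lt_of_le_of_ne (hP i) hi
      obtain ⟨a1, a2⟩ := op_cone' v e he i j hij (hz i hi) (hz j (by omega))
      refine ECore.mono a2 (IH _ (Function.update q j (q j + (-1) * q i)) a1
        ((op_sum e q i j hij (-1)).trans hq) ?_ (bd _ _ ?_) (dec _ _ hjQ ?_))
      · intro h0
        have := congrFun h0 i
        simp [hij] at this; omega
      · have := hb i; rw [abs_le] at *; omega
      · have := hb i; rw [abs_le] at *; rw [abs_lt]; omega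
    · push Not at hs
      refine ⟨e, he, subset_rfl, j, ?_⟩
      rw [Finset.sum_eq_single j (fun i _ h => by simp [hs i h]) (by simp)] at hq
      rw [hj] at hq
      have : Q • e j = 0 := by simpa using hq
      exact (smul_eq_zero_iff_right hQ.ne').1 this

theorem core [IsAddTorsionFree Λ] (v : Λ →+ ℝ) {ι : Type} [Fintype ι] [DecidableEq ι] (Q : ℕ) :
    ∀ (c : ℕ) (e : ι → Λ) (q : ι → ℤ), (∀ i, 0 ≤ v (e i)) → ∑ i, q i • e i = 0 → q ≠ 0 →
      (∀ i, |q i| ≤ Q) → (Finset.univ.filter (fun i => |q i| = Q)).card ≤ c → ECore v e := by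
  induction Q with
  | zero =>
    intro c e q _ _ hq hb
    exact absurd (funext fun i => by simpa using hb i) hq
  | succ Q ihQ =>
    intro c
    induction c with
    | zero =>
      intro e q he hq h0 hb hc
      refine ihQ _ e q he hq h0 ?_ le_rfl
      intro i
      have h1 : i ∉ (Finset.univ.filter (fun i => |q i| = ((Q + 1 : ℕ) : ℤ))) := by
        rw [Nat.le_zero, Finset.card_eq_zero] at hc
        rw [hc]; simp
      have := hb i
      simp at h1
      push_cast at this
      omega
    | succ c ihc =>
      intro e q he hq h0 hb hc
      by_cases hm : ∃ j, |q j| = ((Q + 1 : ℕ) : ℤ)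
      · obtain ⟨j, hj⟩ := hm
        have key := core_inner v (Q + 1) (c + 1) (Nat.succ_pos _)
          (fun e q a1 a2 a3 a4 a5 => ihc e q a1 a2 a3 a4 (Nat.lt_succ_iff.1 a5)) j
        rcases abs_choice (q j) with h | h
        · refine key _ e (-q) he ?_ ?_ ?_ ?_ le_rfl
          · simp [hq]
          · simpa using hb
          · simpa using hc
          · simp; rw [← h, hj]; simp
        · exact key _ e q he hq hb hc (by rw [← hj, h]; simp) le_rfl
      · push Not at hm
        refine ihQ _ e q he hq h0 ?_ le_rfl
        intro i
        have := hb i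
        have := hm i
        push_cast at *
        omega

/-- The Elliott lemma: reduce to an independent family. -/
theorem elliott_aux [IsAddTorsionFree Λ] (v : Λ →+ ℝ) (n : ℕ) :
    ∀ e : Fin n → Λ, (∀ i, 0 ≤ v (e i)) →
    ∃ (r : ℕ) (e' : Fin r → Λ), (∀ i, 0 ≤ v (e' i)) ∧ LinearIndependent ℤ e' ∧
      ECone v e ⊆ ECone v e' := by
  induction n with
  | zero => intro e he; exact ⟨0, e, he, linearIndependent_empty_type, subset_rfl⟩
  | succ n ih =>
    intro e he
    by_cases hl : LinearIndependent ℤ e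
    · exact ⟨_, e, he, hl, subset_rfl⟩
    · rw [Fintype.not_linearIndependent_iff] at hl
      obtain ⟨q, hq, i, hi⟩ := hl
      have hcore : ECore v e := by
        refine core v (∑ i, (q i).natAbs) _ e q he hq (fun h => hi (by simp [h])) ?_ le_rfl
        intro i
        rw [Int.abs_eq_natAbs]
        exact_mod_cast Finset.single_le_sum (f := fun i => (q i).natAbs) (fun _ _ => Nat.zero_le _)
          (Finset.mem_univ i)
      obtain ⟨e', h1, h2, i0, h3⟩ := hcore
      obtain ⟨r, e'', a1, a2, a3⟩ := ih (fun l => e' (i0.succAbove l)) (fun l => h1 _)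
      refine ⟨r, e'', a1, a2, h2.trans (Set.Subset.trans ?_ a3)⟩
      rintro s ⟨k, hk, rfl⟩
      refine ⟨fun l => k (i0.succAbove l), fun l => hk _, ?_⟩
      rw [Fin.sum_univ_succAbove _ i0, h3]; simp

theorem elliott [IsAddTorsionFree Λ] (v : Λ →+ ℝ) (F : Finset Λ) (h : ∀ s ∈ F, 0 ≤ v s) :
    ∃ (r : ℕ) (e : Fin r → Λ), (∀ i, 0 ≤ v (e i)) ∧ LinearIndependent ℤ e ∧
      ∀ s ∈ F, s ∈ ECone v e := by
  obtain ⟨r, e, a1, a2, a3⟩ := elliott_aux v F.card (fun i => (F.equivFin.symm i : Λ))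
    (fun i => h _ (Subtype.property _))
  refine ⟨r, e, a1, a2, fun s hs => a3 ?_⟩
  refine ⟨Pi.single (F.equivFin ⟨s, hs⟩) 1, ?_, ?_⟩
  · intro i
    left
    by_cases hh : i = F.equivFin ⟨s, hs⟩
    · subst hh; simp
    · simp [hh]
  · rw [Finset.sum_eq_single (F.equivFin ⟨s, hs⟩)] <;> simp
    intro b hb
    right
    simp [Pi.single_apply, hb]

end Elliott
end HOne


namespace HOne
open Polynomial

/-- nonzero polynomials -/
abbrev X0 (K : Type*) [Field K] := {p : K[X] // p ≠ 0}
/-- The free group on nonzero polynomials. -/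
abbrev Lam (K : Type*) [Field K] := X0 K →₀ ℤ

section Basic
variable {K : Type*} [Field K] (L : Type*) [Field L] [Algebra K[X] L] [IsFractionRing K[X] L]

theorem amap_ne (p : X0 K) : algebraMap K[X] L p.1 ≠ 0 := by
  rw [Ne, IsFractionRing.to_map_eq_zero_iff]; exact p.2

/-- The monomial in `L`. -/
def bar (l : Lam K) : L := l.prod (fun p k => (algebraMap K[X] L p.1) ^ k)

@[simp] theorem bar_zero : bar L (0 : Lam K) = 1 := by simp [bar]

theorem bar_add (l l' : Lam K) : bar L (l + l') = bar L l * bar L l' := by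
  unfold bar
  exact Finsupp.prod_add_index' (by simp) (fun p a b => zpow_add₀ (amap_ne L p) a b)

theorem bar_single (p : X0 K) (k : ℤ) : bar L (Finsupp.single p k) = (algebraMap K[X] L p.1) ^ k := by
  simp [bar]

theorem bar_ne (l : Lam K) : bar L l ≠ 0 := by
  unfold bar
  exact Finset.prod_ne_zero_iff.2 (fun p _ => zpow_ne_zero _ (amap_ne L p))

theorem bar_neg (l : Lam K) : bar L (-l) = (bar L l)⁻¹ := by
  have := bar_add L (-l) l
  rw [neg_add_cancel, bar_zero] at this
  exact eq_inv_of_mul_eq_one_left this.symm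

theorem bar_sub (l l' : Lam K) : bar L (l - l') = bar L l / bar L l' := by
  rw [sub_eq_add_neg, bar_add, bar_neg, div_eq_mul_inv]

theorem bar_zsmul (k : ℤ) (l : Lam K) : bar L (k • l) = bar L l ^ k := by
  let F : Multiplicative (Lam K) →* L :=
    { toFun := fun l => bar L l.toAdd
      map_one' := bar_zero L
      map_mul' := fun a b => bar_add L _ _ }
  exact map_zpow' F (fun x => bar_neg L x.toAdd) (Multiplicative.ofAdd l) k

variable {L}
variable (w : AddValuation L (WithTop ℝ))

theorem w_ne (x : L) (hx : x ≠ 0) : w x ≠ ⊤ := fun h => hx ((AddValuation.top_iff w).1 h)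

/-- The value of a monomial. -/
def wR : Lam K →+ ℝ := AddMonoidHom.mk' (fun l => (w (bar L l)).untop (w_ne w _ (bar_ne L l)))
  (by
    intro a b
    apply WithTop.coe_injective
    rw [WithTop.coe_add]
    simp only [WithTop.coe_untop]
    rw [bar_add, AddValuation.map_mul])

theorem wR_coe (l : Lam K) : ((wR w l : ℝ) : WithTop ℝ) = w (bar L l) := by
  simp [wR]

theorem wR_nonneg_iff (l : Lam K) : 0 ≤ wR w l ↔ 0 ≤ w (bar L l) := by
  rw [← wR_coe]; exact_mod_cast Iff.rfl

theorem wR_pos_iff (l : Lam K) : 0 < wR w l ↔ 0 < w (bar L l) := by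
  rw [← wR_coe]; exact_mod_cast Iff.rfl

/-- The monoid of monomials of nonnegative value. -/
def Lp : AddSubmonoid (Lam K) where
  carrier := {l | 0 ≤ wR w l}
  zero_mem' := by simp
  add_mem' := by intro a b ha hb; simp only [Set.mem_setOf_eq, map_add] at *; linarith

variable (A : Type*) [CommRing A] [Algebra A L]

/-- The big monoid algebra. -/
abbrev SS (K : Type*) [Field K] {L : Type*} [Field L] [Algebra K[X] L] [IsFractionRing K[X] L]
  (w : AddValuation L (WithTop ℝ)) (A : Type*) [CommRing A] := AddMonoidAlgebra A (Lp (K := K) w)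

open Classical in
/-- The monomial, or zero. -/
def mo (l : Lam K) : SS K w A :=
  if h : 0 ≤ wR w l then AddMonoidAlgebra.single (⟨l, h⟩ : Lp (K := K) w) (1 : A) else 0

theorem mo_add {l l' : Lam K} (h : 0 ≤ wR w l) (h' : 0 ≤ wR w l') :
    mo w A (l + l') = mo w A l * mo w A l' := by
  have h'' : 0 ≤ wR w (l + l') := by rw [map_add]; linarith
  simp only [mo, h, h', h'', dif_pos, AddMonoidAlgebra.single_mul_single, one_mul]
  rfl

@[simp] theorem mo_zero : mo w A (0 : Lam K) = 1 := by
  simp [mo]; rfl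

/-- evaluation -/
def phi : SS K w A →ₐ[A] L :=
  AddMonoidAlgebra.lift A L (Lp (K := K) w)
    { toFun := fun l => bar L (l.toAdd : Lam K)
      map_one' := bar_zero L
      map_mul' := fun a b => bar_add L _ _ }

theorem phi_mo {l : Lam K} (h : 0 ≤ wR w l) : phi w A (mo w A l) = bar L l := by
  simp [mo, h, phi]

/-- dual number valued evaluation -/
def Psi (p : X0 K) : SS K w A →ₐ[A] DualNumber L :=
  AddMonoidAlgebra.lift A (DualNumber L) (Lp (K := K) w)
    { toFun := fun l => TrivSqZeroExt.inl (bar L (l.toAdd : Lam K)) *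
         (1 + TrivSqZeroExt.inr (((l.toAdd : Lam K) p : ℤ) : L))
      map_one' := by simp
      map_mul' := fun a b => by
        ext
        · simp [bar_add]
        · simp [bar_add]; ring }

theorem Psi_mo (p : X0 K) {l : Lam K} (h : 0 ≤ wR w l) : Psi w A p (mo w A l) =
    TrivSqZeroExt.inl (bar L l) * (1 + TrivSqZeroExt.inr ((l p : ℤ) : L)) := by
  simp [mo, h, Psi]

theorem SS_induction {P : SS K w A → Prop} (s : SS K w A) (h0 : P 0)
    (hadd : ∀ a b, P a → P b → P (a + b))
    (hs : ∀ (a : A) (l : Lam K), 0 ≤ wR w l → P (a • mo w A l)) : P s := by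
  induction s using AddMonoidAlgebra.induction_linear with
  | zero => exact h0
  | add a b ha hb => exact hadd a b ha hb
  | single l a =>
    have := hs a l.1 l.2
    have h2 : 0 ≤ wR w (l : Lam K) := l.2
    simpa [mo, h2] using this

theorem Psi_fst (p : X0 K) (s : SS K w A) : (Psi w A p s).fst = phi w A s := by
  induction s using SS_induction with
  | h0 => simp
  | hadd a b ha hb => simp [ha, hb]
  | hs a l h => simp [Psi_mo w A p h, phi_mo w A h]

/-- the derivation -/
def psi (p : X0 K) (s : SS K w A) : L := (Psi w A p s).snd

theorem psi_mo (p : X0 K) {l : Lam K} (h : 0 ≤ wR w l) :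
    psi w A p (mo w A l) = (l p : L) * bar L l := by
  simp [psi, Psi_mo w A p h]; ring

@[simp] theorem psi_zero (p : X0 K) : psi w A p 0 = 0 := by simp [psi]
@[simp] theorem psi_add (p : X0 K) (a b) : psi w A p (a + b) = psi w A p a + psi w A p b := by
  simp [psi]
@[simp] theorem psi_sub (p : X0 K) (a b) : psi w A p (a - b) = psi w A p a - psi w A p b := by
  simp [psi]
theorem psi_mul (p : X0 K) (a b) : psi w A p (a * b) =
    phi w A a * psi w A p b + phi w A b * psi w A p a := by
  simp [psi, Psi_fst]; ring
theorem psi_smul (p : X0 K) (a : A) (b) : psi w A p (a • b) = algebraMap A L a * psi w A p b := by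
  unfold psi; rw [map_smul, TrivSqZeroExt.snd_smul, Algebra.smul_def]

/-- monomials supported on `U` -/
abbrev LU (U : Set (X0 K)) : Submodule ℤ (Lam K) := Finsupp.supported ℤ ℤ U

/-- subalgebra supported on `U` -/
def SU (U : Set (X0 K)) : Subalgebra A (SS K w A) :=
  Algebra.adjoin A {s | ∃ l ∈ LU U, 0 ≤ wR w l ∧ s = mo w A l}

theorem mo_mem_SU {U : Set (X0 K)} {l : Lam K} (hl : l ∈ LU U) (h : 0 ≤ wR w l) :
    mo w A l ∈ SU w A U := Algebra.subset_adjoin ⟨l, hl, h, rfl⟩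

theorem SU_eq_span (U : Set (X0 K)) : Subalgebra.toSubmodule (SU w A U) =
    Submodule.span A {s | ∃ l ∈ LU U, 0 ≤ wR w l ∧ s = mo w A l} := by
  rw [SU, Algebra.adjoin_eq_span]
  congr 1
  let M : Submonoid (SS K w A) :=
    { carrier := {s | ∃ l ∈ LU U, 0 ≤ wR w l ∧ s = mo w A l}
      one_mem' := ⟨0, zero_mem _, by simp, by simp⟩
      mul_mem' := by
        rintro _ _ ⟨l, hl, h, rfl⟩ ⟨l', hl', h', rfl⟩
        exact ⟨l + l', add_mem hl hl', by rw [map_add]; linarith, (mo_add w A h h').symm⟩ }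
  have : {s | ∃ l ∈ LU U, 0 ≤ wR w l ∧ s = mo w A l} = (M : Set (SS K w A)) := rfl
  rw [this, Submonoid.closure_eq]

theorem SU_mono {U V : Set (X0 K)} (h : U ⊆ V) : SU w A U ≤ SU w A V := by
  apply Algebra.adjoin_mono
  rintro _ ⟨l, hl, h', rfl⟩
  exact ⟨l, Finsupp.supported_mono h hl, h', rfl⟩

theorem LU_univ (l : Lam K) : l ∈ LU (Set.univ : Set (X0 K)) := by
  simp [LU, Finsupp.supported_univ]

theorem SU_univ (s : SS K w A) : s ∈ SU w A Set.univ := by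
  induction s using SS_induction with
  | h0 => exact zero_mem _
  | hadd a b ha hb => exact add_mem ha hb
  | hs a l h => exact Subalgebra.smul_mem _ (mo_mem_SU w A (LU_univ l) h) a

/-- the kernel ideal -/
def II : Ideal (SS K w A) := RingHom.ker (phi (K := K) w A)

theorem mem_II (s : SS K w A) : s ∈ II w A ↔ phi w A s = 0 := Iff.rfl

/-- ideal generated by relations supported on `U`. -/
def NU (U : Set (X0 K)) : Ideal (SS K w A) := Ideal.span {s | s ∈ SU w A U ∧ phi w A s = 0}

theorem NU_le (U : Set (X0 K)) : NU w A U ≤ II w A := by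
  rw [NU, Ideal.span_le]; intro s hs; exact hs.2

theorem NU_mono {U V : Set (X0 K)} (h : U ⊆ V) : NU w A U ≤ NU w A V :=
  Ideal.span_mono (fun _ hs => ⟨SU_mono w A h hs.1, hs.2⟩)

/-- factorization property -/
def GP (U : Set (X0 K)) : Prop := ∀ (g g' : K[X]), g ≠ 0 → g' ≠ 0 → ∀ ν ∈ LU U,
  (∃ c ∈ SU w A U, algebraMap K[X] L (g * g') = bar L ν * phi w A c) →
  ∃ l ∈ LU U, ∃ c₁ ∈ SU w A U, ∃ c₂ ∈ SU w A U, algebraMap K[X] L g = bar L l * phi w A c₁ ∧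
    algebraMap K[X] L g' = bar L (ν - l) * phi w A c₂

/-- the square property -/
def TP (U : Set (X0 K)) : Prop := ∀ x ∈ NU w A U, (∀ p, psi w A p x = 0) → x ∈ (II (K := K) w A) ^ 2

end Basic
end HOne


namespace HOne
open Polynomial

section Base
variable {K : Type*} [Field K] {L : Type*} [Field L] [Algebra K[X] L] [IsFractionRing K[X] L]
variable (w : AddValuation L (WithTop ℝ))
variable (A : Type*) [CommRing A] [Algebra A L]

/-- The Elliott lemma with a dual system. -/
theorem elliott_dual (U : Set (X0 K)) (F : Finset (Lam K)) (hF : ∀ s ∈ F, s ∈ LU U)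
    (hF0 : ∀ s ∈ F, 0 ≤ wR w s) :
    ∃ (r : ℕ) (e : Fin r → Lam K), (∀ i, 0 ≤ wR w (e i)) ∧ (∀ i, e i ∈ LU U) ∧
      LinearIndependent ℤ e ∧ (∀ s ∈ F, s ∈ ECone (wR w) e) ∧
      ∃ (V : Finset (X0 K)) (κ : X0 K → Fin r → ℤ),
        ∀ i j, ∑ p ∈ V, e i p * κ p j = if i = j then 1 else 0 := by
  classical
  let V : Finset (X0 K) := F.biUnion (fun s => s.support)
  have hVU : (V : Set (X0 K)) ⊆ U := by
    intro p hp
    simp only [V, Finset.coe_biUnion, Set.mem_iUnion] at hp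
    obtain ⟨s, hs, hp⟩ := hp
    exact (Finsupp.mem_supported ℤ s).1 (hF s hs) hp
  let v : LU (V : Set (X0 K)) →+ ℝ := (wR w).comp (LU (V : Set (X0 K))).subtype.toAddMonoidHom
  have hFV : ∀ s ∈ F, s ∈ LU (V : Set (X0 K)) := by
    intro s hs
    rw [Finsupp.mem_supported]
    intro p hp
    simp only [V, Finset.coe_biUnion, Set.mem_iUnion]
    exact ⟨s, hs, hp⟩
  let sg : X0 K → ℤ := fun p => if 0 ≤ wR w (Finsupp.single p 1) then 1 else -1
  have hsg : ∀ p, 0 ≤ wR w (Finsupp.single p (sg p)) := by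
    intro p
    by_cases h : 0 ≤ wR w (Finsupp.single p 1)
    · simpa [sg, h] using h
    · simp only [sg, h, if_false, Finsupp.single_neg, map_neg]; linarith
  have hsgsq : ∀ p, sg p * sg p = 1 := by
    intro p; by_cases h : 0 ≤ wR w (Finsupp.single p 1) <;> simp [sg, h]
  let F' : Finset (LU (V : Set (X0 K))) :=
    (F ∪ V.image (fun p => Finsupp.single p (sg p))).subtype (fun s => s ∈ LU (V : Set (X0 K)))
  haveI : IsAddTorsionFree (LU (V : Set (X0 K))) :=
    ⟨fun n hn a b hab => Subtype.ext (IsAddTorsionFree.nsmul_right_injective hn (by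
      simpa using congrArg Subtype.val hab))⟩
  obtain ⟨r, e, h1, h2, h3⟩ := elliott v F' (by
    intro s hs
    simp only [F', Finset.mem_subtype, Finset.mem_union, Finset.mem_image] at hs
    rcases hs with hs | ⟨p, hp, hs⟩
    · exact hF0 _ hs
    · change 0 ≤ wR w (s : Lam K)
      rw [← hs]; exact hsg p)
  have hli : LinearIndependent ℤ (fun i => (e i : Lam K)) :=
    h2.map' (LU (V : Set (X0 K))).subtype (Submodule.ker_subtype _)
  refine ⟨r, fun i => (e i : Lam K), h1, fun i => Finsupp.supported_mono hVU (e i).2, hli, ?_, V, ?_⟩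
  · intro s hs
    obtain ⟨k, hk, hk'⟩ := h3 ⟨s, hFV s hs⟩ (by simp [F', hs])
    refine ⟨k, hk, ?_⟩
    have := congrArg Subtype.val hk'
    simpa using this
  · have hV : ∀ p ∈ V, ∃ k : Fin r → ℤ, (Finsupp.single p 1 : Lam K) = ∑ i, k i • (e i : Lam K) := by
      intro p hp
      have hm : Finsupp.single p (sg p) ∈ LU (V : Set (X0 K)) :=
        Finsupp.single_mem_supported ℤ _ hp
      obtain ⟨k, hk, hk'⟩ := h3 ⟨_, hm⟩ (by
        simp only [F', Finset.mem_subtype, Finset.mem_union, Finset.mem_image]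
        exact Or.inr ⟨p, hp, rfl⟩)
      refine ⟨fun i => sg p * k i, ?_⟩
      have := congrArg Subtype.val hk'
      simp only [Submodule.coe_sum, Submodule.coe_smul] at this
      simp_rw [mul_smul]
      rw [← Finset.smul_sum, ← this]
      simp [hsgsq]
    choose! κ hκ using hV
    refine ⟨κ, ?_⟩
    intro i j
    have hsum : (e i : Lam K) = ∑ p ∈ V, (e i : Lam K) p • Finsupp.single p (1 : ℤ) := by
      conv_lhs => rw [← Finsupp.sum_single (e i : Lam K)]
      rw [Finsupp.sum_of_support_subset _ (s := V) ((Finsupp.mem_supported ℤ _).1 (e i).2 |> fun h => by exact_mod_cast h)]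
      · simp
      · simp
    have hsum2 : ∑ j, (∑ p ∈ V, (e i : Lam K) p * κ p j) • (e j : Lam K)
        = ∑ j, (if i = j then (1:ℤ) else 0) • (e j : Lam K) := by
      simp only [ite_smul, one_smul, zero_smul, Finset.sum_ite_eq, Finset.mem_univ, if_true]
      conv_rhs => rw [hsum]
      simp_rw [Finset.sum_smul]
      rw [Finset.sum_comm]
      refine Finset.sum_congr rfl fun p hp => ?_
      rw [hκ p hp, Finset.smul_sum]
      simp_rw [mul_smul]
    have hz : ∑ j, ((∑ p ∈ V, (e i : Lam K) p * κ p j) - (if i = j then (1:ℤ) else 0)) • (e j : Lam K) = 0 := by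
      simp_rw [sub_smul]
      rw [Finset.sum_sub_distrib, hsum2, sub_self]
    have := Fintype.linearIndependent_iff.1 hli _ hz j
    linarith

/-- Constant polynomials. -/
def U0 : Set (X0 K) := {p | p.1.natDegree = 0}

/-- constants -/
def cst (K : Type*) [Field K] (L : Type*) [Field L] [Algebra K[X] L] : K →+* L := (algebraMap K[X] L).comp Polynomial.C

theorem bar_const {l : Lam K} (hl : l ∈ LU (U0 (K := K))) : ∃ c : K, cst K L c = bar L l := by
  have : bar L l ∈ (cst K L).fieldRange := by
    unfold bar Finsupp.prod
    refine prod_mem fun p hp => zpow_mem ?_ _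
    have h1 : p ∈ U0 (K := K) := (Finsupp.mem_supported ℤ l).1 hl hp
    exact ⟨p.1.coeff 0, by
      conv_rhs => rw [Polynomial.eq_C_of_natDegree_eq_zero h1]
      rfl⟩
  exact this

variable {A}
variable (hA1 : ∀ a : A, ∃ c : K, algebraMap A L a = cst K L c)
  (hA2 : ∀ c : K, 0 ≤ w (cst K L c) → ∃ a : A, algebraMap A L a = cst K L c)
  (hAi : Function.Injective (algebraMap A L))

include hA2 in
theorem bar_A {l : Lam K} (hl : l ∈ LU (U0 (K := K))) (h : 0 ≤ wR w l) :
    ∃ a : A, algebraMap A L a = bar L l := by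
  obtain ⟨c, hc⟩ := bar_const (L := L) hl
  rw [← hc]
  apply hA2
  rw [hc]; exact (wR_nonneg_iff w l).1 h

include hA1 hA2 in
theorem GP_base : GP w A (U0 (K := K)) := by
  rintro g g' hg hg' ν hν ⟨c, hc, h⟩
  have h1 : ∃ a : A, algebraMap A L a = phi w A c := by
    have : SU w A (U0 (K := K)) ≤ (⊥ : Subalgebra A L).comap (phi (K := K) w A) := by
      refine Algebra.adjoin_le ?_
      rintro _ ⟨l, hl, h, rfl⟩
      simp only [Subalgebra.coe_comap, Set.mem_preimage]
      rw [phi_mo w A h]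
      exact Algebra.mem_bot.2 (bar_A w hA2 hl h)
    exact Algebra.mem_bot.1 (this hc)
  obtain ⟨a, ha⟩ := h1
  obtain ⟨b, hb⟩ := hA1 a
  obtain ⟨d, hd⟩ := bar_const (L := L) hν
  have h2 : algebraMap K[X] L (g * g') = algebraMap K[X] L (C (d * b)) := by
    rw [h, ← ha, hb, ← hd, ← map_mul]; rfl
  have h3 := IsFractionRing.injective K[X] L h2
  have h4 : (g * g').natDegree = 0 := by rw [h3, natDegree_C]
  rw [natDegree_mul hg hg'] at h4
  refine ⟨Finsupp.single ⟨g, hg⟩ 1, Finsupp.single_mem_supported ℤ _ (by change natDegree g = 0; omega),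
    1, one_mem _, c, hc, by rw [bar_single]; simp, ?_⟩
  have hg0 : algebraMap K[X] L g ≠ 0 := amap_ne L ⟨g, hg⟩
  rw [bar_sub, bar_single, zpow_one]
  rw [map_mul] at h
  field_simp
  rw [mul_comm, h]

include hA2 hAi in
theorem TP_base : TP w A (U0 (K := K)) := by
  classical
  intro x hx hψ
  have hch : ∀ l : Lam K, ∃ a : A, l ∈ LU (U0 (K := K)) → 0 ≤ wR w l → algebraMap A L a = bar L l := by
    intro l
    by_cases h : l ∈ LU (U0 (K := K)) ∧ 0 ≤ wR w l
    · obtain ⟨a, ha⟩ := bar_A w hA2 h.1 h.2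
      exact ⟨a, fun _ _ => ha⟩
    · exact ⟨0, fun h1 h2 => absurd ⟨h1, h2⟩ h⟩
  choose c hc using hch
  let ee : Lam K → SS K w A := fun l => mo w A l - algebraMap A _ (c l)
  let G : Set (Lam K) := {l | l ∈ LU (U0 (K := K)) ∧ 0 ≤ wR w l}
  have hee : ∀ l ∈ G, phi w A (ee l) = 0 := by
    rintro l ⟨h1, h2⟩
    simp only [ee, map_sub, phi_mo w A h2, AlgHom.commutes, hc l h1 h2, sub_self]
  have h1 : ∀ s ∈ Subalgebra.toSubmodule (SU w A (U0 (K := K))), ∃ a : A, s - algebraMap A _ a ∈ Ideal.span (Set.image ee G) := by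
    rw [SU_eq_span]
    intro s hs
    induction hs using Submodule.span_induction with
    | mem s hs =>
      obtain ⟨l, hl, h, rfl⟩ := hs
      exact ⟨c l, Ideal.subset_span ⟨l, ⟨hl, h⟩, rfl⟩⟩
    | zero => exact ⟨0, by simp⟩
    | add s t _ _ hs ht =>
      obtain ⟨a, ha⟩ := hs
      obtain ⟨b, hb⟩ := ht
      refine ⟨a + b, ?_⟩
      have := add_mem ha hb
      rw [map_add]
      convert this using 1
      ring
    | smul r s _ hs =>
      obtain ⟨a, ha⟩ := hs
      refine ⟨r * a, ?_⟩
      have := Ideal.mul_mem_left _ (algebraMap A (SS K w A) r) ha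
      rw [mul_sub, ← map_mul, ← Algebra.smul_def] at this
      exact this
  have hker : Ideal.span (Set.image ee G) ≤ II (K := K) w A := by
    rw [Ideal.span_le]
    rintro _ ⟨l, hl, rfl⟩
    exact hee l hl
  have h2 : NU w A (U0 (K := K)) ≤ Ideal.span (Set.image ee G) := by
    rw [NU, Ideal.span_le]
    rintro s ⟨hs, hs0⟩
    obtain ⟨a, ha⟩ := h1 s hs
    have h3 := (mem_II w A _).1 (hker ha)
    rw [map_sub, hs0, zero_sub, neg_eq_zero, AlgHom.commutes] at h3
    have : a = 0 := hAi (by rw [h3, map_zero])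
    rw [this, map_zero, sub_zero] at ha
    exact ha
  obtain ⟨T, hT, hxT⟩ := Submodule.mem_span_finite_of_mem_span (h2 hx)
  obtain ⟨F, hF, rfl⟩ := Finset.subset_set_image_iff.1 hT
  obtain ⟨r, e, he0, heU, hli, hcone, V, κ, hκ⟩ := elliott_dual w (U0 (K := K)) F
    (fun s hs => (hF hs).1) (fun s hs => (hF hs).2)
  let J : Ideal (SS K w A) := Ideal.span (Set.range fun i => ee (e i))
  have c_add : ∀ l ∈ G, ∀ l' ∈ G, c (l + l') = c l * c l' := by
    intro l hl l' hl'
    apply hAi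
    rw [map_mul, hc _ hl.1 hl.2, hc _ hl'.1 hl'.2, hc _ (add_mem hl.1 hl'.1)
      (by rw [map_add]; exact add_nonneg hl.2 hl'.2), bar_add]
  have Gadd : ∀ l ∈ G, ∀ l' ∈ G, l + l' ∈ G := fun l hl l' hl' =>
    ⟨add_mem hl.1 hl'.1, by rw [map_add]; exact add_nonneg hl.2 hl'.2⟩
  have G0 : (0 : Lam K) ∈ G := ⟨zero_mem _, by simp⟩
  have c0 : c 0 = 1 := by
    apply hAi
    rw [hc 0 G0.1 G0.2]; simp
  have ee_add : ∀ l ∈ G, ∀ l' ∈ G, ee (l + l') = mo w A l * ee l' + algebraMap A _ (c l') * ee l := by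
    intro l hl l' hl'
    simp only [ee, c_add l hl l' hl', mo_add w A hl.2 hl'.2, map_mul]
    ring
  have ee0 : ee 0 = 0 := by simp only [ee, c0, mo_zero, map_one, sub_self]
  let Z : AddSubmonoid (Lam K) :=
    { carrier := {l | l ∈ G ∧ ee l ∈ J}
      zero_mem' := ⟨G0, by rw [ee0]; exact zero_mem _⟩
      add_mem' := by
        rintro a b ⟨ha, ha'⟩ ⟨hb, hb'⟩
        refine ⟨Gadd a ha b hb, ?_⟩
        rw [ee_add a ha b hb]
        exact add_mem (Ideal.mul_mem_left _ _ hb') (Ideal.mul_mem_left _ _ ha') }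
  have Zneg : ∀ l ∈ Z, wR w l = 0 → -l ∈ Z := by
    rintro l ⟨hl, hl'⟩ h0
    have hG : -l ∈ G := ⟨neg_mem hl.1, by rw [map_neg, h0, neg_zero]⟩
    refine ⟨hG, ?_⟩
    have h3 := ee_add l hl (-l) hG
    have h4 := mo_add w A hl.2 hG.2
    rw [add_neg_cancel, mo_zero] at h4
    rw [add_neg_cancel, ee0] at h3
    have h5 : ee (-l) = - (mo w A (-l) * (algebraMap A _ (c (-l)) * ee l)) := by
      calc ee (-l) = (mo w A l * mo w A (-l)) * ee (-l) := by rw [← h4, one_mul]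
        _ = mo w A (-l) * (mo w A l * ee (-l)) := by ring
        _ = _ := by rw [eq_neg_of_add_eq_zero_left h3.symm]; ring
    rw [h5]
    exact neg_mem (Ideal.mul_mem_left _ _ (Ideal.mul_mem_left _ _ hl'))
  have heZ : ∀ i, e i ∈ Z := fun i => ⟨⟨heU i, he0 i⟩, Ideal.subset_span ⟨i, rfl⟩⟩
  have hcZ : ∀ s ∈ ECone (wR w) e, s ∈ Z := by
    rintro s ⟨k, hk, rfl⟩
    refine sum_mem fun i _ => ?_
    rcases le_or_gt 0 (k i) with h | h
    · obtain ⟨n, hn⟩ := Int.eq_ofNat_of_zero_le h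
      rw [hn, natCast_zsmul]
      exact nsmul_mem (heZ i) n
    · have h0 : wR w (e i) = 0 := (hk i).resolve_left (by omega)
      obtain ⟨n, hn⟩ := Int.eq_ofNat_of_zero_le (show 0 ≤ -(k i) by omega)
      rw [← neg_smul_neg, hn, natCast_zsmul]
      exact nsmul_mem (Zneg _ (heZ i) h0) n
  have hxJ : x ∈ J := by
    refine (Submodule.span_le.2 ?_) hxT
    intro y hy
    simp only [Finset.coe_image] at hy
    obtain ⟨l, hl, rfl⟩ := hy
    exact (hcZ l (hcone l hl)).2
  obtain ⟨t, rfl⟩ := Ideal.mem_span_range_iff_exists_fun.1 hxJ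
  have hpsi : ∀ p, ∑ i, (phi w A (t i) * bar L (e i)) * ((e i p : ℤ) : L) = 0 := by
    intro p
    rw [← hψ p]
    have : psi w A p (∑ i, t i * ee (e i)) = ∑ i, psi w A p (t i * ee (e i)) := by
      unfold psi
      rw [map_sum]
      exact map_sum (TrivSqZeroExt.sndHom L L) _ _
    rw [this]
    refine Finset.sum_congr rfl fun i _ => ?_
    rw [psi_mul, hee (e i) ⟨heU i, he0 i⟩]
    have h6 : psi w A p (algebraMap A (SS K w A) (c (e i))) = 0 := by
      unfold psi; rw [AlgHom.commutes]; rfl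
    simp only [ee, psi_sub, h6, psi_mo w A p (he0 i)]
    ring
  have ht : ∀ j, phi w A (t j) = 0 := by
    intro j
    have : phi w A (t j) * bar L (e j) = 0 := by
      calc phi w A (t j) * bar L (e j)
          = ∑ i, (phi w A (t i) * bar L (e i)) * (((if i = j then 1 else 0 : ℤ)) : L) := by
            simp
        _ = ∑ i, ∑ p ∈ V, (phi w A (t i) * bar L (e i)) * ((e i p : ℤ) : L) * (κ p j : L) := by
            refine Finset.sum_congr rfl fun i _ => ?_
            rw [← hκ i j]
            push_cast
            rw [Finset.mul_sum]
            exact Finset.sum_congr rfl fun p _ => by ring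
        _ = 0 := by
            rw [Finset.sum_comm]
            refine Finset.sum_eq_zero fun p _ => ?_
            rw [← Finset.sum_mul, hpsi p, zero_mul]
    exact (mul_eq_zero.1 this).resolve_right (bar_ne L _)
  rw [pow_two]
  exact sum_mem fun i _ => Ideal.mul_mem_mul ((mem_II w A _).2 (ht i))
    ((mem_II w A _).2 (hee (e i) ⟨heU i, he0 i⟩))

end Base
end HOne


namespace HOne
open Polynomial

section Gen
variable {K : Type*} [Field K] {L : Type*} [Field L] [Algebra K[X] L] [IsFractionRing K[X] L]
variable (w : AddValuation L (WithTop ℝ))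
variable {A : Type*} [CommRing A] [Algebra A L]

theorem mo_split {a b : Lam K} (ha : 0 ≤ wR w a) (hab : wR w a ≤ wR w b) :
    mo w A b = mo w A a * mo w A (b - a) := by
  rw [← mo_add w A ha (by rw [map_sub]; linarith)]
  congr 1; abel

theorem mo_mul {a b c : Lam K} (ha : 0 ≤ wR w a) (hb : 0 ≤ wR w b) (h : c = a + b) :
    mo w A a * mo w A b = mo w A c := by
  rw [h, mo_add w A ha hb]

theorem LU_apply {U : Set (X0 K)} {f : X0 K} (hf : f ∉ U) {l : Lam K} (hl : l ∈ LU U) : l f = 0 :=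
  (Finsupp.mem_supported' ℤ l).1 hl f hf

theorem LU_of {U : Set (X0 K)} {f : X0 K} {l : Lam K} (hl : l ∈ LU (insert f U)) (h : l f = 0) :
    l ∈ LU U := by
  rw [Finsupp.mem_supported'] at hl ⊢
  intro p hp
  by_cases hpf : p = f
  · rw [hpf, h]
  · exact hl p (by simp [hpf, hp])

theorem LU_sub_single {U : Set (X0 K)} {f : X0 K} {l : Lam K} (hl : l ∈ LU (insert f U)) :
    l - Finsupp.single f (l f) ∈ LU U := by
  apply LU_of (sub_mem hl (Finsupp.single_mem_supported ℤ _ (Set.mem_insert _ _)))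
  simp

theorem LU_insert {U : Set (X0 K)} (f : X0 K) {l : Lam K} (hl : l ∈ LU U) : l ∈ LU (insert f U) :=
  Finsupp.supported_mono (Set.subset_insert _ _) hl

theorem single_LU {U : Set (X0 K)} (f : X0 K) (k : ℤ) : Finsupp.single f k ∈ LU (insert f U) :=
  Finsupp.single_mem_supported ℤ _ (Set.mem_insert _ _)

/-- elements with `f`-exponents in an interval -/
def TT (A : Type*) [CommRing A] (U : Set (X0 K)) (f : X0 K) (k : ℤ) (n : ℕ) : Submodule A (SS K w A) :=
  Submodule.span A {s | ∃ l ∈ LU (insert f U), 0 ≤ wR w l ∧ k ≤ l f ∧ l f < k + n ∧ s = mo w A l}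

theorem mo_mul_mem_TT {U : Set (X0 K)} {f : X0 K} (hf : f ∉ U) {k : ℤ} {n : ℕ} {l : Lam K}
    (hl : l ∈ LU (insert f U)) (h : 0 ≤ wR w l) (h1 : k ≤ l f) (h2 : l f < k + n)
    {τ : SS K w A} (hτ : τ ∈ SU w A U) : mo w A l * τ ∈ TT w A U f k n := by
  have hτ' : τ ∈ Subalgebra.toSubmodule (SU w A U) := hτ
  rw [SU_eq_span] at hτ'
  induction hτ' using Submodule.span_induction with
  | mem s hs =>
    obtain ⟨l', hl', h', rfl⟩ := hs
    rw [← mo_add w A h h']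
    refine Submodule.subset_span ⟨l + l', add_mem hl (LU_insert f hl'), by rw [map_add]; linarith, ?_, ?_, rfl⟩
    · simp [LU_apply hf hl', h1]
    · simp [LU_apply hf hl', h2]
  | zero => simp
  | add s t hs ht h3 h4 => 
    rw [← SU_eq_span] at hs ht
    rw [mul_add]; exact add_mem (h3 hs) (h4 ht)
  | smul a s hs h3 =>
    rw [← SU_eq_span] at hs
    rw [mul_smul_comm]; exact Submodule.smul_mem _ _ (h3 hs)

theorem TT_mono {U : Set (X0 K)} {f : X0 K} {k k' : ℤ} {n n' : ℕ} (h1 : k' ≤ k) (h2 : k + n ≤ k' + n') :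
    TT w A U f k n ≤ TT w A U f k' n' := by
  apply Submodule.span_mono
  rintro _ ⟨l, hl, h, h3, h4, rfl⟩
  exact ⟨l, hl, h, by omega, by omega, rfl⟩

theorem SU_TT {U : Set (X0 K)} {f : X0 K} {s : SS K w A} (hs : s ∈ SU w A (insert f U)) :
    ∃ k n, s ∈ TT w A U f k n := by
  have hs' : s ∈ Subalgebra.toSubmodule (SU w A (insert f U)) := hs
  rw [SU_eq_span] at hs'
  clear hs
  induction hs' using Submodule.span_induction with
  | mem s hs =>
    obtain ⟨l', hl', h', rfl⟩ := hs
    exact ⟨l' f, 1, Submodule.subset_span ⟨l', hl', h', le_rfl, by simp, rfl⟩⟩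
  | zero => exact ⟨0, 0, zero_mem _⟩
  | add s t _ _ hs ht =>
    obtain ⟨k, n, hs⟩ := hs
    obtain ⟨k', n', ht⟩ := ht
    exact ⟨min k k', (max (k + n) (k' + n') - min k k').toNat,
      add_mem (TT_mono w (by omega) (by omega) hs) (TT_mono w (by omega) (by omega) ht)⟩
  | smul a s _ hs =>
    obtain ⟨k, n, hs⟩ := hs
    exact ⟨k, n, Submodule.smul_mem _ _ hs⟩

theorem TT_head {U : Set (X0 K)} {f : X0 K} {k : ℤ} {s : SS K w A} (hs : s ∈ TT w A U f k 1) :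
    s = 0 ∨ ∃ l ∈ LU (insert f U), l f = k ∧ 0 ≤ wR w l ∧ ∃ s0 ∈ SU w A U, s = mo w A l * s0 := by
  induction hs using Submodule.span_induction with
  | mem s hs =>
    obtain ⟨l, hl, h, h1, h2, rfl⟩ := hs
    exact Or.inr ⟨l, hl, by simp at h2; omega, h, 1, one_mem _, by simp⟩
  | zero => exact Or.inl rfl
  | add s t _ _ hs ht =>
    have key : ∀ (l l' : Lam K), l ∈ LU (insert f U) → l f = k → 0 ≤ wR w l →
        l' ∈ LU (insert f U) → l' f = k → wR w l ≤ wR w l' → ∀ s0 ∈ SU w A U, ∀ t0 ∈ SU w A U,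
        ∃ u0 ∈ SU w A U, mo w A l * s0 + mo w A l' * t0 = mo w A l * u0 := by
      intro l l' h1 h2 h3 h4 h5 h6 s0 hs0 t0 ht0
      refine ⟨s0 + mo w A (l' - l) * t0, add_mem hs0 (mul_mem (mo_mem_SU w A
        (LU_of (sub_mem h4 h1) (by simp [h2, h5])) (by rw [map_sub]; linarith)) ht0), ?_⟩
      rw [mo_split w h3 h6]; ring
    rcases hs with rfl | ⟨l, hl, h1, h2, s0, hs0, rfl⟩
    · simpa using ht
    rcases ht with rfl | ⟨l', hl', h1', h2', t0, ht0, rfl⟩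
    · right; exact ⟨l, hl, h1, h2, s0, hs0, by simp⟩
    right
    rcases le_total (wR w l) (wR w l') with h | h
    · obtain ⟨u, hu, hu'⟩ := key l l' hl h1 h2 hl' h1' h s0 hs0 t0 ht0
      exact ⟨l, hl, h1, h2, u, hu, hu'⟩
    · obtain ⟨u, hu, hu'⟩ := key l' l hl' h1' h2' hl h1 h t0 ht0 s0 hs0
      exact ⟨l', hl', h1', h2', u, hu, by rw [add_comm, hu']⟩
  | smul a s _ hs =>
    rcases hs with rfl | ⟨l, hl, h1, h2, s0, hs0, rfl⟩
    · left; simp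
    · right; exact ⟨l, hl, h1, h2, a • s0, Subalgebra.smul_mem _ hs0 a, by rw [mul_smul_comm]⟩

theorem TT_split {U : Set (X0 K)} {f : X0 K} {k : ℤ} {n : ℕ} {s : SS K w A}
    (hs : s ∈ TT w A U f k (n + 1)) :
    ∃ a ∈ TT w A U f k 1, ∃ b ∈ TT w A U f (k + 1) n, s = a + b := by
  have : TT w A U f k (n + 1) ≤ TT w A U f k 1 ⊔ TT w A U f (k + 1) n := by
    refine Submodule.span_le.2 ?_
    rintro _ ⟨l, hl, h, h1, h2, rfl⟩
    by_cases h3 : l f = k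
    · exact Submodule.mem_sup_left (Submodule.subset_span ⟨l, hl, h, h1, by simp [h3], rfl⟩)
    · exact Submodule.mem_sup_right (Submodule.subset_span ⟨l, hl, h, by omega, by push_cast at h2; omega, rfl⟩)
  obtain ⟨a, ha, b, hb, h⟩ := Submodule.mem_sup.1 (this hs)
  exact ⟨a, ha, b, hb, h.symm⟩

theorem clear_den {U : Set (X0 K)} {l : Lam K} (hl : l ∈ LU U) :
    ∃ μ ∈ LU U, ∃ M Y : K[X], bar L μ = algebraMap K[X] L M ∧ bar L l * bar L μ = algebraMap K[X] L Y := by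
  rw [← Finsupp.sum_single l, Finsupp.sum]
  refine Finset.sum_induction _ (fun l => ∃ μ ∈ LU U, ∃ M Y : K[X], bar L μ = algebraMap K[X] L M ∧
    bar L l * bar L μ = algebraMap K[X] L Y) ?_ ?_ ?_
  · rintro a b ⟨μ, hμ, M, Y, h1, h2⟩ ⟨μ', hμ', M', Y', h1', h2'⟩
    refine ⟨μ + μ', add_mem hμ hμ', M * M', Y * Y', by rw [bar_add, h1, h1', map_mul], ?_⟩
    rw [bar_add, bar_add, map_mul, ← h2, ← h2']; ring
  · exact ⟨0, zero_mem _, 1, 1, by simp, by simp⟩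
  · intro p hp
    have hpU : p ∈ U := (Finsupp.mem_supported ℤ l).1 hl hp
    rcases le_total 0 (l p) with h | h
    · obtain ⟨n, hn⟩ := Int.eq_ofNat_of_zero_le h
      refine ⟨0, zero_mem _, 1, p.1 ^ n, by simp, ?_⟩
      rw [bar_single, hn]; simp
    · obtain ⟨n, hn⟩ := Int.eq_ofNat_of_zero_le (show 0 ≤ -(l p) by omega)
      refine ⟨Finsupp.single p (-(l p)), Finsupp.single_mem_supported ℤ _ hpU, p.1 ^ n, 1, ?_, ?_⟩
      · rw [bar_single, hn]; simp
      · rw [← bar_add, ← Finsupp.single_add, add_neg_cancel]; simp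

variable (hA0 : ∀ a : A, 0 ≤ w (algebraMap A L a))
  (hA1 : ∀ a : A, ∃ c : K, algebraMap A L a = cst K L c)

include hA1 in
theorem clear_den_TT {U : Set (X0 K)} {f : X0 K} {k : ℤ} {n : ℕ} {s : SS K w A}
    (hs : s ∈ TT w A U f k n) :
    ∃ μ ∈ LU U, ∃ M Y : K[X], bar L μ = algebraMap K[X] L M ∧
      phi w A s * bar L μ = algebraMap K[X] L f.1 ^ k * algebraMap K[X] L Y := by
  have hf := amap_ne L f
  induction hs using Submodule.span_induction with
  | mem s hs =>
    obtain ⟨l, hl, h, h1, h2, rfl⟩ := hs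
    obtain ⟨μ, hμ, M, Y, h3, h4⟩ := clear_den (L := L) (LU_sub_single hl)
    obtain ⟨j, hj⟩ := Int.eq_ofNat_of_zero_le (show 0 ≤ l f - k by omega)
    refine ⟨μ, hμ, M, f.1 ^ j * Y, h3, ?_⟩
    rw [phi_mo w A h, map_mul, ← h4, bar_sub, bar_single, map_pow]
    have : l f = k + j := by omega
    rw [this, zpow_add₀ hf, zpow_natCast]
    have := zpow_ne_zero k hf
    field_simp
  | zero => exact ⟨0, zero_mem _, 1, 0, by simp, by simp⟩
  | add s t _ _ hs ht =>
    obtain ⟨μ, hμ, M, Y, h1, h2⟩ := hs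
    obtain ⟨μ', hμ', M', Y', h1', h2'⟩ := ht
    refine ⟨μ + μ', add_mem hμ hμ', M * M', Y * M' + Y' * M, by rw [bar_add, h1, h1', map_mul], ?_⟩
    rw [map_add, bar_add, map_add, map_mul, map_mul, ← h1, ← h1']
    linear_combination (bar L μ') * h2 + (bar L μ) * h2'
  | smul a s _ hs =>
    obtain ⟨μ, hμ, M, Y, h1, h2⟩ := hs
    obtain ⟨c, hc⟩ := hA1 a
    refine ⟨μ, hμ, M, C c * Y, h1, ?_⟩
    rw [map_smul, Algebra.smul_def, hc, map_mul, mul_assoc, h2]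
    simp only [cst, RingHom.comp_apply]; ring

include hA0 in
theorem phi_nonneg (s : SS K w A) : 0 ≤ w (phi w A s) := by
  induction s using SS_induction with
  | h0 => simp
  | hadd a b ha hb => rw [map_add]; exact le_trans (le_min ha hb) (w.map_add _ _)
  | hs a l h =>
    rw [map_smul, Algebra.smul_def, AddValuation.map_mul, phi_mo w A h]
    exact add_nonneg (hA0 a) ((wR_nonneg_iff w l).1 h)

/-- the data of a presentation of `f` -/
def Pres (A : Type*) [CommRing A] [Algebra A L] (U : Set (X0 K)) (f : X0 K) (d : Lam K) (σ : SS K w A) : Prop :=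
  d ∈ LU U ∧ σ ∈ SU w A U ∧ algebraMap K[X] L f.1 = bar L d * phi w A σ ∧
    wR w d ≤ wR w (Finsupp.single f 1)

/-- the relation -/
def rr (f : X0 K) (d : Lam K) (σ : SS K w A) : SS K w A := mo w A (Finsupp.single f 1 - d) - σ

theorem Pres.phi_rr {U : Set (X0 K)} {f : X0 K} {d : Lam K} {σ : SS K w A} (h : Pres w A U f d σ) :
    phi w A (rr w f d σ) = 0 := by
  obtain ⟨h1, h2, h3, h4⟩ := h
  rw [rr, map_sub, phi_mo w A (by rw [map_sub]; linarith), bar_sub, bar_single, zpow_one, h3,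
    mul_div_cancel_left₀ _ (bar_ne L d), sub_self]

theorem Pres.trans {U : Set (X0 K)} {f : X0 K} {d d' : Lam K} {σ σ' : SS K w A}
    (h : Pres w A U f d σ) (h' : Pres w A U f d' σ') (hd : wR w d ≤ wR w d') :
    rr w f d σ - mo w A (d' - d) * rr w f d' σ' ∈ NU w A U := by
  have e1 : mo w A (d' - d) * mo w A (Finsupp.single f 1 - d') = mo w A (Finsupp.single f 1 - d) :=
    mo_mul w (by rw [map_sub]; linarith) (by rw [map_sub]; linarith [h'.2.2.2]) (by abel)
  refine Ideal.subset_span ⟨?_, ?_⟩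
  · have : rr w f d σ - mo w A (d' - d) * rr w f d' σ' = mo w A (d' - d) * σ' - σ := by
      rw [rr, rr, mul_sub, e1]; ring
    rw [this]
    exact sub_mem (mul_mem (mo_mem_SU w A (sub_mem h'.1 h.1) (by rw [map_sub]; linarith)) h'.2.1) h.2.1
  · rw [map_sub, map_mul, h.phi_rr, h'.phi_rr]; simp

/-- the ideal of relations -/
def NN (A : Type*) [CommRing A] [Algebra A L] (U : Set (X0 K)) (f : X0 K) : Ideal (SS K w A) where
  carrier := {y | y ∈ NU w A U ∨ ∃ y0 ∈ NU w A U, ∃ t d σ, Pres w A U f d σ ∧ y = y0 + t * rr w f d σ}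
  zero_mem' := Or.inl (zero_mem _)
  add_mem' := by
    have key : ∀ y0 ∈ NU w A U, ∀ t d σ, Pres w A U f d σ → ∀ y0' ∈ NU w A U, ∀ t' d' σ',
        Pres w A U f d' σ' → wR w d ≤ wR w d' →
        ∃ y1 ∈ NU w A U, ∃ t1, (y0 + t * rr w f d σ) + (y0' + t' * rr w f d' σ') = y1 + t1 * rr w f d' σ' := by
      intro y0 hy0 t d σ h y0' hy0' t' d' σ' h' hd
      refine ⟨y0 + y0' + t * (rr w f d σ - mo w A (d' - d) * rr w f d' σ'),
        add_mem (add_mem hy0 hy0') (Ideal.mul_mem_left _ _ (h.trans w h' hd)),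
        t * mo w A (d' - d) + t', by ring⟩
    rintro a b (ha | ⟨y0, hy0, t, d, σ, h, rfl⟩) (hb | ⟨y0', hy0', t', d', σ', h', rfl⟩)
    · exact Or.inl (add_mem ha hb)
    · exact Or.inr ⟨a + y0', add_mem ha hy0', t', d', σ', h', by ring⟩
    · exact Or.inr ⟨b + y0, add_mem hb hy0, t, d, σ, h, by ring⟩
    · right
      rcases le_total (wR w d) (wR w d') with hd | hd
      · obtain ⟨y1, hy1, t1, e⟩ := key y0 hy0 t d σ h y0' hy0' t' d' σ' h' hd
        exact ⟨y1, hy1, t1, d', σ', h', e⟩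
      · obtain ⟨y1, hy1, t1, e⟩ := key y0' hy0' t' d' σ' h' y0 hy0 t d σ h hd
        exact ⟨y1, hy1, t1, d, σ, h, by rw [add_comm, e]⟩
  smul_mem' := by
    rintro c x (ha | ⟨y0, hy0, t, d, σ, h, rfl⟩)
    · exact Or.inl (Ideal.mul_mem_left _ _ ha)
    · exact Or.inr ⟨c * y0, Ideal.mul_mem_left _ _ hy0, c * t, d, σ, h, by rw [smul_eq_mul]; ring⟩

include hA0 hA1 in
theorem gen_aux {U : Set (X0 K)} {f : X0 K} (hf : f ∉ U) (hG : GP w A U) (n : ℕ) :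
    ∀ (k : ℤ) (s : SS K w A), s ∈ TT w A U f k n → phi w A s = 0 → s ∈ NN w A U f := by
  have hf0 := amap_ne L f
  induction n with
  | zero =>
    intro k s hs _
    have : s ∈ (⊥ : Submodule A (SS K w A)) := by
      refine (Submodule.span_le.2 ?_) hs
      rintro _ ⟨l, hl, h, h1, h2, rfl⟩
      simp at h2; omega
    rw [(Submodule.mem_bot A).1 this]; exact zero_mem _
  | succ n ih =>
    intro k s hs hs0
    obtain ⟨a, ha, b, hb, rfl⟩ := TT_split w hs
    rcases TT_head w ha with rfl | ⟨l, hl, hlk, hl0, s0, hs0U, rfl⟩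
    · rw [zero_add] at hs0 ⊢
      exact ih _ b hb hs0
    rw [map_add, map_mul, phi_mo w A hl0] at hs0
    by_cases h0 : phi w A s0 = 0
    · refine add_mem (Or.inl (Ideal.mul_mem_left _ _ (Ideal.subset_span ⟨hs0U, h0⟩))) (ih _ b hb ?_)
      simpa [h0] using hs0
    have hbar := bar_ne L l
    have hn : 1 ≤ n := by
      by_contra hn
      have hn0 : n = 0 := by omega
      have : b ∈ (⊥ : Submodule A (SS K w A)) := by
        refine (Submodule.span_le.2 ?_) hb
        rintro _ ⟨l, hl, h, h1, h2, rfl⟩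
        simp [hn0] at h2; omega
      rw [(Submodule.mem_bot A).1 this] at hs0
      simp [h0, hbar] at hs0
    obtain ⟨μ, hμ, M, Y, hM, hY⟩ := clear_den_TT w hA1 hb
    set l0 := l - Finsupp.single f (l f) with hl0def
    have hl0U : l0 ∈ LU U := LU_sub_single hl
    have hbl : bar L l = bar L l0 * algebraMap K[X] L f.1 ^ k := by
      rw [hl0def, bar_sub, bar_single, hlk]
      have := zpow_ne_zero k hf0
      field_simp
    have hb' : phi w A b = - (bar L l * phi w A s0) := eq_neg_of_add_eq_zero_right hs0
    have e1 : algebraMap K[X] L (f.1 * (-Y)) = bar L (l0 + μ) * phi w A s0 := by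
      rw [hb', hbl, zpow_add₀ hf0, zpow_one] at hY
      have hz := zpow_ne_zero k hf0
      apply mul_left_cancel₀ hz
      rw [map_mul, map_neg, bar_add]
      linear_combination hY
    have hY0 : -Y ≠ 0 := by
      intro h
      rw [h] at e1
      simp [bar_ne, h0] at e1
    obtain ⟨d, hd, σ, hσ, τ, hτ, e2, e3⟩ := hG f.1 (-Y) f.2 hY0 (l0 + μ) (add_mem hl0U hμ) ⟨s0, hs0U, e1⟩
    have hwd : wR w d ≤ wR w (Finsupp.single f 1) := by
      have h1 := phi_nonneg w hA0 σ
      have h2 : bar L (Finsupp.single f 1 - d) = phi w A σ := by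
        rw [bar_sub, bar_single, zpow_one, e2, mul_div_cancel_left₀ _ (bar_ne L d)]
      rw [← h2, ← wR_nonneg_iff, map_sub] at h1
      linarith
    have hP : Pres w A U f d σ := ⟨hd, hσ, e2, hwd⟩
    have e4 : phi w A s0 = phi w A σ * phi w A τ := by
      apply mul_left_cancel₀ (bar_ne L (l0 + μ))
      rw [← e1, map_mul, e2, e3, bar_sub]
      have := bar_ne L d
      field_simp
    have hl1 : 0 ≤ wR w (l + (Finsupp.single f 1 - d)) := by rw [map_add, map_sub]; linarith
    have hs' : mo w A (l + (Finsupp.single f 1 - d)) * τ + b ∈ NN w A U f := by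
      refine ih (k + 1) _ (add_mem (mo_mul_mem_TT w hf (add_mem hl (sub_mem (single_LU f 1)
        (LU_insert f hd))) hl1 ?_ ?_ hτ) hb) ?_
      · simp [LU_apply hf hd, hlk]
      · simp [LU_apply hf hd, hlk]; omega
      · rw [map_add, map_mul, phi_mo w A hl1, hb', e4, bar_add, bar_sub, bar_single, zpow_one, e2,
          mul_div_cancel_left₀ _ (bar_ne L d)]
        ring
    have e5 : mo w A l * s0 + b = mo w A l * (s0 - σ * τ) - mo w A l * τ * rr w f d σ
        + (mo w A (l + (Finsupp.single f 1 - d)) * τ + b) := by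
      rw [mo_add w A hl0 (by rw [map_sub]; linarith), rr]
      ring
    rw [e5]
    refine add_mem (sub_mem (Or.inl (Ideal.mul_mem_left _ _ (Ideal.subset_span
      ⟨sub_mem hs0U (mul_mem hσ hτ), ?_⟩))) (Or.inr ⟨0, zero_mem _, _, d, σ, hP, (zero_add _).symm⟩)) hs'
    rw [map_sub, map_mul, e4, sub_self]

include hA0 hA1 in
theorem gen {U : Set (X0 K)} {f : X0 K} (hf : f ∉ U) (hG : GP w A U) :
    NU w A (insert f U) ≤ NN w A U f := by
  rw [NU, Ideal.span_le]
  rintro s ⟨hs, h0⟩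
  obtain ⟨k, n, h⟩ := SU_TT w hs
  exact gen_aux w hA0 hA1 hf hG n k s h h0

theorem psi_SU {U : Set (X0 K)} {f : X0 K} (hf : f ∉ U) {s : SS K w A} (hs : s ∈ SU w A U) :
    psi w A f s = 0 := by
  have hs' : s ∈ Subalgebra.toSubmodule (SU w A U) := hs
  rw [SU_eq_span] at hs'
  clear hs
  induction hs' using Submodule.span_induction with
  | mem s hs =>
    obtain ⟨l', hl', h', rfl⟩ := hs
    rw [psi_mo w A f h', LU_apply hf hl']; simp
  | zero => simp
  | add s t _ _ hs ht => rw [psi_add, hs, ht, add_zero]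
  | smul a s _ hs => rw [psi_smul, hs, mul_zero]

theorem psi_NU {U : Set (X0 K)} {f : X0 K} (hf : f ∉ U) {s : SS K w A} (hs : s ∈ NU w A U) :
    psi w A f s = 0 := by
  induction hs using Submodule.span_induction with
  | mem s hs => exact psi_SU w hf hs.1
  | zero => simp
  | add s t _ _ hs ht => rw [psi_add, hs, ht, add_zero]
  | smul a s h hs => rw [smul_eq_mul, psi_mul, hs, (NU_le w A U h : phi w A s = 0)]; simp

include hA0 hA1 in
theorem TP_step {U : Set (X0 K)} {f : X0 K} (hf : f ∉ U) (hG : GP w A U) (hT : TP w A U) :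
    TP w A (insert f U) := by
  intro x hx hψ
  rcases gen w hA0 hA1 hf hG hx with h | ⟨y0, hy0, t, d, σ, hP, rfl⟩
  · exact hT x h hψ
  · have hr := hP.phi_rr
    have h1 : phi w A t = 0 := by
      have := hψ f
      have hw : 0 ≤ wR w (Finsupp.single f 1 - d) := by rw [map_sub]; linarith [hP.2.2.2]
      rw [psi_add, psi_NU w hf hy0, psi_mul, hr, zero_mul, zero_add, add_zero, rr, psi_sub,
        psi_SU w hf hP.2.1, psi_mo w A f hw, Finsupp.sub_apply, LU_apply hf hP.1] at this
      simpa [bar_ne] using this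
    have h2 : t * rr w f d σ ∈ (II (K := K) w A) ^ 2 := by
      rw [pow_two]; exact Ideal.mul_mem_mul h1 hr
    refine add_mem (hT y0 hy0 fun p => ?_) h2
    have := hψ p
    rwa [psi_add, psi_mul, h1, hr, zero_mul, zero_mul, add_zero, add_zero] at this

end Gen
end HOne


namespace HOne
open Polynomial

section Step
variable {K : Type*} [Field K] {L : Type*} [Field L] [Algebra K[X] L] [IsFractionRing K[X] L]
variable (w : AddValuation L (WithTop ℝ))
variable {A : Type*} [CommRing A] [Algebra A L]

theorem case1_aux {U : Set (X0 K)} {f : X0 K} {d : Lam K} {σ : SS K w A}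
    (hP : Pres w A U f d σ) (hd : wR w (Finsupp.single f 1) = wR w d) {c : SS K w A}
    (hc : c ∈ SU w A (insert f U)) :
    ∃ N : ℕ, ∃ c' ∈ SU w A U, phi w A σ ^ N * phi w A c = phi w A c' := by
  have hbd : bar L (Finsupp.single f 1 - d) = phi w A σ := by
    rw [bar_sub, bar_single, zpow_one, hP.2.2.1, mul_div_cancel_left₀ _ (bar_ne L d)]
  have hσ0 : phi w A σ ≠ 0 := by rw [← hbd]; exact bar_ne L _
  have hs' : c ∈ Subalgebra.toSubmodule (SU w A (insert f U)) := hc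
  rw [SU_eq_span] at hs'
  clear hc
  induction hs' using Submodule.span_induction with
  | mem s hs =>
    obtain ⟨l, hl, h, rfl⟩ := hs
    set l1 := (l - Finsupp.single f (l f)) + (l f) • d with hl1
    have hl1U : l1 ∈ LU U := add_mem (LU_sub_single hl) (Submodule.smul_mem _ _ hP.1)
    have e1 : l = l1 + (l f) • (Finsupp.single f 1 - d) := by
      rw [hl1, smul_sub]; simp
    have hw1 : 0 ≤ wR w l1 := by
      have := congrArg (wR w) e1
      rw [map_add, map_zsmul, map_sub, hd, sub_self, smul_zero, add_zero] at this
      linarith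
    obtain ⟨j, hj⟩ := Int.eq_ofNat_of_zero_le (show 0 ≤ ((l f).natAbs : ℤ) + l f by omega)
    refine ⟨(l f).natAbs, σ ^ j * mo w A l1, mul_mem (pow_mem hP.2.1 _) (mo_mem_SU w A hl1U hw1), ?_⟩
    rw [phi_mo w A h, map_mul, phi_mo w A hw1, map_pow]
    have ebl : bar L l = bar L l1 * phi w A σ ^ (l f) := by
      have := congrArg (bar L) e1
      rw [bar_add L l1, bar_zsmul, hbd] at this
      exact this
    rw [ebl, ← zpow_natCast, ← zpow_natCast, ← hj, zpow_add₀ hσ0]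
    ring
  | zero => exact ⟨0, 0, zero_mem _, by simp⟩
  | add s t _ _ hs ht =>
    obtain ⟨N, c, hc, h⟩ := hs
    obtain ⟨N', c', hc', h'⟩ := ht
    refine ⟨N + N', σ ^ N' * c + σ ^ N * c', add_mem (mul_mem (pow_mem hP.2.1 _) hc)
      (mul_mem (pow_mem hP.2.1 _) hc'), ?_⟩
    simp only [map_add, map_mul, map_pow]
    rw [← h, ← h']; ring
  | smul a s _ hs =>
    obtain ⟨N, c, hc, h⟩ := hs
    refine ⟨N, a • c, Subalgebra.smul_mem _ hc a, ?_⟩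
    rw [map_smul, map_smul, mul_smul_comm, h]

theorem GP_case1 {U : Set (X0 K)} {f : X0 K} {d : Lam K} {σ : SS K w A}
    (hP : Pres w A U f d σ) (hd : wR w (Finsupp.single f 1) = wR w d) (hG : GP w A U) :
    GP w A (insert f U) := by
  rintro g g' hg hg' ν hν ⟨c, hc, h⟩
  have hbd : bar L (Finsupp.single f 1 - d) = phi w A σ := by
    rw [bar_sub, bar_single, zpow_one, hP.2.2.1, mul_div_cancel_left₀ _ (bar_ne L d)]
  have hσ0 : phi w A σ ≠ 0 := by rw [← hbd]; exact bar_ne L _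
  have hf0 := amap_ne L f
  obtain ⟨N, c', hc', e⟩ := case1_aux w hP hd hc
  obtain ⟨k, hk⟩ : ∃ k, k = ν f := ⟨_, rfl⟩
  obtain ⟨ν1, hν1⟩ : ∃ ν1, ν1 = (ν - Finsupp.single f k) + k • d := ⟨_, rfl⟩
  have hν1U : ν1 ∈ LU U := hν1 ▸ hk ▸ add_mem (LU_sub_single hν) (Submodule.smul_mem _ _ hP.1)
  have e1 : ν = ν1 + k • (Finsupp.single f 1 - d) := by
    rw [hν1, smul_sub]; simp
  obtain ⟨j, hj⟩ := Int.eq_ofNat_of_zero_le (show 0 ≤ (k.natAbs : ℤ) + k by omega)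
  have ebν : bar L ν = bar L ν1 * phi w A σ ^ k := by
    conv_lhs => rw [e1, bar_add, bar_zsmul, hbd]
  obtain ⟨M, hM⟩ : ∃ M, M = N + k.natAbs := ⟨_, rfl⟩
  have e2 : algebraMap K[X] L ((f.1 ^ M * g) * g') = bar L (ν1 + (M : ℤ) • d) * phi w A (σ ^ j * c') := by
    rw [mul_assoc, map_mul, h, map_pow, hP.2.2.1, ebν, bar_add, bar_zsmul, map_mul, map_pow, ← e,
      mul_pow, zpow_natCast, ← zpow_natCast (phi w A σ) j, ← hj, zpow_add₀ hσ0, hM, pow_add (phi w A σ),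
      zpow_natCast]
    ring
  obtain ⟨l, hl, c₁, hc₁, c₂, hc₂, e3, e4⟩ := hG (f.1 ^ M * g) g' (mul_ne_zero (pow_ne_zero _ f.2) hg) hg'
    (ν1 + (M : ℤ) • d) (add_mem hν1U (Submodule.smul_mem _ _ hP.1))
    ⟨_, mul_mem (pow_mem hP.2.1 _) hc', e2⟩
  have hsub := SU_mono w A (Set.subset_insert f U)
  have hz : wR w (-((k + M) • (Finsupp.single f 1 - d))) = 0 := by
    rw [map_neg, map_zsmul, map_sub, hd, sub_self, smul_zero, neg_zero]
  refine ⟨l - (M : ℤ) • Finsupp.single f 1, sub_mem (LU_insert f hl)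
    (Submodule.smul_mem _ _ (single_LU f 1)), c₁, hsub hc₁,
    mo w A (-((k + M) • (Finsupp.single f 1 - d))) * c₂, mul_mem (mo_mem_SU w A
      (neg_mem (Submodule.smul_mem _ _ (sub_mem (single_LU f 1) (LU_insert f hP.1)))) hz.ge) (hsub hc₂), ?_, ?_⟩
  · rw [bar_sub, bar_zsmul, bar_single, zpow_one, zpow_natCast]
    rw [map_mul, map_pow] at e3
    have := pow_ne_zero M hf0
    field_simp
    rw [mul_comm, e3]
  · rw [map_mul, phi_mo w A hz.ge, ← mul_assoc, ← bar_add, e4]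
    congr 2
    conv_rhs => rw [e1]
    simp only [add_smul, smul_sub]
    abel

theorem adic_expansion (f : K[X]) (hf : 1 ≤ f.natDegree) (n : ℕ) : ∀ G : K[X], G.natDegree ≤ n →
    ∃ (c : ℕ → K[X]) (N : ℕ), G = ∑ k ∈ Finset.range N, c k * f ^ k ∧
      ∀ k, (c k).natDegree < f.natDegree := by
  have small : ∀ G : K[X], G.natDegree < f.natDegree → ∃ (c : ℕ → K[X]) (N : ℕ),
      G = ∑ k ∈ Finset.range N, c k * f ^ k ∧ ∀ k, (c k).natDegree < f.natDegree := by
    intro G hG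
    exact ⟨fun _ => G, 1, by simp, fun _ => hG⟩
  induction n with
  | zero => intro G hG; exact small G (by omega)
  | succ n ih =>
    intro G hG
    by_cases h : G.natDegree < f.natDegree
    · exact small G h
    · have hq : (G / f).natDegree ≤ n := by
        have h0 : G ≠ 0 := by rintro rfl; simp at h; omega
        have := degree_div_lt h0 (natDegree_pos_iff_degree_pos.1 hf)
        by_cases h1 : G / f = 0
        · rw [h1]; simp
        · have := natDegree_lt_natDegree h1 this
          omega
      obtain ⟨c, N, h1, h2⟩ := ih _ hq
      refine ⟨fun k => Nat.casesOn k (G % f) c, N + 1, ?_, ?_⟩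
      · rw [Finset.sum_range_succ']
        have := EuclideanDomain.div_add_mod G f
        conv_lhs => rw [← this, h1]
        simp only [pow_succ, pow_zero, mul_one, Finset.mul_sum]
        congr 1
        exact Finset.sum_congr rfl fun k _ => by ring
      · intro k
        cases k with
        | zero =>
          exact natDegree_mod_lt G (by omega)
        | succ k => exact h2 k

variable (hA0 : ∀ a : A, 0 ≤ w (algebraMap A L a))
  (hA1 : ∀ a : A, ∃ c : K, algebraMap A L a = cst K L c)

/-- maximal ideal -/
def mB : Ideal w.unitBall where
  carrier := {x | 0 < w (x : L)}
  zero_mem' := by simp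
  add_mem' := by
    intro a b ha hb
    exact lt_of_lt_of_le (lt_min ha hb) (w.map_add _ _)
  smul_mem' := by
    intro c x hx
    change 0 < w ((c : L) * (x : L))
    rw [AddValuation.map_mul]
    have hc : 0 ≤ w (c : L) := c.2
    exact lt_of_lt_of_le hx (le_add_of_nonneg_left hc)

theorem mem_mB (x : w.unitBall) : x ∈ mB w ↔ 0 < w (x : L) := Iff.rfl

instance mB_prime : (mB w).IsPrime where
  ne_top' := by
    rw [Ideal.ne_top_iff_one]
    simp [mem_mB]
  mem_or_mem' := by
    intro x y hxy
    by_contra h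
    push Not at h
    simp only [mem_mB, not_lt] at h
    have : w ((x * y : w.unitBall) : L) ≤ 0 := by
      change w ((x : L) * (y : L)) ≤ 0
      rw [AddValuation.map_mul]
      exact add_nonpos h.1 h.2
    exact absurd ((mem_mB w _).1 hxy) (not_lt.2 this)

/-- residue ring -/
abbrev kB := w.unitBall ⧸ mB w

/-- monomial in the residue ring -/
def resm (l : Lp (K := K) w) : kB w := Ideal.Quotient.mk (mB w) ⟨bar L (l : Lam K), (wR_nonneg_iff w _).1 l.2⟩

/-- coefficients to residue ring -/
def resA : A →+* kB w := (Ideal.Quotient.mk (mB w)).comp ((algebraMap A L).codRestrict w.unitBall hA0)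

/-- graded residue map -/
def rho (f : X0 K) : SS K w A →+* AddMonoidAlgebra (kB w) ℤ :=
  AddMonoidAlgebra.liftNCRingHom
    ((AddMonoidAlgebra.singleZeroRingHom (R := kB w) (M := ℤ)).comp (resA w hA0))
    { toFun := fun l => AddMonoidAlgebra.single ((l.toAdd : Lam K) f) (resm w l.toAdd)
      map_one' := by
        have : resm w (0 : Lp (K := K) w) = 1 := by
          simp only [resm, ZeroMemClass.coe_zero, bar_zero]; rfl
        change AddMonoidAlgebra.single ((0 : Lam K) f) (resm w 0) = 1
        rw [this]; rfl
      map_mul' := by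
        intro a b
        have : resm w (a.toAdd + b.toAdd) = resm w a.toAdd * resm w b.toAdd := by
          simp only [resm, AddSubmonoid.coe_add, bar_add, ← map_mul]; rfl
        rw [AddMonoidAlgebra.single_mul_single, toAdd_mul, this]
        rfl }
    (fun x y => by unfold Commute SemiconjBy; exact @mul_comm (AddMonoidAlgebra (kB w) ℤ) _ _ _)

theorem rho_mo (f : X0 K) {l : Lam K} (h : 0 ≤ wR w l) :
    rho w hA0 f (mo w A l) = AddMonoidAlgebra.single (l f) (resm w ⟨l, h⟩) := by
  rw [mo, dif_pos h]
  refine (AddMonoidAlgebra.liftNC_single _ _ _ _).trans ?_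
  change AddMonoidAlgebra.single 0 (resA w hA0 1) * AddMonoidAlgebra.single (l f) (resm w ⟨l, h⟩) = _
  rw [AddMonoidAlgebra.single_mul_single, map_one, one_mul, zero_add]

theorem rho_algebraMap (f : X0 K) (a : A) :
    rho w hA0 f (algebraMap A _ a) = AddMonoidAlgebra.single 0 (resA w hA0 a) := by
  have : resm w (0 : Lp (K := K) w) = 1 := by
    simp only [resm, ZeroMemClass.coe_zero, bar_zero]; rfl
  refine (AddMonoidAlgebra.liftNC_single _ _ _ _).trans ?_
  change AddMonoidAlgebra.single 0 (resA w hA0 a) * AddMonoidAlgebra.single ((0 : Lam K) f) (resm w (0 : Lp (K := K) w)) = _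
  rw [this, AddMonoidAlgebra.single_mul_single, mul_one]; rfl

theorem resm_zero {l : Lam K} (h : 0 ≤ wR w l) (h' : 0 < wR w l) : resm w ⟨l, h⟩ = 0 := by
  rw [resm, Ideal.Quotient.eq_zero_iff_mem, mem_mB]
  exact (wR_pos_iff w l).1 h'

theorem rho_SU {U : Set (X0 K)} {f : X0 K} (hf : f ∉ U) {s : SS K w A} (hs : s ∈ SU w A U) :
    rho w hA0 f s = AddMonoidAlgebra.single 0 (Ideal.Quotient.mk (mB w) ⟨phi w A s, phi_nonneg w hA0 s⟩) := by
  have hs' : s ∈ Subalgebra.toSubmodule (SU w A U) := hs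
  rw [SU_eq_span] at hs'
  clear hs
  induction hs' using Submodule.span_induction with
  | mem s hs =>
    obtain ⟨l, hl, h, rfl⟩ := hs
    rw [rho_mo w hA0 f h, LU_apply hf hl, resm]
    simp only [phi_mo w A h]
  | zero =>
    simp only [map_zero]
    symm
    rw [AddMonoidAlgebra.single_eq_zero]
    exact map_zero _
  | add s t _ _ hs ht =>
    rw [map_add, hs, ht, ← AddMonoidAlgebra.single_add, ← map_add]
    congr 2
    exact Subtype.ext (map_add _ _ _).symm
  | smul a s _ hs =>
    rw [Algebra.smul_def, map_mul, hs, rho_algebraMap, AddMonoidAlgebra.single_mul_single, add_zero, resA,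
      RingHom.comp_apply, ← map_mul]
    congr 2
    apply Subtype.ext
    have : phi w A (algebraMap A (SS K w A) a * s) = algebraMap A L a * phi w A s := by
      rw [map_mul, AlgHom.commutes]
    exact this.symm

include hA1 in
theorem rho_NU {U : Set (X0 K)} {f : X0 K} (hf : f ∉ U) (hG : GP w A U)
    (h2 : ∀ d σ, Pres w A U f d σ → wR w d < wR w (Finsupp.single f 1)) {s : SS K w A}
    (hs : s ∈ NU w A (insert f U)) : rho w hA0 f s = 0 := by
  have h0 : ∀ s ∈ NU w A U, rho w hA0 f s = 0 := by
    have : NU w A U ≤ RingHom.ker (rho w hA0 f) := by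
      rw [NU, Ideal.span_le]
      rintro s ⟨hs, h⟩
      rw [SetLike.mem_coe, RingHom.mem_ker, rho_SU w hA0 hf hs, AddMonoidAlgebra.single_eq_zero,
        Ideal.Quotient.eq_zero_iff_mem, mem_mB]
      simp [h]
    exact fun s hs => this hs
  rcases gen w hA0 hA1 hf hG hs with h | ⟨y0, hy0, t, d, σ, hP, rfl⟩
  · exact h0 s h
  · have hd := h2 d σ hP
    have hpos : 0 < wR w (Finsupp.single f 1 - d) := by rw [map_sub]; linarith
    have hbd : bar L (Finsupp.single f 1 - d) = phi w A σ := by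
      rw [bar_sub, bar_single, zpow_one, hP.2.2.1, mul_div_cancel_left₀ _ (bar_ne L d)]
    have hσ : rho w hA0 f σ = 0 := by
      rw [rho_SU w hA0 hf hP.2.1, AddMonoidAlgebra.single_eq_zero,
        Ideal.Quotient.eq_zero_iff_mem, mem_mB]
      simp only [← hbd]
      exact (wR_pos_iff w _).1 hpos
    rw [map_add, h0 y0 hy0, map_mul, rr, map_sub, hσ, rho_mo w hA0 f hpos.le, resm_zero w hpos.le hpos]
    simp

theorem adic_rep {U : Set (X0 K)} {f : X0 K} (hf : f ∉ U) (hdeg : 1 ≤ f.1.natDegree)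
    (hlow : ∀ p : X0 K, p.1.natDegree < f.1.natDegree → p ∈ U) (G : K[X]) (hG : G ≠ 0) :
    ∃ l ∈ LU (insert f U), ∃ s ∈ SU w A (insert f U), algebraMap K[X] L G = bar L l * phi w A s ∧
      rho w hA0 f s ≠ 0 := by
  classical
  obtain ⟨c, N, hc, hcd⟩ := adic_expansion f.1 hdeg _ G le_rfl
  let m : ℕ → Lam K := fun k => if h : c k ≠ 0 then Finsupp.single ⟨c k, h⟩ 1 + Finsupp.single f (k : ℤ) else 0
  let D := (Finset.range N).filter (fun k => c k ≠ 0)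
  have hDm : ∀ k ∈ D, ∃ h : c k ≠ 0, m k = Finsupp.single ⟨c k, h⟩ 1 + Finsupp.single f (k : ℤ) := by
    intro k hk
    have h := (Finset.mem_filter.1 hk).2
    exact ⟨h, by simp only [m, h, ne_eq, not_false_eq_true, dif_pos]⟩
  have hbar : ∀ k ∈ D, bar L (m k) = algebraMap K[X] L (c k * f.1 ^ k) := by
    intro k hk
    obtain ⟨h, e⟩ := hDm k hk
    rw [e, bar_add, bar_single, bar_single]; simp
  have hmf : ∀ k ∈ D, m k f = k := by
    intro k hk
    obtain ⟨h, e⟩ := hDm k hk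
    have : (⟨c k, h⟩ : X0 K) ≠ f := by
      intro h'
      exact hf (h' ▸ hlow ⟨c k, h⟩ (hcd k))
    rw [e]; simp [this]
  have hmU : ∀ k ∈ D, m k ∈ LU (insert f U) := by
    intro k hk
    obtain ⟨h, e⟩ := hDm k hk
    rw [e]
    exact add_mem (Finsupp.single_mem_supported ℤ _ (Set.mem_insert_of_mem _ (hlow ⟨c k, h⟩ (hcd k)))) (single_LU f _)
  have hsum : algebraMap K[X] L G = ∑ k ∈ D, bar L (m k) := by
    rw [Finset.sum_congr rfl hbar, ← map_sum]
    congr 1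
    rw [hc, Finset.sum_filter]
    refine Finset.sum_congr rfl fun k _ => ?_
    by_cases h : c k = 0 <;> simp [h]
  have hDne : D.Nonempty := by
    rw [Finset.nonempty_iff_ne_empty]
    intro h
    rw [h, Finset.sum_empty] at hsum
    exact amap_ne L ⟨G, hG⟩ hsum
  obtain ⟨k1, hk1, hmin⟩ := Finset.exists_min_image D (fun k => wR w (m k)) hDne
  have hpos : ∀ k ∈ D, 0 ≤ wR w (m k - m k1) := by
    intro k hk
    rw [map_sub]; linarith [hmin k hk]
  refine ⟨m k1, hmU k1 hk1, ∑ k ∈ D, mo w A (m k - m k1), sum_mem fun k hk =>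
    mo_mem_SU w A (sub_mem (hmU k hk) (hmU k1 hk1)) (hpos k hk), ?_, ?_⟩
  · rw [hsum, map_sum, Finset.mul_sum]
    refine Finset.sum_congr rfl fun k hk => ?_
    rw [phi_mo w A (hpos k hk), bar_sub, mul_div_cancel₀ _ (bar_ne L _)]
  · intro h
    have h1 := congrArg (fun y => AddMonoidAlgebra.coeff y 0) h
    simp only [map_sum] at h1
    rw [← Finset.add_sum_erase D _ hk1] at h1
    have h3 : ∀ k ∈ D.erase k1, (rho w hA0 f (mo w A (m k - m k1))).coeff 0 = 0 := by
      intro k hk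
      have hk' := Finset.mem_of_mem_erase hk
      rw [rho_mo w hA0 f (hpos k hk'), AddMonoidAlgebra.coeff_single, Finsupp.single_apply, if_neg]
      rw [Finsupp.sub_apply, hmf k hk', hmf k1 hk1]
      have := Finset.ne_of_mem_erase hk
      omega
    rw [AddMonoidAlgebra.coeff_add, Finsupp.add_apply, AddMonoidAlgebra.coeff_sum, Finsupp.finset_sum_apply,
      Finset.sum_eq_zero h3, sub_self, mo_zero, map_one] at h1
    rw [AddMonoidAlgebra.one_def, AddMonoidAlgebra.coeff_single, Finsupp.single_eq_same, add_zero] at h1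
    exact one_ne_zero h1

include hA0 hA1 in
theorem GP_case2 {U : Set (X0 K)} {f : X0 K} (hf : f ∉ U) (hdeg : 1 ≤ f.1.natDegree)
    (hlow : ∀ p : X0 K, p.1.natDegree < f.1.natDegree → p ∈ U) (hG : GP w A U)
    (h2 : ∀ d σ, Pres w A U f d σ → wR w d < wR w (Finsupp.single f 1)) :
    GP w A (insert f U) := by
  rintro g g' hg hg' ν hν ⟨c, hc, h⟩
  obtain ⟨l1, hl1, s1, hs1, e1, r1⟩ := adic_rep w hA0 hf hdeg hlow g hg
  obtain ⟨l2, hl2, s2, hs2, e2, r2⟩ := adic_rep w hA0 hf hdeg hlow g' hg'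
  rcases lt_or_ge (wR w (l1 + l2)) (wR w ν) with hlt | hle
  · exfalso
    have hpos : 0 < wR w (ν - (l1 + l2)) := by rw [map_sub]; linarith
    have hmem : s1 * s2 - mo w A (ν - (l1 + l2)) * c ∈ NU w A (insert f U) := by
      refine Ideal.subset_span ⟨sub_mem (mul_mem hs1 hs2) (mul_mem (mo_mem_SU w A
        (sub_mem hν (add_mem hl1 hl2)) hpos.le) hc), ?_⟩
      rw [map_sub, map_mul, map_mul, phi_mo w A hpos.le, bar_sub, bar_add]
      rw [map_mul, e1, e2] at h
      have h1 := bar_ne L l1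
      have h2 := bar_ne L l2
      field_simp
      linear_combination h
    have := rho_NU w hA0 hA1 hf hG h2 hmem
    rw [map_sub, map_mul, map_mul, rho_mo w hA0 f hpos.le, resm_zero w hpos.le hpos,
      AddMonoidAlgebra.single_zero, zero_mul, sub_zero] at this
    exact (mul_ne_zero r1 r2) this
  · have hpos : 0 ≤ wR w (l1 + l2 - ν) := by rw [map_sub]; linarith
    refine ⟨l1, hl1, s1, hs1, mo w A (l1 + l2 - ν) * s2, mul_mem (mo_mem_SU w A
      (sub_mem (add_mem hl1 hl2) hν) hpos) hs2, e1, ?_⟩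
    rw [map_mul, phi_mo w A hpos, ← mul_assoc, ← bar_add, e2]
    congr 2
    abel

include hA0 hA1 in
theorem GP_step {U : Set (X0 K)} {f : X0 K} (hf : f ∉ U) (hdeg : 1 ≤ f.1.natDegree)
    (hlow : ∀ p : X0 K, p.1.natDegree < f.1.natDegree → p ∈ U) (hG : GP w A U) :
    GP w A (insert f U) := by
  by_cases h : ∃ d σ, Pres w A U f d σ ∧ wR w (Finsupp.single f 1) = wR w d
  · obtain ⟨d, σ, hP, hd⟩ := h
    exact GP_case1 w hP hd hG
  · push Not at h
    exact GP_case2 w hA0 hA1 hf hdeg hlow hG fun d σ hP => lt_of_le_of_ne hP.2.2.2 (Ne.symm (h d σ hP))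

end Step
end HOne


namespace HOne
open Polynomial

section Union
variable {K : Type*} [Field K] {L : Type*} [Field L] [Algebra K[X] L] [IsFractionRing K[X] L]
variable (w : AddValuation L (WithTop ℝ))
variable {A : Type*} [CommRing A] [Algebra A L]
variable {ι : Type*} [Nonempty ι] {V : ι → Set (X0 K)} (hV : Directed (· ⊆ ·) V)

include hV in
theorem LU_iUnion {l : Lam K} (hl : l ∈ LU (⋃ i, V i)) : ∃ i, l ∈ LU (V i) := by
  obtain ⟨i, hi⟩ := hV.exists_mem_subset_of_finset_subset_biUnion ((Finsupp.mem_supported ℤ l).1 hl)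
  exact ⟨i, (Finsupp.mem_supported ℤ l).2 hi⟩

include hV in
theorem SU_iUnion {s : SS K w A} (hs : s ∈ SU w A (⋃ i, V i)) : ∃ i, s ∈ SU w A (V i) := by
  have hs' : s ∈ Subalgebra.toSubmodule (SU w A (⋃ i, V i)) := hs
  rw [SU_eq_span] at hs'
  clear hs
  induction hs' using Submodule.span_induction with
  | mem s hs =>
    obtain ⟨l, hl, h, rfl⟩ := hs
    obtain ⟨i, hi⟩ := LU_iUnion hV hl
    exact ⟨i, mo_mem_SU w A hi h⟩
  | zero => exact ⟨Classical.arbitrary ι, zero_mem _⟩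
  | add s t _ _ hs ht =>
    obtain ⟨i, hi⟩ := hs
    obtain ⟨j, hj⟩ := ht
    obtain ⟨k, hik, hjk⟩ := hV i j
    exact ⟨k, add_mem (SU_mono w A hik hi) (SU_mono w A hjk hj)⟩
  | smul a s _ hs =>
    obtain ⟨i, hi⟩ := hs
    exact ⟨i, Subalgebra.smul_mem _ hi a⟩

include hV in
theorem NU_iUnion {s : SS K w A} (hs : s ∈ NU w A (⋃ i, V i)) : ∃ i, s ∈ NU w A (V i) := by
  rw [NU, Ideal.span] at hs
  induction hs using Submodule.span_induction with
  | mem s hs =>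
    obtain ⟨hs, h⟩ := hs
    obtain ⟨i, hi⟩ := SU_iUnion w hV hs
    exact ⟨i, Ideal.subset_span ⟨hi, h⟩⟩
  | zero => exact ⟨Classical.arbitrary ι, zero_mem _⟩
  | add s t _ _ hs ht =>
    obtain ⟨i, hi⟩ := hs
    obtain ⟨j, hj⟩ := ht
    obtain ⟨k, hik, hjk⟩ := hV i j
    exact ⟨k, add_mem (NU_mono w A hik hi) (NU_mono w A hjk hj)⟩
  | smul a s _ hs =>
    obtain ⟨i, hi⟩ := hs
    exact ⟨i, Ideal.mul_mem_left _ a hi⟩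

include hV in
theorem TP_iUnion (h : ∀ i, TP w A (V i)) : TP w A (⋃ i, V i) := by
  intro x hx hψ
  obtain ⟨i, hi⟩ := NU_iUnion w hV hx
  exact h i x hi hψ

include hV in
theorem GP_iUnion (h : ∀ i, GP w A (V i)) : GP w A (⋃ i, V i) := by
  rintro g g' hg hg' ν hν ⟨c, hc, e⟩
  obtain ⟨i, hi⟩ := LU_iUnion hV hν
  obtain ⟨j, hj⟩ := SU_iUnion w hV hc
  obtain ⟨k, hik, hjk⟩ := hV i j
  obtain ⟨l, hl, c₁, hc₁, c₂, hc₂, e1, e2⟩ := h k g g' hg hg' ν (Finsupp.supported_mono hik hi)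
    ⟨c, SU_mono w A hjk hj, e⟩
  have hs : V k ⊆ ⋃ i, V i := Set.subset_iUnion V k
  exact ⟨l, Finsupp.supported_mono hs hl, c₁, SU_mono w A hs hc₁, c₂, SU_mono w A hs hc₂, e1, e2⟩
end Union

section Main
variable {K : Type*} [Field K] {L : Type*} [Field L] [Algebra K[X] L] [IsFractionRing K[X] L]
variable (w : AddValuation L (WithTop ℝ))
variable {A : Type*} [CommRing A] [Algebra A L]

/-- the rank function of a well-ordering refining degree -/
def rk (p : X0 K) : ℕ ×ₗ Ordinal := toLex (p.1.natDegree, Ordinal.typein WellOrderingRel p)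

theorem rk_inj {p q : X0 K} (h : rk p = rk q) : p = q :=
  Ordinal.typein_injective WellOrderingRel (congrArg (fun x => (ofLex x).2) h)

theorem rk_lt {p q : X0 K} (h : p.1.natDegree < q.1.natDegree) : rk p < rk q :=
  Prod.Lex.toLex_lt_toLex.2 (Or.inl h)

theorem rk_deg {p q : X0 K} (h : rk p ≤ rk q) : p.1.natDegree ≤ q.1.natDegree := by
  by_contra h'
  exact absurd h (not_le.2 (rk_lt (not_le.1 h')))

/-- initial segments -/
def WW (g : X0 K) : Set (X0 K) := U0 ∪ {p | rk p ≤ rk g}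

theorem WW_mono {g h : X0 K} (e : rk g ≤ rk h) : WW g ⊆ WW h :=
  Set.union_subset_union_right _ fun _ hp => le_trans hp e

theorem WW_directed {ι : Type*} (u : ι → X0 K) : Directed (· ⊆ ·) (fun i => WW (u i)) := by
  intro i j
  rcases le_total (rk (u i)) (rk (u j)) with h | h
  · exact ⟨j, WW_mono h, le_refl _⟩
  · exact ⟨i, le_refl _, WW_mono h⟩

variable (hA0 : ∀ a : A, 0 ≤ w (algebraMap A L a))
  (hA1 : ∀ a : A, ∃ c : K, algebraMap A L a = cst K L c)
  (hA2 : ∀ c : K, 0 ≤ w (cst K L c) → ∃ a : A, algebraMap A L a = cst K L c)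
  (hAi : Function.Injective (algebraMap A L))

include hA0 hA1 hA2 hAi in
theorem GPTP_WW (o : ℕ ×ₗ Ordinal) : ∀ g : X0 K, rk g = o → GP w A (WW g) ∧ TP w A (WW g) := by
  induction o using WellFoundedLT.induction with
  | ind o ih =>
  rintro g rfl
  by_cases hg : g.1.natDegree = 0
  · have : WW g = U0 := by
      refine Set.union_eq_self_of_subset_right ?_
      intro p hp
      have := rk_deg hp
      exact Nat.le_zero.1 (hg ▸ this)
    rw [this]
    exact ⟨GP_base w hA1 hA2, TP_base w hA2 hAi⟩
  · let J := {h : X0 K // rk h < rk g}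
    have hone : rk (⟨1, one_ne_zero⟩ : X0 K) < rk g := rk_lt (by simp; omega)
    haveI : Nonempty J := ⟨⟨⟨1, one_ne_zero⟩, hone⟩⟩
    let V : J → Set (X0 K) := fun j => WW j.1
    have hV : Directed (· ⊆ ·) V := WW_directed (fun j : J => j.1)
    have hG : GP w A (⋃ j, V j) := GP_iUnion w hV fun j => (ih _ j.2 j.1 rfl).1
    have hT : TP w A (⋃ j, V j) := TP_iUnion w hV fun j => (ih _ j.2 j.1 rfl).2
    have hgV : g ∉ ⋃ j, V j := by
      intro h
      obtain ⟨j, h⟩ := Set.mem_iUnion.1 h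
      rcases h with h | h
      · exact hg h
      · exact absurd j.2 (not_lt.2 h)
    have hin : ∀ p : X0 K, rk p < rk g → p ∈ ⋃ j, V j := by
      intro p hp
      exact Set.mem_iUnion.2 ⟨⟨p, hp⟩, Or.inr (le_refl (rk p))⟩
    have hW : WW g = insert g (⋃ j, V j) := by
      ext p
      constructor
      · rintro (h | h)
        · refine Or.inr (hin p (rk_lt ?_))
          have : p.1.natDegree = 0 := h
          omega
        · rcases lt_or_eq_of_le (show rk p ≤ rk g from h) with h | h
          · exact Or.inr (hin p h)
          · exact Or.inl (rk_inj h)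
      · rintro (h | h)
        · subst h; exact Or.inr (le_refl (rk p))
        · obtain ⟨j, h⟩ := Set.mem_iUnion.1 h
          exact WW_mono j.2.le h
    rw [hW]
    exact ⟨GP_step w hA0 hA1 hgV (by omega) (fun p hp => hin p (rk_lt hp)) hG,
      TP_step w hA0 hA1 hgV hG hT⟩

include hA0 hA1 hA2 hAi in
theorem thm1 (x : SS K w A) (hx : phi w A x = 0) (hψ : ∀ p, psi w A p x = 0) :
    x ∈ (II (K := K) w A) ^ 2 := by
  haveI : Nonempty (X0 K) := ⟨⟨1, one_ne_zero⟩⟩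
  have hT : TP w A (⋃ g : X0 K, WW g) := TP_iUnion w (WW_directed fun g => g)
    fun g => (GPTP_WW w hA0 hA1 hA2 hAi _ g rfl).2
  have hu : (⋃ g : X0 K, WW g) = Set.univ :=
    Set.eq_univ_of_forall fun p => Set.mem_iUnion.2 ⟨p, Or.inr (le_refl (rk p))⟩
  rw [hu] at hT
  exact hT x (Ideal.subset_span ⟨SU_univ w A x, hx⟩) hψ

end Main
end HOne


namespace HOne
open Polynomial

section Taylor
variable {A : Type*} [CommRing A] {σ : Type*} {E : Type*} [CommRing E] [Algebra A E]

theorem taylor_aux [DecidableEq σ] (θ₁ θ₂ : MvPolynomial σ A →ₐ[A] E) (s : Finset σ)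
    (h0 : ∀ b, b ∉ s → θ₂ (MvPolynomial.X b) = θ₁ (MvPolynomial.X b))
    (h : ∀ b c, (θ₂ (MvPolynomial.X b) - θ₁ (MvPolynomial.X b)) *
      (θ₂ (MvPolynomial.X c) - θ₁ (MvPolynomial.X c)) = 0) (x : MvPolynomial σ A) :
    θ₂ x - θ₁ x = ∑ b ∈ s, θ₁ (MvPolynomial.pderiv b x) *
      (θ₂ (MvPolynomial.X b) - θ₁ (MvPolynomial.X b)) := by
  induction x using MvPolynomial.induction_on with
  | C a =>
    have h1 := θ₁.commutes a
    have h2 := θ₂.commutes a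
    rw [MvPolynomial.algebraMap_eq] at h1 h2
    simp [h1, h2]
  | add p q hp hq =>
    simp only [map_add, add_mul, Finset.sum_add_distrib, ← hp, ← hq]
    ring
  | mul_X p c hp =>
    have e1 : ∀ b, θ₁ (MvPolynomial.pderiv b (p * MvPolynomial.X c)) *
        (θ₂ (MvPolynomial.X b) - θ₁ (MvPolynomial.X b)) =
        θ₁ (MvPolynomial.X c) * (θ₁ (MvPolynomial.pderiv b p) *
          (θ₂ (MvPolynomial.X b) - θ₁ (MvPolynomial.X b))) +
        (if c = b then θ₁ p * (θ₂ (MvPolynomial.X c) - θ₁ (MvPolynomial.X c)) else 0) := by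
      intro b
      rw [Derivation.leibniz, MvPolynomial.pderiv_X]
      by_cases hb : c = b
      · subst hb
        simp
        ring
      · simp [hb, Pi.single_apply]
        ring
    simp only [e1]
    rw [Finset.sum_add_distrib, ← Finset.mul_sum, ← hp, Finset.sum_ite_eq]
    have e2 : (θ₂ p - θ₁ p) * (θ₂ (MvPolynomial.X c) - θ₁ (MvPolynomial.X c)) = 0 := by
      rw [hp, Finset.sum_mul]
      exact Finset.sum_eq_zero fun b _ => by rw [mul_assoc, h, mul_zero]
    have e3 : (if c ∈ s then θ₁ p * (θ₂ (MvPolynomial.X c) - θ₁ (MvPolynomial.X c)) else 0) =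
        θ₁ p * (θ₂ (MvPolynomial.X c) - θ₁ (MvPolynomial.X c)) := by
      split_ifs with hc
      · rfl
      · rw [h0 c hc, sub_self, mul_zero]
    rw [e3, map_mul, map_mul]
    linear_combination e2

theorem congr_vars (θ₁ θ₂ : MvPolynomial σ A →ₐ[A] E) (x : MvPolynomial σ A)
    (h : ∀ b ∈ x.vars, θ₁ (MvPolynomial.X b) = θ₂ (MvPolynomial.X b)) : θ₁ x = θ₂ x := by
  refine MvPolynomial.hom_congr_vars (f₁ := (θ₁ : MvPolynomial σ A →+* E))
    (f₂ := (θ₂ : MvPolynomial σ A →+* E)) ?_ ?_ rfl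
  · ext a
    have h1 := θ₁.commutes a
    have h2 := θ₂.commutes a
    rw [MvPolynomial.algebraMap_eq] at h1 h2
    simp [h1, h2]
  · intro i hi _
    exact h i hi

theorem taylor (θ₁ θ₂ : MvPolynomial σ A →ₐ[A] E) (x : MvPolynomial σ A)
    (h : ∀ b ∈ x.vars, ∀ c ∈ x.vars, (θ₂ (MvPolynomial.X b) - θ₁ (MvPolynomial.X b)) *
      (θ₂ (MvPolynomial.X c) - θ₁ (MvPolynomial.X c)) = 0)
    (h' : ∀ b ∈ x.vars, θ₁ (MvPolynomial.pderiv b x) *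
      (θ₂ (MvPolynomial.X b) - θ₁ (MvPolynomial.X b)) = 0) : θ₂ x = θ₁ x := by
  classical
  let θ₃ : MvPolynomial σ A →ₐ[A] E := MvPolynomial.aeval fun b =>
    if b ∈ x.vars then θ₂ (MvPolynomial.X b) else θ₁ (MvPolynomial.X b)
  have h3 : ∀ b, b ∈ x.vars → θ₃ (MvPolynomial.X b) = θ₂ (MvPolynomial.X b) := by
    intro b hb
    simp [θ₃, hb]
  have h3' : ∀ b, b ∉ x.vars → θ₃ (MvPolynomial.X b) = θ₁ (MvPolynomial.X b) := by
    intro b hb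
    simp [θ₃, hb]
  have e : θ₃ x = θ₂ x := congr_vars _ _ x h3
  rw [← e, ← sub_eq_zero, taylor_aux θ₁ θ₃ x.vars h3' ?_ x]
  · refine Finset.sum_eq_zero fun b hb => ?_
    rw [h3 b hb, h' b hb]
  · intro b c
    by_cases hb : b ∈ x.vars
    · by_cases hc : c ∈ x.vars
      · rw [h3 b hb, h3 c hc, h b hb c hc]
      · rw [h3' c hc, sub_self, mul_zero]
    · rw [h3' b hb, sub_self, zero_mul]

end Taylor

section Main
variable {K : Type*} [Field K] {L : Type*} [Field L] [Algebra K[X] L] [IsFractionRing K[X] L]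
variable (w : AddValuation L (WithTop ℝ))
variable {A : Type*} [CommRing A] [Algebra A L]

theorem exists_bar {b : L} (hb : b ≠ 0) : ∃ l : Lam K, bar L l = b := by
  obtain ⟨n, d, hd, rfl⟩ := IsFractionRing.div_surjective (A := K[X]) b
  have hd0 : d ≠ 0 := nonZeroDivisors.ne_zero hd
  have hn0 : n ≠ 0 := by rintro rfl; simp at hb
  refine ⟨Finsupp.single ⟨n, hn0⟩ 1 - Finsupp.single ⟨d, hd0⟩ 1, ?_⟩
  rw [bar_sub, bar_single, bar_single, zpow_one, zpow_one]

theorem SS_range {Q : Type} [AddCommMonoid Q] (ι : AddMonoidAlgebra A Q →ₐ[A] SS K w A) (s : SS K w A)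
    (h : ∀ l ∈ s.coeff.support, mo w A (l : Lam K) ∈ ι.range) : s ∈ ι.range := by
  rw [← AddMonoidAlgebra.sum_coeff_single s]
  refine sum_mem fun l hl => ?_
  have h1 := Subalgebra.smul_mem _ (h l hl) (s.coeff l)
  have h2 : 0 ≤ wR w (l : Lam K) := l.2
  simpa [mo, h2] using h1

theorem sq_support {z : SS K w A} (hz : z ∈ (II (K := K) w A) ^ 2) :
    ∃ F : Finset (Lam K), (∀ l ∈ F, 0 ≤ wR w l) ∧ ∀ (Q : Type) [AddCommMonoid Q]
      (ι : AddMonoidAlgebra A Q →ₐ[A] SS K w A), (∀ l ∈ F, mo w A l ∈ ι.range) →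
      ∃ y ∈ ((II (K := K) w A).comap ι) ^ 2, ι y = z := by
  classical
  rw [pow_two] at hz
  induction hz using Submodule.mul_induction_on' with
  | mem_mul_mem p hp q hq =>
    refine ⟨(p.coeff.support ∪ q.coeff.support).image (fun l : Lp (K := K) w => (l : Lam K)), ?_, ?_⟩
    · intro l hl
      obtain ⟨l', _, rfl⟩ := Finset.mem_image.1 hl
      exact l'.2
    · intro Q _ ι h
      obtain ⟨p', rfl⟩ := SS_range w ι p fun l hl =>
        h _ (Finset.mem_image_of_mem _ (Finset.mem_union_left _ hl))
      obtain ⟨q', rfl⟩ := SS_range w ι q fun l hl =>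
        h _ (Finset.mem_image_of_mem _ (Finset.mem_union_right _ hl))
      refine ⟨p' * q', ?_, map_mul _ _ _⟩
      rw [pow_two]
      exact Ideal.mul_mem_mul hp hq
  | add a _ b _ ha hb =>
    obtain ⟨F, hF, h⟩ := ha
    obtain ⟨F', hF', h'⟩ := hb
    refine ⟨F ∪ F', ?_, ?_⟩
    · intro l hl
      rcases Finset.mem_union.1 hl with hl | hl
      · exact hF l hl
      · exact hF' l hl
    · intro Q _ ι hι
      obtain ⟨y, hy, e⟩ := h Q ι fun l hl => hι l (Finset.mem_union_left _ hl)
      obtain ⟨y', hy', e'⟩ := h' Q ι fun l hl => hι l (Finset.mem_union_right _ hl)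
      exact ⟨y + y', add_mem hy hy', by rw [map_add, e, e']⟩

/-- evaluation of the free polynomial ring -/
def piL (A : Type*) [CommRing A] [Algebra A L] : MvPolynomial w.unitBall A →ₐ[A] L :=
  MvPolynomial.aeval (fun b : w.unitBall => (b : L))

/-- its kernel -/
def IX (A : Type*) [CommRing A] [Algebra A L] : Ideal (MvPolynomial w.unitBall A) := RingHom.ker (piL w A)

theorem mem_IX (x : MvPolynomial w.unitBall A) : x ∈ IX w A ↔ piL w A x = 0 := Iff.rfl

/-- first-order neighbourhood -/
abbrev EX (A : Type*) [CommRing A] [Algebra A L] := MvPolynomial w.unitBall A ⧸ (IX w A) ^ 2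

/-- evaluation on it -/
def tau (A : Type*) [CommRing A] [Algebra A L] : EX w A →ₐ[A] L := Ideal.Quotient.liftₐ _ (piL w A) (by
  intro a ha
  exact Ideal.pow_le_self two_ne_zero ha)

theorem tau_mk (x : MvPolynomial w.unitBall A) : tau w A (Ideal.Quotient.mkₐ A _ x) = piL w A x := by
  rfl

theorem tau_mul {y z : EX w A} (hy : tau w A y = 0) (hz : tau w A z = 0) : y * z = 0 := by
  obtain ⟨p, rfl⟩ := Ideal.Quotient.mkₐ_surjective A _ y
  obtain ⟨q, rfl⟩ := Ideal.Quotient.mkₐ_surjective A _ z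
  rw [tau_mk] at hy hz
  rw [← map_mul, Ideal.Quotient.mkₐ_eq_mk, Ideal.Quotient.eq_zero_iff_mem, pow_two]
  exact Ideal.mul_mem_mul hy hz

theorem tau_unit {y z : EX w A} (h : tau w A y * tau w A z = 1) : IsUnit y := by
  have h0 : tau w A (y * z - 1) = 0 := by rw [map_sub, map_mul, h, map_one, sub_self]
  have h1 := tau_mul w h0 h0
  exact IsUnit.of_mul_eq_one (z * (1 - (y * z - 1))) (by linear_combination -h1)

/-- the cone of exponents -/
def Qc {r : ℕ} (e : Fin r → Lam K) : AddSubmonoid (Fin r → ℤ) where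
  carrier := {k | ∀ i, 0 ≤ k i ∨ wR w (e i) = 0}
  zero_mem' := fun i => Or.inl le_rfl
  add_mem' := by
    intro a b ha hb i
    rcases ha i with h | h
    · rcases hb i with h' | h'
      · exact Or.inl (add_nonneg h h')
      · exact Or.inr h'
    · exact Or.inr h

theorem exists_beta {r : ℕ} (e : Fin r → Lam K) (he : ∀ i, 0 ≤ wR w (e i)) :
    ∃ β : AddMonoidAlgebra A (Qc w e) →ₐ[A] EX w A, ∀ k : Qc w e,
      tau w A (β (AddMonoidAlgebra.single k 1)) = bar L (∑ i, (k : Fin r → ℤ) i • e i) := by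
  classical
  let xx : Fin r → EX w A := fun i => Ideal.Quotient.mkₐ A _
    (MvPolynomial.X ⟨bar L (e i), (wR_nonneg_iff w _).1 (he i)⟩)
  have hxx : ∀ i, tau w A (xx i) = bar L (e i) := by
    intro i
    simp only [xx, tau_mk, piL, MvPolynomial.aeval_X]
  have hu : ∀ i, wR w (e i) = 0 → IsUnit (xx i) := by
    intro i hi
    refine tau_unit w (z := Ideal.Quotient.mkₐ A _ (MvPolynomial.X ⟨bar L (-e i),
      (wR_nonneg_iff w _).1 (by rw [map_neg, hi, neg_zero])⟩)) ?_
    rw [hxx, tau_mk, piL, MvPolynomial.aeval_X, ← bar_add, add_neg_cancel, bar_zero]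
  let h : Fin r → ℤ → EX w A := fun i k =>
    if hi : wR w (e i) = 0 then (((hu i hi).unit ^ k : (EX w A)ˣ) : EX w A) else xx i ^ k.toNat
  have h_zero : ∀ i, h i 0 = 1 := by
    intro i
    by_cases hi : wR w (e i) = 0 <;> simp [h, hi]
  have h_add : ∀ i k k', (0 ≤ k ∨ wR w (e i) = 0) → (0 ≤ k' ∨ wR w (e i) = 0) →
      h i (k + k') = h i k * h i k' := by
    intro i k k' hk hk'
    by_cases hi : wR w (e i) = 0
    · simp only [h, hi, dif_pos, zpow_add, Units.val_mul]
    · have h1 := hk.resolve_right hi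
      have h2 := hk'.resolve_right hi
      simp only [h, hi, dif_neg, not_false_eq_true]
      rw [Int.toNat_add h1 h2, pow_add]
  have h_tau : ∀ i k, (0 ≤ k ∨ wR w (e i) = 0) → tau w A (h i k) = bar L (e i) ^ k := by
    intro i k hk
    by_cases hi : wR w (e i) = 0
    · simp only [h, hi, dif_pos]
      have : ((Units.map (tau w A : EX w A →* L) ((hu i hi).unit ^ k) : Lˣ) : L) = bar L (e i) ^ k := by
        rw [map_zpow, Units.val_zpow_eq_zpow_val]
        congr 1
        exact hxx i
      exact this
    · obtain ⟨n, rfl⟩ := Int.eq_ofNat_of_zero_le (hk.resolve_right hi)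
      simp only [h, hi, dif_neg, not_false_eq_true]
      rw [map_pow, hxx]
      simp
  let g : Multiplicative (Qc w e) →* EX w A :=
    { toFun := fun k => ∏ i, h i ((k.toAdd : Fin r → ℤ) i)
      map_one' := Finset.prod_eq_one fun i _ => h_zero i
      map_mul' := by
        intro a b
        rw [← Finset.prod_mul_distrib]
        exact Finset.prod_congr rfl fun i _ => h_add i _ _ (a.toAdd.2 i) (b.toAdd.2 i) }
  refine ⟨AddMonoidAlgebra.lift A (EX w A) (Qc w e) g, ?_⟩
  intro k
  rw [AddMonoidAlgebra.lift_single, one_smul]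
  change tau w A (∏ i, h i ((k : Fin r → ℤ) i)) = _
  rw [map_prod, Finset.prod_congr rfl fun i _ => h_tau i _ (k.2 i)]
  have : ∀ s : Finset (Fin r), bar L (∑ i ∈ s, (k : Fin r → ℤ) i • e i) =
      ∏ i ∈ s, bar L (e i) ^ ((k : Fin r → ℤ) i) := by
    intro s
    induction s using Finset.induction_on with
    | empty => simp
    | insert i s his ih => rw [Finset.sum_insert his, Finset.prod_insert his, bar_add, ih, bar_zsmul]
  exact (this _).symm

theorem exists_iota {r : ℕ} (e : Fin r → Lam K) (he : ∀ i, 0 ≤ wR w (e i)) (hli : LinearIndependent ℤ e) :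
    ∃ ι : AddMonoidAlgebra A (Qc w e) →ₐ[A] SS K w A, Function.Injective ι ∧ ∀ k : Qc w e,
      ι (AddMonoidAlgebra.single k 1) = mo w A (∑ i, (k : Fin r → ℤ) i • e i) ∧
      0 ≤ wR w (∑ i, (k : Fin r → ℤ) i • e i) := by
  have hnn : ∀ k : Qc w e, 0 ≤ wR w (∑ i, (k : Fin r → ℤ) i • e i) := by
    intro k
    rw [map_sum]
    refine Finset.sum_nonneg fun i _ => ?_
    rw [map_zsmul]
    rcases k.2 i with h | h
    · exact zsmul_nonneg (he i) h
    · rw [h, smul_zero]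
  let f : Qc w e →+ Lp (K := K) w :=
    { toFun := fun k => ⟨∑ i, (k : Fin r → ℤ) i • e i, hnn k⟩
      map_zero' := Subtype.ext (by simp)
      map_add' := fun a b => Subtype.ext (by simp [add_smul, Finset.sum_add_distrib]) }
  have hf : Function.Injective f := by
    intro a b hab
    have h1 : ∑ i, (a : Fin r → ℤ) i • e i = ∑ i, (b : Fin r → ℤ) i • e i := congrArg Subtype.val hab
    apply Subtype.ext
    funext i
    have h2 : ∑ i, ((a : Fin r → ℤ) i - (b : Fin r → ℤ) i) • e i = 0 := by
      simp only [sub_smul, Finset.sum_sub_distrib, h1, sub_self]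
    have := Fintype.linearIndependent_iff.1 hli _ h2 i
    exact sub_eq_zero.1 this
  refine ⟨AddMonoidAlgebra.mapDomainAlgHom A A f, AddMonoidAlgebra.mapDomain_injective hf, fun k => ⟨?_, hnn k⟩⟩
  rw [mo, dif_pos (hnn k)]
  exact AddMonoidAlgebra.mapDomain_single

variable (hA0 : ∀ a : A, 0 ≤ w (algebraMap A L a))
  (hA1 : ∀ a : A, ∃ c : K, algebraMap A L a = cst K L c)
  (hA2 : ∀ c : K, 0 ≤ w (cst K L c) → ∃ a : A, algebraMap A L a = cst K L c)
  (hAi : Function.Injective (algebraMap A L))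

include hA0 hA1 hA2 hAi in
theorem mem_sq (x : MvPolynomial w.unitBall A) (hx : piL w A x = 0)
    (hd : ∀ b, piL w A (MvPolynomial.pderiv b x) = 0) : x ∈ (IX w A) ^ 2 := by
  classical
  have hl : ∀ b : w.unitBall, ∃ l : Lam K, 0 ≤ wR w l ∧ ((b : L) ≠ 0 → bar L l = b) := by
    intro b
    by_cases hb : (b : L) = 0
    · exact ⟨0, by simp, fun h => absurd hb h⟩
    · obtain ⟨l, hl⟩ := exists_bar (K := K) hb
      exact ⟨l, (wR_nonneg_iff w l).2 (by rw [hl]; exact b.2), fun _ => hl⟩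
  choose lam hlam0 hlam using hl
  let α : MvPolynomial w.unitBall A →ₐ[A] SS K w A := MvPolynomial.aeval fun b =>
    if (b : L) = 0 then 0 else mo w A (lam b)
  have hα : ∀ b, α (MvPolynomial.X b) = if (b : L) = 0 then 0 else mo w A (lam b) := by
    intro b; simp only [α, MvPolynomial.aeval_X]
  have hφα : ∀ y, phi w A (α y) = piL w A y := by
    have : (phi w A).comp α = piL w A := by
      apply MvPolynomial.algHom_ext
      intro b
      rw [AlgHom.comp_apply, hα, piL, MvPolynomial.aeval_X]
      split_ifs with hb
      · rw [map_zero, hb]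
      · rw [phi_mo w A (hlam0 b), hlam b hb]
    exact fun y => DFunLike.congr_fun this y
  have hψ : ∀ p, psi w A p (α x) = 0 := by
    intro p
    have := taylor ((TrivSqZeroExt.inlAlgHom A L L).comp ((phi w A).comp α)) ((Psi w A p).comp α) x ?_ ?_
    · have h2 := congrArg TrivSqZeroExt.snd this
      exact h2
    · intro b _ c _
      ext
      · simp [Psi_fst]
      · simp [Psi_fst]
    · intro b _
      have : ((TrivSqZeroExt.inlAlgHom A L L).comp ((phi w A).comp α)) (MvPolynomial.pderiv b x) = 0 := by
        rw [AlgHom.comp_apply, AlgHom.comp_apply, hφα, hd, map_zero]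
      rw [this, zero_mul]
  have hsq := thm1 w hA0 hA1 hA2 hAi (α x) (by rw [hφα, hx]) hψ
  obtain ⟨F, hF0, hF⟩ := sq_support w hsq
  obtain ⟨r, e, he0, hli, hcone⟩ := elliott (wR (K := K) w) (F ∪ x.vars.image lam) (by
    intro s hs
    rcases Finset.mem_union.1 hs with hs | hs
    · exact hF0 s hs
    · obtain ⟨b, _, rfl⟩ := Finset.mem_image.1 hs
      exact hlam0 b)
  obtain ⟨β, hβ⟩ := exists_beta (A := A) w e he0
  obtain ⟨ι, hιi, hι⟩ := exists_iota (A := A) w e he0 hli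
  have hrange : ∀ l ∈ F ∪ x.vars.image lam, ∃ k : Qc w e, l = ∑ i, (k : Fin r → ℤ) i • e i := by
    intro l hl
    obtain ⟨k, hk, rfl⟩ := hcone l hl
    exact ⟨⟨k, hk⟩, rfl⟩
  obtain ⟨y, hy, hyx⟩ := hF (Qc w e) ι (by
    intro l hl
    obtain ⟨k, rfl⟩ := hrange l (Finset.mem_union_left _ hl)
    exact ⟨_, (hι k).1⟩)
  have hτβ : ∀ z, tau w A (β z) = phi w A (ι z) := by
    have : (tau w A).comp β = (phi w A).comp ι := by
      apply AddMonoidAlgebra.algHom_ext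
      swap
      · ext
      intro k
      rw [AlgHom.comp_apply, AlgHom.comp_apply, hβ, (hι k).1, phi_mo w A (hι k).2]
    exact fun z => DFunLike.congr_fun this z
  have hβy : β y = 0 := by
    have : ((II (K := K) w A).comap ι) ^ 2 ≤ RingHom.ker β := by
      rw [pow_two, Ideal.mul_le]
      intro a ha b hb
      rw [RingHom.mem_ker, map_mul]
      exact tau_mul w (by rw [hτβ]; exact ha) (by rw [hτβ]; exact hb)
    exact this hy
  have hk : ∀ b : w.unitBall, ∃ k : Qc w e, b ∈ x.vars → lam b = ∑ i, (k : Fin r → ℤ) i • e i := by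
    intro b
    by_cases hb : b ∈ x.vars
    · obtain ⟨k, h⟩ := hrange (lam b) (Finset.mem_union_right _ (Finset.mem_image_of_mem _ hb))
      exact ⟨k, fun _ => h⟩
    · exact ⟨0, fun h => absurd h hb⟩
  choose kk hkk using hk
  let α' : MvPolynomial w.unitBall A →ₐ[A] AddMonoidAlgebra A (Qc w e) := MvPolynomial.aeval fun b =>
    if (b : L) = 0 then 0 else AddMonoidAlgebra.single (kk b) 1
  have hα' : ∀ b, α' (MvPolynomial.X b) = if (b : L) = 0 then 0 else AddMonoidAlgebra.single (kk b) 1 := by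
    intro b; simp only [α', MvPolynomial.aeval_X]
  have hια : ι (α' x) = α x := by
    refine congr_vars (ι.comp α') α x ?_
    intro b hb
    rw [AlgHom.comp_apply, hα, hα']
    split_ifs with h
    · exact map_zero _
    · rw [(hι _).1, ← hkk b hb]
  have hα'y : α' x = y := hιi (by rw [hια, hyx])
  have hδ : ∀ b ∈ x.vars, tau w A ((β.comp α') (MvPolynomial.X b) -
      (Ideal.Quotient.mkₐ A ((IX w A) ^ 2)) (MvPolynomial.X b)) = 0 := by
    intro b hb
    rw [map_sub, tau_mk, AlgHom.comp_apply, hα', piL, MvPolynomial.aeval_X]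
    split_ifs with h
    · rw [map_zero, map_zero, h, sub_zero]
    · rw [hβ, ← hkk b hb, hlam b h, sub_self]
  have hT := taylor (Ideal.Quotient.mkₐ A ((IX w A) ^ 2)) (β.comp α') x
    (fun b hb c hc => tau_mul w (hδ b hb) (hδ c hc))
    (fun b hb => tau_mul w (by rw [tau_mk, hd]) (hδ b hb))
  rw [AlgHom.comp_apply, hα'y, hβy] at hT
  exact Ideal.Quotient.eq_zero_iff_mem.1 hT.symm

end Main
end HOne


namespace HOne
open Polynomial

section Final
variable {K : Type*} [Field K] {L : Type*} [Field L] [Algebra K[X] L] [IsFractionRing K[X] L]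
variable (w : AddValuation L (WithTop ℝ))
variable {A : Type*} [CommRing A] [Algebra A L] [Algebra A w.unitBall]

theorem h1_of (hAB : ∀ a : A, ((algebraMap A w.unitBall a : w.unitBall) : L) = algebraMap A L a)
    (H : ∀ x : MvPolynomial w.unitBall A, piL w A x = 0 →
      (∀ b, piL w A (MvPolynomial.pderiv b x) = 0) → x ∈ (IX w A) ^ 2) :
    Subsingleton (Algebra.H1Cotangent A w.unitBall) := by
  let P := Algebra.Generators.self A w.unitBall
  have hpi : ∀ x : MvPolynomial w.unitBall A, piL w A x = ((MvPolynomial.aeval P.val x : w.unitBall) : L) := by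
    intro x
    induction x using MvPolynomial.induction_on with
    | C a => simp [piL, hAB]
    | add p q hp hq => simp only [map_add, hp, hq]; rfl
    | mul_X p c hp =>
      rw [map_mul, map_mul, hp, piL, MvPolynomial.aeval_X, MvPolynomial.aeval_X]; rfl
  have hz : ∀ x : MvPolynomial w.unitBall A, piL w A x = 0 ↔ MvPolynomial.aeval P.val x = 0 := by
    intro x
    rw [hpi]
    exact ZeroMemClass.coe_eq_zero
  have hker : IX w A = P.ker := by
    ext x
    rw [mem_IX, hz, Algebra.Generators.ker_eq_ker_aeval_val]
    rfl
  change Subsingleton P.toExtension.H1Cotangent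
  rw [Algebra.Extension.subsingleton_h1Cotangent]
  rw [injective_iff_map_eq_zero]
  intro y hy
  obtain ⟨x, rfl⟩ := Algebra.Extension.Cotangent.mk_surjective y
  rw [Algebra.Extension.Cotangent.mk_eq_zero_iff]
  have hx : (x.val : MvPolynomial w.unitBall A) ∈ IX w A := by
    rw [hker]; exact x.2
  have := H x.val hx (by
    intro b
    rw [hz]
    have h1 := P.cotangentRestrict_mk Function.injective_id x
    have h2 := congrFun h1 b
    refine h2.symm.trans ?_
    simp only [Algebra.Generators.cotangentRestrict, LinearMap.coe_comp, Function.comp_apply]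
    erw [hy]
    simp)
  rw [hker] at this
  exact this

end Final
end HOne

/-- Let `(K, v_K)` be a field with a non-trivial real-valued valuation, let
`L = K(T)` be the field of rational functions in one variable over `K`, and let `w` be any
real-valued valuation on `L` extending `v_K`, with ring of integers `L° = {f : w(f) ≥ 0}`.
Then `H₁(𝕃_{L°/K°}) = 0`. -/
theorem h1Cotangent_integers_ratFunc_eq_zero
    {K : Type*} [Field K]
    (vK : AddValuation K (WithTop ℝ)) (hnt : vK.IsNontrivial)
    (w : AddValuation (RatFunc K) (WithTop ℝ))
    (hext : ∀ x : K, w (algebraMap K (RatFunc K) x) = vK x)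
    [Algebra vK.unitBall w.unitBall]
    (hcomp : ∀ x : vK.unitBall,
      (algebraMap vK.unitBall w.unitBall x : RatFunc K) = algebraMap K (RatFunc K) (x : K)) :
    Subsingleton (Algebra.H1Cotangent vK.unitBall w.unitBall) := by
  letI : Algebra vK.unitBall (RatFunc K) :=
    ((algebraMap K (RatFunc K)).comp vK.unitBall.subtype).toAlgebra
  have hmap : ∀ a : vK.unitBall, algebraMap vK.unitBall (RatFunc K) a = algebraMap K (RatFunc K) (a : K) :=
    fun a => rfl
  have hcst : ∀ c : K, HOne.cst K (RatFunc K) c = algebraMap K (RatFunc K) c := by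
    intro c
    rfl
  refine HOne.h1_of w (fun a => hcomp a) (HOne.mem_sq (K := K) w ?_ ?_ ?_ ?_)
  · intro a
    rw [hmap, hext]; exact a.2
  · intro a
    exact ⟨a, by rw [hmap, hcst]⟩
  · intro c hc
    rw [hcst, hext] at hc
    exact ⟨⟨c, hc⟩, by rw [hmap, hcst]⟩
  · intro a b hab
    rw [hmap, hmap] at hab
    exact Subtype.ext ((algebraMap K (RatFunc K)).injective hab)
end
end

section
/- Let (K, v_K) be a field with a non-trivial real-valued valuation and let (A, v) be a scalable semi-valued (K, v_K)-algebra which is a domain with ker v = {0}, such that ⋂_{n≥0} φⁿA = {0} for the prime element φ ∈ A below. Let θ, α, β ∈ A^× be units with v(θ) = v(φ) ≤ v(α) ≤ v(β) (so θ⁻¹α, θ⁻¹φ and α⁻¹β lie in A°). Then the kernel of the A°-algebra homomorphism A°[X, Y] → A[φ⁻¹] sending X to α⁻¹φ and Y to βφ⁻¹ is the ideal generated by X·Y − α⁻¹β and (θ⁻¹α)·X − θ⁻¹φ; in particular A°[α⁻¹φ, βφ⁻¹] ≅ A°[X, Y]/(X·Y − α⁻¹β, (θ⁻¹α)·X − θ⁻¹φ).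 -/
noncomputable section

/-- An element `a` is a *constant* of the subring `R` (with respect to the semi-valuation `v`
on the ambient ring) if `a ∈ R`, `a` is not in the kernel of `v`, and `a` divides (within `R`)
every element of `R` of larger or equal value. -/
def AddValuation.IsConstantOn {A : Type*} [CommRing A] (v : AddValuation A (WithTop ℝ))
    (R : Subring A) (a : A) : Prop :=
  a ∈ R ∧ v a ≠ ⊤ ∧ ∀ b ∈ R, v a ≤ v b → ∃ c ∈ R, a * c = b

/-- The subring `R` of the semi-valued ring `(A, v)` is *scalable* if every value
`r ∈ v(R) \ {∞}` is the value of some constant of `R`. -/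
def AddValuation.ScalableOn {A : Type*} [CommRing A] (v : AddValuation A (WithTop ℝ))
    (R : Subring A) : Prop :=
  ∀ r : WithTop ℝ, r ≠ ⊤ → (∃ x ∈ R, v x = r) → ∃ a : A, v.IsConstantOn R a ∧ v a = r

namespace KernelBeth

open MvPolynomial

variable {R A L : Type*} [CommRing R] [CommRing A] [IsDomain A] [CommRing L]

/-- Every polynomial in two variables is, modulo `X Y - b`, a sum of a polynomial in `X` and
a polynomial in `Y`. -/
lemma normal_form (I : Ideal (MvPolynomial (Fin 2) R)) (b : R)
    (hI : X 0 * X 1 - C b ∈ I) (F : MvPolynomial (Fin 2) R) :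
    ∃ f g : Polynomial R, F - (Polynomial.aeval (X 0 : MvPolynomial (Fin 2) R) f +
      Polynomial.aeval (X 1 : MvPolynomial (Fin 2) R) g) ∈ I := by
  induction F using MvPolynomial.induction_on with
  | C r =>
    refine ⟨Polynomial.C r, 0, ?_⟩
    simp [MvPolynomial.algebraMap_eq]
  | add p q hp hq =>
    obtain ⟨f, g, h⟩ := hp
    obtain ⟨f', g', h'⟩ := hq
    refine ⟨f + f', g + g', ?_⟩
    have := I.add_mem h h'
    simp only [map_add]
    convert this using 1
    ring
  | mul_X p i hp =>
    obtain ⟨f, g, h⟩ := hp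
    have hi : i = 0 ∨ i = 1 := by fin_cases i <;> simp
    rcases hi with rfl | rfl
    · refine ⟨f * Polynomial.X + Polynomial.C (g.coeff 0) * Polynomial.X,
        Polynomial.C b * g.divX, ?_⟩
      have h1 := I.mul_mem_right (X 0) h
      have h2 := I.mul_mem_right (Polynomial.aeval (X 1 : MvPolynomial (Fin 2) R) g.divX) hI
      have h3 := I.add_mem h1 h2
      have hg : Polynomial.aeval (X 1 : MvPolynomial (Fin 2) R) g =
          Polynomial.aeval (X 1 : MvPolynomial (Fin 2) R) g.divX * X 1 + C (g.coeff 0) := by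
        conv_lhs => rw [← Polynomial.divX_mul_X_add g]
        simp [MvPolynomial.algebraMap_eq]
      rw [hg] at h3
      simp only [map_add, map_mul, Polynomial.aeval_X, Polynomial.aeval_C,
        MvPolynomial.algebraMap_eq]
      convert h3 using 1
      ring
    · refine ⟨Polynomial.C b * f.divX,
        g * Polynomial.X + Polynomial.C (f.coeff 0) * Polynomial.X, ?_⟩
      have h1 := I.mul_mem_right (X 1) h
      have h2 := I.mul_mem_right (Polynomial.aeval (X 0 : MvPolynomial (Fin 2) R) f.divX) hI
      have h3 := I.add_mem h1 h2
      have hg : Polynomial.aeval (X 0 : MvPolynomial (Fin 2) R) f =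
          Polynomial.aeval (X 0 : MvPolynomial (Fin 2) R) f.divX * X 0 + C (f.coeff 0) := by
        conv_lhs => rw [← Polynomial.divX_mul_X_add f]
        simp [MvPolynomial.algebraMap_eq]
      rw [hg] at h3
      simp only [map_add, map_mul, Polynomial.aeval_X, Polynomial.aeval_C,
        MvPolynomial.algebraMap_eq]
      convert h3 using 1
      ring

set_option linter.unusedSectionVars false

variable (j : R →+* A) (ι : A →+* L) (e : MvPolynomial (Fin 2) R →+* L)

lemma e_aeval_X (x : A) (heC : ∀ r, e (C r) = ι (j r)) (hx : e (X 0) = ι x)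
    (f : Polynomial R) :
    e (Polynomial.aeval (X 0 : MvPolynomial (Fin 2) R) f) = ι (Polynomial.eval₂ j x f) := by
  rw [Polynomial.aeval_def, Polynomial.hom_eval₂, Polynomial.hom_eval₂, hx]
  congr 1
  ext r
  simp [MvPolynomial.algebraMap_eq, heC]

/-- The kernel on polynomials in `X` only. -/
lemma ker_X (hj : Function.Injective j) (I : Ideal (MvPolynomial (Fin 2) R)) (a p : R)
    (hI : C a * X 0 - C p ∈ I) (x : A) (hx0 : x ≠ 0) (hax : j a * x = j p)
    (hdiv : ∀ c : R, x ∣ j c → ∃ h, c = p * h) (n : ℕ) :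
    ∀ f : Polynomial R, f.natDegree ≤ n → Polynomial.eval₂ j x f = 0 →
      Polynomial.aeval (X 0 : MvPolynomial (Fin 2) R) f ∈ I := by
  have key : ∀ f : Polynomial R, Polynomial.eval₂ j x f = 0 → ∃ h : R,
      Polynomial.eval₂ j x (f.divX + Polynomial.C (a * h)) = 0 ∧
      (Polynomial.aeval (X 0 : MvPolynomial (Fin 2) R) (f.divX + Polynomial.C (a * h)) ∈ I →
      Polynomial.aeval (X 0 : MvPolynomial (Fin 2) R) f ∈ I) := by
    intro f hf
    have hf' := hf
    rw [← Polynomial.divX_mul_X_add f] at hf'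
    simp only [Polynomial.eval₂_add, Polynomial.eval₂_mul, Polynomial.eval₂_X,
      Polynomial.eval₂_C] at hf'
    obtain ⟨h, hh⟩ := hdiv (f.coeff 0) ⟨-Polynomial.eval₂ j x f.divX, by linear_combination hf'⟩
    refine ⟨h, ?_, ?_⟩
    · rw [hh, map_mul, ← hax] at hf'
      apply mul_right_cancel₀ hx0
      rw [Polynomial.eval₂_add, Polynomial.eval₂_C, map_mul]
      linear_combination hf'
    · intro hm
      have h1 := I.sub_mem (I.mul_mem_right (X 0) hm) (I.mul_mem_right (C h) hI)
      convert h1 using 1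
      conv_lhs => rw [← Polynomial.divX_mul_X_add f, hh]
      simp only [map_add, map_mul, Polynomial.aeval_X, Polynomial.aeval_C,
        MvPolynomial.algebraMap_eq]
      ring
  induction n with
  | zero =>
    intro f hd hf
    obtain ⟨c, rfl⟩ : ∃ c, f = Polynomial.C c :=
      ⟨_, Polynomial.eq_C_of_natDegree_le_zero hd⟩
    have hc : j c = 0 := by simpa using hf
    rw [(map_eq_zero_iff j hj).mp hc]
    simp
  | succ n ih =>
    intro f hd hf
    obtain ⟨h, h1, h2⟩ := key f hf
    refine h2 (ih _ ?_ h1)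
    rw [Polynomial.natDegree_add_C, Polynomial.natDegree_divX_eq_natDegree_tsub_one]
    omega

/-- Clearing denominators in a polynomial in `Y`. -/
lemma clear_Y (x : A) (b : R) (y : L) (hxy : ι x * y = ι (j b)) (g : Polynomial R) (m : ℕ)
    (hg : g.natDegree ≤ m) :
    ∃ z : A, ι x ^ m * Polynomial.eval₂ (ι.comp j) y g = ι z := by
  refine ⟨∑ i ∈ Finset.range (m + 1), j (g.coeff i) * j b ^ i * x ^ (m - i), ?_⟩
  rw [Polynomial.eval₂_eq_sum_range' (ι.comp j) (Nat.lt_succ_of_le hg), Finset.mul_sum, map_sum]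
  refine Finset.sum_congr rfl fun i hi => ?_
  have him : i ≤ m := Nat.lt_succ_iff.mp (Finset.mem_range.mp hi)
  simp only [map_mul, map_pow, RingHom.comp_apply]
  rw [← hxy]
  obtain ⟨k, rfl⟩ := Nat.exists_eq_add_of_le him
  rw [Nat.add_sub_cancel_left, pow_add, mul_pow]
  ring

lemma e_aeval_Y (heC : ∀ r, e (C r) = ι (j r)) (g : Polynomial R) :
    e (Polynomial.aeval (X 1 : MvPolynomial (Fin 2) R) g) =
      Polynomial.eval₂ (ι.comp j) (e (X 1)) g := by
  rw [Polynomial.aeval_def, Polynomial.hom_eval₂]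
  congr 1
  ext r
  simp [MvPolynomial.algebraMap_eq, heC]

/-- The kernel on sums of a polynomial in `X` and a polynomial in `Y`. -/
lemma ker_XY (hj : Function.Injective j) (hι : Function.Injective ι)
    (heC : ∀ r, e (C r) = ι (j r)) (I : Ideal (MvPolynomial (Fin 2) R)) (a b p : R)
    (hb : IsUnit (j b)) (hI0 : X 0 * X 1 - C b ∈ I) (hI : C a * X 0 - C p ∈ I)
    (x : A) (hx : e (X 0) = ι x) (hxy : ι x * e (X 1) = ι (j b))
    (hx0 : x ≠ 0) (hax : j a * x = j p)
    (hdiv : ∀ c : R, x ∣ j c → ∃ h, c = p * h) (hle : I ≤ RingHom.ker e) (m : ℕ) :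
    ∀ f g : Polynomial R, g.natDegree ≤ m →
      e (Polynomial.aeval (X 0 : MvPolynomial (Fin 2) R) f +
        Polynomial.aeval (X 1 : MvPolynomial (Fin 2) R) g) = 0 →
      Polynomial.aeval (X 0 : MvPolynomial (Fin 2) R) f +
        Polynomial.aeval (X 1 : MvPolynomial (Fin 2) R) g ∈ I := by
  induction m with
  | zero =>
    intro f g hd h
    obtain ⟨c, rfl⟩ : ∃ c, g = Polynomial.C c :=
      ⟨_, Polynomial.eq_C_of_natDegree_le_zero hd⟩
    have hc : Polynomial.aeval (X 0 : MvPolynomial (Fin 2) R) f +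
        Polynomial.aeval (X 1 : MvPolynomial (Fin 2) R) (Polynomial.C c) =
        Polynomial.aeval (X 0 : MvPolynomial (Fin 2) R) (f + Polynomial.C c) := by
      simp
    rw [hc] at h ⊢
    refine ker_X j hj I a p hI x hx0 hax hdiv _ _ le_rfl ?_
    rw [e_aeval_X j ι e x heC hx] at h
    exact hι (by rw [h, map_zero])
  | succ m ih =>
    intro f g hd h
    obtain ⟨c, g', hg', rfl⟩ : ∃ (c : R) (g' : Polynomial R), g'.natDegree ≤ m ∧
        g = g' + Polynomial.C c * Polynomial.X ^ (m + 1) := by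
      refine ⟨g.coeff (m + 1), g - Polynomial.C (g.coeff (m + 1)) * Polynomial.X ^ (m + 1),
        ?_, by ring⟩
      rw [Polynomial.natDegree_le_iff_coeff_eq_zero]
      intro N hN
      rw [Polynomial.coeff_sub, Polynomial.coeff_C_mul_X_pow]
      split_ifs with hh
      · rw [hh, sub_self]
      · rw [Polynomial.coeff_eq_zero_of_natDegree_lt (by omega), sub_zero]
    obtain ⟨z, hz⟩ := clear_Y j ι x b (e (X 1)) hxy g' m hg'
    have h' := h
    rw [map_add, e_aeval_X j ι e x heC hx, e_aeval_Y j ι e heC] at h'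
    simp only [Polynomial.eval₂_add, Polynomial.eval₂_mul, Polynomial.eval₂_C,
      Polynomial.eval₂_X_pow, RingHom.comp_apply] at h'
    have h2 : ι (x ^ (m + 1) * Polynomial.eval₂ j x f + x * z + j c * j b ^ (m + 1)) = ι 0 := by
      simp only [map_add, map_mul, map_pow, map_zero]
      rw [← hz, ← hxy, mul_pow]
      linear_combination (ι x ^ (m + 1)) * h'
    have h3 := hι h2
    have h4 : x ∣ j c * j b ^ (m + 1) :=
      ⟨-(x ^ m * Polynomial.eval₂ j x f + z), by linear_combination h3⟩
    have h5 : x ∣ j c := (hb.pow (m + 1)).dvd_mul_right.mp h4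
    obtain ⟨k, hk⟩ := hdiv c h5
    have hmem : C c * X 1 ^ (m + 1) - C (a * b * k) * X 1 ^ m ∈ I := by
      have h6 := I.sub_mem (I.mul_mem_right (C (a * k) * X 1 ^ m) hI0)
        (I.mul_mem_right (C k * X 1 ^ (m + 1)) hI)
      convert h6 using 1
      rw [hk]
      simp only [map_mul]
      ring
    have hsplit : Polynomial.aeval (X 0 : MvPolynomial (Fin 2) R) f +
        Polynomial.aeval (X 1 : MvPolynomial (Fin 2) R)
          (g' + Polynomial.C c * Polynomial.X ^ (m + 1)) =
        (Polynomial.aeval (X 0 : MvPolynomial (Fin 2) R) f +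
        Polynomial.aeval (X 1 : MvPolynomial (Fin 2) R)
          (g' + Polynomial.C (a * b * k) * Polynomial.X ^ m)) +
        (C c * X 1 ^ (m + 1) - C (a * b * k) * X 1 ^ m) := by
      simp only [map_add, map_mul, map_pow, Polynomial.aeval_X, Polynomial.aeval_C,
        MvPolynomial.algebraMap_eq]
      ring
    rw [hsplit] at h ⊢
    refine I.add_mem (ih _ _ ?_ ?_) hmem
    · exact (Polynomial.natDegree_add_le _ _).trans
        (max_le hg' (Polynomial.natDegree_C_mul_X_pow_le _ _))
    · rw [map_add, (RingHom.mem_ker.mp (hle hmem)), add_zero] at h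
      exact h

/-- The abstract kernel computation. -/
lemma ker_eq (hj : Function.Injective j) (hι : Function.Injective ι)
    (heC : ∀ r, e (C r) = ι (j r)) (a b p : R)
    (hb : IsUnit (j b))
    (x : A) (hx : e (X 0) = ι x) (hxy : ι x * e (X 1) = ι (j b))
    (hx0 : x ≠ 0) (hax : j a * x = j p)
    (hdiv : ∀ c : R, x ∣ j c → ∃ h, c = p * h) :
    RingHom.ker e = Ideal.span {X 0 * X 1 - C b, C a * X 0 - C p} := by
  have hle : Ideal.span {(X 0 : MvPolynomial (Fin 2) R) * X 1 - C b, C a * X 0 - C p} ≤ RingHom.ker e := by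
    rw [Ideal.span_le]
    rintro _ (rfl | rfl)
    · simp [RingHom.mem_ker, heC, hx, hxy]
    · simp only [SetLike.mem_coe, RingHom.mem_ker, map_sub, map_mul, heC, hx]
      rw [← hax, map_mul, sub_self]
  refine le_antisymm ?_ hle
  intro F hF
  have h1 : X 0 * X 1 - C b ∈
      Ideal.span {(X 0 : MvPolynomial (Fin 2) R) * X 1 - C b, C a * X 0 - C p} :=
    Ideal.subset_span (by simp)
  have h2 : C a * X 0 - C p ∈
      Ideal.span {(X 0 : MvPolynomial (Fin 2) R) * X 1 - C b, C a * X 0 - C p} :=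
    Ideal.subset_span (by simp)
  obtain ⟨f, g, hfg⟩ := normal_form _ b h1 F
  have h3 := ker_XY j ι e hj hι heC _ a b p hb h1 h2 x hx hxy hx0 hax hdiv hle g.natDegree f g
    le_rfl (by
      have h4 := RingHom.mem_ker.mp (hle hfg)
      rw [map_sub, RingHom.mem_ker.mp hF, zero_sub, neg_eq_zero] at h4
      exact h4)
  have h5 := Ideal.add_mem _ hfg h3
  rwa [sub_add_cancel] at h5

end KernelBeth

/-- Let `(A, v)` be a scalable semi-valued `(K, v_K)`-algebra, a domain with
trivial kernel and `⋂ₙ φⁿA = 0` for the prime `φ` below.  Let `θ, α, β ∈ A^×` with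
`v(θ) = v(φ) ≤ v(α) ≤ v(β)`.  Then the kernel of the `A°`-algebra map `A°[X, Y] → A[φ⁻¹]`
sending `X ↦ α⁻¹φ` and `Y ↦ βφ⁻¹` is the ideal generated by `X·Y − α⁻¹β` and
`(θ⁻¹α)·X − θ⁻¹φ`. -/
theorem kernel_aeval_enlargement_case_beth
    {K A : Type*} [Field K] [CommRing A] [IsDomain A] [Algebra K A]
    (vK : AddValuation K (WithTop ℝ)) (hnt : vK.IsNontrivial)
    (v : AddValuation A (WithTop ℝ))
    (hext : ∀ x : K, v (algebraMap K A x) = vK x)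
    (hker : ∀ x : A, v x = ⊤ → x = 0)
    (hscal : v.ScalableOn ⊤)
    (φ : A) (hφ : Prime φ)
    (hsep : ∀ x : A, (∀ n : ℕ, φ ^ n ∣ x) → x = 0)
    (θ α β : Aˣ) (hθ : v ↑θ = v φ) (hα : v φ ≤ v ↑α) (hβ : v ↑α ≤ v ↑β)
    (u₁ u₂ u₃ : v.unitBall)
    (hu₁ : (u₁ : A) = ↑α⁻¹ * ↑β) (hu₂ : (u₂ : A) = ↑θ⁻¹ * ↑α) (hu₃ : (u₃ : A) = ↑θ⁻¹ * φ) :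
    RingHom.ker (MvPolynomial.aeval (R := v.unitBall)
        ![algebraMap A (Localization.Away φ) ((↑α⁻¹ : A) * φ),
          algebraMap A (Localization.Away φ) (↑β : A) * Localization.Away.invSelf φ]) =
      Ideal.span
        {MvPolynomial.X 0 * MvPolynomial.X 1 - MvPolynomial.C u₁,
         MvPolynomial.C u₂ * MvPolynomial.X 0 - MvPolynomial.C u₃} := by
  have hφ0 : φ ≠ 0 := hφ.ne_zero
  have hu3 : v (u₃ : A) = 0 := by
    rw [hu₃, v.map_mul, ← hθ, ← v.map_mul, Units.inv_mul, v.map_one]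
  have hinv : algebraMap A (Localization.Away φ) φ * Localization.Away.invSelf φ = 1 := by
    rw [Localization.Away.invSelf, Localization.mk_eq_mk', mul_comm]
    simpa using IsLocalization.mk'_spec (Localization.Away φ) (1 : A)
      (⟨φ, Submonoid.mem_powers φ⟩ : Submonoid.powers φ)
  refine KernelBeth.ker_eq v.unitBall.subtype (algebraMap A (Localization.Away φ))
    (MvPolynomial.aeval (R := v.unitBall)
        ![algebraMap A (Localization.Away φ) ((↑α⁻¹ : A) * φ),
          algebraMap A (Localization.Away φ) (↑β : A) *
            Localization.Away.invSelf φ]).toRingHom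
    Subtype.val_injective
    (IsLocalization.injective (Localization.Away φ)
      (powers_le_nonZeroDivisors_of_noZeroDivisors hφ0)) ?_ u₂ u₁ u₃ ?_ ((↑α⁻¹ : A) * φ)
    ?_ ?_ ?_ ?_ ?_
  · intro r
    simp only [AlgHom.toRingHom_eq_coe, RingHom.coe_coe, MvPolynomial.aeval_C]
    rfl
  · rw [Subring.subtype_apply, hu₁]
    exact (α⁻¹ * β).isUnit
  · simp
  · simp only [AlgHom.toRingHom_eq_coe, RingHom.coe_coe, MvPolynomial.aeval_X,
      Subring.subtype_apply, hu₁, map_mul, Matrix.cons_val_one, Matrix.cons_val_fin_one]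
    linear_combination (algebraMap A (Localization.Away φ) (↑α⁻¹ : A)) *
      (algebraMap A (Localization.Away φ) (β : A)) * hinv
  · exact mul_ne_zero α⁻¹.ne_zero hφ0
  · rw [Subring.subtype_apply, Subring.subtype_apply, hu₂, hu₃]
    linear_combination ((↑θ⁻¹ : A) * φ) * α.mul_inv
  · rintro c ⟨d, hd⟩
    rw [Subring.subtype_apply] at hd
    have hc : (c : A) = u₃ * (θ * (↑α⁻¹ : A) * d) := by
      rw [hd, hu₃]
      linear_combination (-((↑α⁻¹ : A) * φ * d)) * θ.mul_inv
    have hv : 0 ≤ v (θ * (↑α⁻¹ : A) * d) := by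
      have h0 : 0 ≤ v (c : A) := c.2
      rw [hc, v.map_mul, hu3, zero_add] at h0
      exact h0
    exact ⟨⟨_, hv⟩, Subtype.ext hc⟩
end
end

section
/- Let (K, v_K) be a field with a non-trivial real-valued valuation and let (A, v) be a scalable semi-valued (K, v_K)-algebra which is a domain with ker v = {0}, such that ⋂_{n≥0} φⁿA = {0} for the prime element φ ∈ A below. Let m, ℓ ≥ 1 be coprime integers and d, e ∈ ℕ with ℓd − me = 1. Let α, β, θ ∈ A^× be units with v(θ) = v(φ), and assume α^ℓβ^{−m} ∈ A° and α^{−e}β^{d}θ^{−1} ∈ A°. Then the kernel of the A°-algebra homomorphism A°[X, Z, Y] → A[φ⁻¹] sending X to α⁻¹φ^m, Z to αφ^{−m}, and Y to β⁻¹φ^ℓ is the ideal generated by X·Z − 1, Z^ℓ·Y^m − α^ℓβ^{−m}, and (α^{−e}β^{d}θ^{−1})·Z^{e}·Y^{d} − θ^{−1}φ. -/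
noncomputable section

theorem aleph_core {R A Q L : Type*} [CommRing R] [CommRing A] [CommRing Q] [CommRing L]
    (f : R →+* A) (hf : Function.Injective f) (j : A →+* L) (hj : Function.Injective j)
    (i : R →+* Q) (ψ : Q →+* L) (hψ : ∀ r, ψ (i r) = j (f r))
    (M : ℤ → Q) (c : ℤ → Aˣ) (φ : A) (u : Lˣ) (hu : (u : L) = j φ)
    (hM : ∀ n, ψ (M n) = j (c n) * ((u ^ n : Lˣ) : L)) (g : R)
    (hstep : ∀ n, ∃ r, i g * M n = i r * M (n + 1))
    (hdiv : ∀ a : R, φ ∣ f a → ∃ b, a = g * b) (k : ℕ) :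
    ∀ (N : ℤ) (a : ℤ → R), ψ (∑ n ∈ Finset.Ico N (N + k), i (a n) * M n) = 0 →
      ∑ n ∈ Finset.Ico N (N + k), i (a n) * M n = 0 := by
  have hval : ∀ (k : ℕ) (N : ℤ) (a : ℤ → R), ∃ s : A,
      ψ (∑ n ∈ Finset.Ico N (N + k), i (a n) * M n) = j s * ((u ^ N : Lˣ) : L) := by
    intro k N a
    rw [map_sum]
    refine Finset.sum_induction _ (fun x => ∃ s : A, x = j s * ((u ^ N : Lˣ) : L)) ?_ ?_ ?_
    · rintro _ _ ⟨s, rfl⟩ ⟨t, rfl⟩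
      exact ⟨s + t, by rw [map_add, add_mul]⟩
    · exact ⟨0, by simp⟩
    · intro n hn
      rw [Finset.mem_Ico] at hn
      obtain ⟨t, rfl⟩ : ∃ t : ℕ, n = N + t := ⟨(n - N).toNat, by omega⟩
      refine ⟨f (a (N + t)) * c (N + t) * φ ^ t, ?_⟩
      rw [map_mul, hψ, hM, zpow_add, zpow_natCast]
      simp only [Units.val_mul, Units.val_pow_eq_pow_val, hu, map_mul, map_pow]
      ring
  have hsplit : ∀ (k : ℕ) (N : ℤ) (F : ℤ → Q), ∑ n ∈ Finset.Ico N (N + (k + 1 : ℕ)), F n =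
      F N + ∑ n ∈ Finset.Ico (N + 1) (N + 1 + k), F n := by
    intro k N F
    have : Finset.Ico N (N + (k + 1 : ℕ)) = insert N (Finset.Ico (N + 1) (N + 1 + k)) := by
      ext x; simp only [Finset.mem_Ico, Finset.mem_insert]; omega
    rw [this, Finset.sum_insert (by simp)]
  induction k with
  | zero => intro N a _; simp
  | succ k ih =>
    intro N a h
    rw [hsplit] at h ⊢
    obtain ⟨s, hs⟩ := hval k (N + 1) a
    have h0 : f (a N) * c N + s * φ = 0 := by
      apply hj
      have : j (f (a N) * c N + s * φ) * ((u ^ N : Lˣ) : L) = 0 := by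
        rw [map_add, map_mul, hψ, hM, hs, zpow_add, zpow_one, Units.val_mul, hu] at h
        rw [← h]; simp only [map_add, map_mul]; ring
      rw [map_zero]
      exact (Units.mul_left_eq_zero _).mp this
    rcases Nat.eq_zero_or_pos k with rfl | hk
    · have hs0 : s = 0 := by
        apply hj
        rw [map_zero]
        refine (Units.mul_left_eq_zero (u ^ (N + 1))).mp ?_
        rw [← hs]; simp
      have : f (a N) = 0 := by
        rw [hs0, zero_mul, add_zero] at h0
        exact (Units.mul_left_eq_zero _).mp h0
      have : a N = 0 := hf (by rw [this, map_zero])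
      simp [this]
    · have : φ ∣ f (a N) := by
        rw [← Units.dvd_mul_right (u := c N)]
        exact ⟨-s, by linear_combination h0⟩
      obtain ⟨b, hb⟩ := hdiv _ this
      obtain ⟨r, hr⟩ := hstep N
      have key : i (a N) * M N + ∑ n ∈ Finset.Ico (N + 1) (N + 1 + k), i (a n) * M n =
          ∑ n ∈ Finset.Ico (N + 1) (N + 1 + k),
            i ((a + Pi.single (N + 1) (b * r) : ℤ → R) n) * M n := by
        simp only [Pi.add_apply, map_add, add_mul, Finset.sum_add_distrib]
        rw [add_comm, Finset.sum_eq_single (s := Finset.Ico (N + 1) (N + 1 + k))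
          (f := fun n => i ((Pi.single (N + 1) (b * r) : ℤ → R) n) * M n) (N + 1)]
        · rw [hb, Pi.single_eq_same, map_mul, map_mul]
          linear_combination i b * hr
        · intro n _ hn; simp [Pi.single_eq_of_ne hn]
        · intro hn; exact absurd (by simp only [Finset.mem_Ico]; omega) hn
      rw [key] at h ⊢
      exact ih _ _ h

theorem aleph_inj {R A Q L : Type*} [CommRing R] [CommRing A] [CommRing Q] [CommRing L]
    (f : R →+* A) (hf : Function.Injective f) (j : A →+* L) (hj : Function.Injective j)
    (i : R →+* Q) (ψ : Q →+* L) (hψ : ∀ r, ψ (i r) = j (f r))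
    (φ : A) (u : Lˣ) (hu : (u : L) = j φ)
    (m ℓ d e : ℕ) (hm : 1 ≤ m) (hde : ℓ * d = m * e + 1) (α β : Aˣ)
    (z : Qˣ) (y : Q) (hz : ψ z = j α * ((u ^ (-(m : ℤ)) : Lˣ) : L))
    (hy : ψ y = j (β⁻¹ : Aˣ) * ((u ^ (ℓ : ℤ) : Lˣ) : L))
    (g₁ g₂ g₃ : R) (h₁ : (z : Q) ^ ℓ * y ^ m = i g₁)
    (h₂ : i g₂ * (z : Q) ^ e * y ^ d = i g₃)
    (hdiv : ∀ a : R, φ ∣ f a → ∃ b, a = g₃ * b)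
    (hspan : ∀ q : Q, q ∈ AddSubmonoid.closure
      {q | ∃ (r : R) (s : ℤ) (t : ℕ), q = i r * ((z ^ s : Qˣ) : Q) * y ^ t})
    (q : Q) (hq : ψ q = 0) : q = 0 := by
  -- the normal form monomials
  set J : ℤ → ℕ := fun n => ((d * n) % m).toNat with hJ
  set E : ℤ → ℤ := fun n => (ℓ * J n - n) / m with hE
  set M : ℤ → Q := fun n => ((z ^ E n : Qˣ) : Q) * y ^ J n with hMdef
  have hm0 : (0 : ℤ) < m := by exact_mod_cast hm
  have hde' : (ℓ : ℤ) * d = m * e + 1 := by exact_mod_cast hde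
  have hJc : ∀ n, (J n : ℤ) = (d * n) % m := fun n =>
    Int.toNat_of_nonneg (Int.emod_nonneg _ hm0.ne')
  have hJE : ∀ n, (ℓ : ℤ) * J n - m * E n = n := by
    intro n
    have : (m : ℤ) ∣ ℓ * J n - n := by
      rw [hJc, Int.emod_def]
      exact ⟨e * n - ℓ * (d * n / m), by linear_combination n * hde'⟩
    have := Int.mul_ediv_cancel' this
    simp only [hE]
    linarith
  have hred : ∀ (s : ℤ) (t : ℕ), ∃ r, ((z ^ s : Qˣ) : Q) * y ^ t = i r * M (ℓ * t - m * s) := by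
    intro s t
    have h1 := hJE (ℓ * t - m * s)
    have hJt : J (ℓ * t - m * s) = t % m := by
      have : ((d : ℤ) * (ℓ * t - m * s)) = t + m * (e * t - d * s) := by
        linear_combination t * hde'
      have h2 := hJc (ℓ * t - m * s)
      rw [this, Int.add_mul_emod_self_left] at h2
      exact_mod_cast h2
    have ht := Nat.mod_add_div t m
    have hs : s = E (ℓ * t - m * s) + ℓ * (t / m : ℕ) := by
      rw [hJt] at h1
      have ht' : ((t % m : ℕ) : ℤ) + m * (t / m : ℕ) = t := by exact_mod_cast ht
      have : (m : ℤ) * (s - (E (ℓ * t - m * s) + ℓ * (t / m : ℕ))) = 0 := by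
        linear_combination h1 - ℓ * ht'
      rcases mul_eq_zero.mp this with h | h
      · omega
      · linarith
    refine ⟨g₁ ^ (t / m), ?_⟩
    simp only [hMdef]
    rw [hJt, map_pow, ← h₁]
    generalize E (ℓ * t - m * s) = E0 at hs
    rw [hs, zpow_add, Units.val_mul, ← Nat.cast_mul, zpow_natCast, Units.val_pow_eq_pow_val]
    conv_lhs => rw [← ht]
    have : (t % m + m * (t / m)) / m = t / m := by rw [ht]
    rw [this]
    ring
  have hstep : ∀ n, ∃ r, i g₃ * M n = i r * M (n + 1) := by
    intro n
    obtain ⟨r, hr⟩ := hred (E n + e) (J n + d)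
    refine ⟨g₂ * r, ?_⟩
    have : (ℓ : ℤ) * ((J n + d : ℕ) : ℤ) - m * (E n + e) = n + 1 := by
      push_cast
      linear_combination hJE n + hde'
    rw [this] at hr
    rw [map_mul, mul_assoc, ← hr, ← h₂, zpow_add, Units.val_mul, zpow_natCast,
      Units.val_pow_eq_pow_val]
    simp only [hMdef]
    ring
  have hM : ∀ n, ψ (M n) = j ((α ^ E n * β⁻¹ ^ J n : Aˣ) : A) * ((u ^ n : Lˣ) : L) := by
    intro n
    have hzu : Units.map (ψ : Q →* L) z = Units.map (j : A →* L) α * u ^ (-(m : ℤ)) := by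
      ext; simpa using hz
    have hzp : ψ ((z ^ E n : Qˣ) : Q) = ((Units.map (ψ : Q →* L) z ^ E n : Lˣ) : L) := by
      rw [← map_zpow]; rfl
    have hap : j ((α ^ E n * β⁻¹ ^ J n : Aˣ) : A) =
        (((Units.map (j : A →* L) α) ^ E n * (Units.map (j : A →* L) β⁻¹) ^ J n : Lˣ) : L) := by
      rw [← map_zpow, ← map_pow, ← map_mul]; rfl
    have hyu : ψ y = ((Units.map (j : A →* L) β⁻¹ * u ^ (ℓ : ℤ) : Lˣ) : L) := by
      rw [hy]; rfl
    simp only [hMdef]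
    rw [map_mul, map_pow, hzp, hyu, hap, hzu, ← Units.val_pow_eq_pow_val, ← Units.val_mul,
      ← Units.val_mul]
    congr 1
    have : u ^ n = (u ^ (-(m : ℤ))) ^ E n * (u ^ (ℓ : ℤ)) ^ (J n) := by
      rw [← zpow_mul, ← zpow_natCast, ← zpow_mul, ← zpow_add]
      congr 1
      linear_combination - hJE n
    rw [this, mul_zpow, mul_pow]
    exact mul_mul_mul_comm _ _ _ _
  -- every element is a finite combination of the `M n`
  have hfin : ∃ a : ℤ →₀ R, q = a.sum fun n r => i r * M n := by
    refine AddSubmonoid.closure_induction (motive := fun q _ => ∃ a : ℤ →₀ R,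
      q = a.sum fun n r => i r * M n) ?_ ?_ ?_ (hspan q)
    · rintro _ ⟨r, s, t, rfl⟩
      obtain ⟨r', hr'⟩ := hred s t
      refine ⟨Finsupp.single (ℓ * t - m * s) (r * r'), ?_⟩
      rw [Finsupp.sum_single_index (by simp), mul_assoc, hr', map_mul, mul_assoc]
    · exact ⟨0, by simp⟩
    · rintro _ _ _ _ ⟨a, rfl⟩ ⟨b, rfl⟩
      refine ⟨a + b, ?_⟩
      rw [Finsupp.sum_add_index' (by simp) (by intros; rw [map_add, add_mul])]
  obtain ⟨a, rfl⟩ := hfin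
  obtain ⟨N, k, hNk⟩ : ∃ (N : ℤ) (k : ℕ), a.support ⊆ Finset.Ico N (N + k) := by
    obtain ⟨B, hB⟩ := (a.support.image Int.natAbs).exists_le
    refine ⟨-B, 2 * B + 1, fun x hx => ?_⟩
    have := hB _ (Finset.mem_image_of_mem _ hx)
    simp only [Finset.mem_Ico]
    push_cast
    omega
  have hsum := Finsupp.sum_of_support_subset a hNk (fun n r => i r * M n) (by simp)
  rw [hsum] at hq ⊢
  exact aleph_core f hf j hj i ψ hψ M (fun n => α ^ E n * β⁻¹ ^ J n) φ u hu hM g₃ hstep hdiv k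
    N a hq

/-- With `(A, v)` a scalable semi-valued `(K, v_K)`-algebra, a domain with
trivial kernel and `⋂ₙ φⁿA = 0` for the prime `φ`, let `m, ℓ ≥ 1` be coprime, `d, e ∈ ℕ` with
`ℓd − me = 1`, and `α, β, θ ∈ A^×` with `v(θ) = v(φ)`, `α^ℓβ^{−m} ∈ A°`,
`α^{−e}β^{d}θ^{−1} ∈ A°`.  Then the kernel of the `A°`-algebra map `A°[X, Z, Y] → A[φ⁻¹]`,
`X ↦ α⁻¹φ^m`, `Z ↦ αφ^{−m}`, `Y ↦ β⁻¹φ^ℓ`, is the ideal generated by `X·Z − 1`,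
`Z^ℓ·Y^m − α^ℓβ^{−m}` and `(α^{−e}β^{d}θ^{−1})·Z^{e}·Y^{d} − θ^{−1}φ`. -/
theorem kernel_aeval_enlargement_case_aleph
    {K A : Type*} [Field K] [CommRing A] [IsDomain A] [Algebra K A]
    (vK : AddValuation K (WithTop ℝ)) (hnt : vK.IsNontrivial)
    (v : AddValuation A (WithTop ℝ))
    (hext : ∀ x : K, v (algebraMap K A x) = vK x)
    (hker : ∀ x : A, v x = ⊤ → x = 0)
    (hscal : v.ScalableOn ⊤)
    (φ : A) (hφ : Prime φ)
    (hsep : ∀ x : A, (∀ n : ℕ, φ ^ n ∣ x) → x = 0)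
    (m ℓ d e : ℕ) (hm : 1 ≤ m) (hℓ : 1 ≤ ℓ) (hcop : Nat.Coprime m ℓ)
    (hde : ℓ * d = m * e + 1)
    (α β θ : Aˣ) (hθ : v ↑θ = v φ)
    (g₁ g₂ g₃ : v.unitBall)
    (hg₁ : (g₁ : A) = (↑α : A) ^ ℓ * (↑β⁻¹ : A) ^ m)
    (hg₂ : (g₂ : A) = (↑α⁻¹ : A) ^ e * (↑β : A) ^ d * (↑θ⁻¹ : A))
    (hg₃ : (g₃ : A) = (↑θ⁻¹ : A) * φ) :
    RingHom.ker (MvPolynomial.aeval (R := v.unitBall)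
        ![algebraMap A (Localization.Away φ) ((↑α⁻¹ : A) * φ ^ m),
          algebraMap A (Localization.Away φ) (↑α : A) * (Localization.Away.invSelf φ) ^ m,
          algebraMap A (Localization.Away φ) ((↑β⁻¹ : A) * φ ^ ℓ)]) =
      Ideal.span
        {MvPolynomial.X 0 * MvPolynomial.X 1 - 1,
         (MvPolynomial.X 1 : MvPolynomial (Fin 3) v.unitBall) ^ ℓ * MvPolynomial.X 2 ^ m -
           MvPolynomial.C g₁,
         MvPolynomial.C g₂ * MvPolynomial.X 1 ^ e * MvPolynomial.X 2 ^ d -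
           MvPolynomial.C g₃} := by
  have hφ0 : φ ≠ 0 := hφ.ne_zero
  set j := algebraMap A (Localization.Away φ) with hjdef
  have hj : Function.Injective j :=
    IsLocalization.injective _ (powers_le_nonZeroDivisors_of_noZeroDivisors hφ0)
  have hinv : j φ * Localization.Away.invSelf φ = 1 := by
    rw [hjdef, Localization.Away.invSelf, Localization.mk_eq_mk']
    exact IsLocalization.Away.mul_invSelf (S := Localization.Away φ) φ
  let u : (Localization.Away φ)ˣ := ⟨j φ, Localization.Away.invSelf φ, hinv, by rw [mul_comm, hinv]⟩
  have hu : (u : Localization.Away φ) = j φ := rfl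
  have hui : ((u⁻¹ : (Localization.Away φ)ˣ) : Localization.Away φ) =
    Localization.Away.invSelf φ := rfl
  have hα : j (α : A) * j (α⁻¹ : Aˣ) = 1 := by rw [← map_mul, Units.mul_inv, map_one]
  have hβ : j (β : A) * j (β⁻¹ : Aˣ) = 1 := by rw [← map_mul, Units.mul_inv, map_one]
  set w := Localization.Away.invSelf φ with hw
  have hC : ∀ r : v.unitBall, algebraMap v.unitBall (Localization.Away φ) r = j (r : A) :=
    fun r => rfl
  set I : Ideal (MvPolynomial (Fin 3) v.unitBall) := Ideal.span
        {MvPolynomial.X 0 * MvPolynomial.X 1 - 1,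
         (MvPolynomial.X 1 : MvPolynomial (Fin 3) v.unitBall) ^ ℓ * MvPolynomial.X 2 ^ m -
           MvPolynomial.C g₁,
         MvPolynomial.C g₂ * MvPolynomial.X 1 ^ e * MvPolynomial.X 2 ^ d -
           MvPolynomial.C g₃} with hI
  set P := MvPolynomial.aeval (R := v.unitBall) (S₁ := Localization.Away φ)
        ![j ((↑α⁻¹ : A) * φ ^ m), j (↑α : A) * w ^ m, j ((↑β⁻¹ : A) * φ ^ ℓ)] with hP
  have hP0 : P (MvPolynomial.X 0) = j ((↑α⁻¹ : A) * φ ^ m) := by simp [hP]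
  have hP1 : P (MvPolynomial.X 1) = j (↑α : A) * w ^ m := by simp [hP]
  have hP2 : P (MvPolynomial.X 2) = j ((↑β⁻¹ : A) * φ ^ ℓ) := by simp [hP]
  have hPC : ∀ r, P (MvPolynomial.C r) = j (r : A) := fun r => by
    rw [hP, MvPolynomial.aeval_C, hC]
  have hle : I ≤ RingHom.ker P := by
    rw [hI, Ideal.span_le]
    have hpw : ∀ n : ℕ, j φ ^ n * w ^ n = 1 := fun n => by rw [← mul_pow, hinv, one_pow]
    have hαp : ∀ n : ℕ, j (α : A) ^ n * j (α⁻¹ : Aˣ) ^ n = 1 := fun n => by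
      rw [← mul_pow, hα, one_pow]
    have hβp : ∀ n : ℕ, j (β : A) ^ n * j (β⁻¹ : Aˣ) ^ n = 1 := fun n => by
      rw [← mul_pow, hβ, one_pow]
    rintro p (rfl | rfl | rfl)
    · rw [SetLike.mem_coe, RingHom.mem_ker, map_sub, map_mul, hP0, hP1, map_one, map_mul, map_pow]
      linear_combination j φ ^ m * w ^ m * hα + hpw m
    · rw [SetLike.mem_coe, RingHom.mem_ker, map_sub, map_mul, map_pow, map_pow, hP1, hP2, hPC,
        hg₁]
      simp only [map_mul, map_pow, mul_pow, ← pow_mul]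
      rw [mul_comm ℓ m]
      linear_combination j (α : A) ^ ℓ * j (β⁻¹ : Aˣ) ^ m * hpw (m * ℓ)
    · rw [SetLike.mem_coe, RingHom.mem_ker, map_sub, map_mul, map_mul, map_pow, map_pow, hP1, hP2,
        hPC, hPC, hg₂, hg₃]
      simp only [map_mul, map_pow, mul_pow, ← pow_mul]
      rw [hde, pow_succ]
      linear_combination (j (θ⁻¹ : Aˣ) * j φ) * (j (α : A) ^ e * j (α⁻¹ : Aˣ) ^ e *
        (j (β : A) ^ d * j (β⁻¹ : Aˣ) ^ d) * hpw (m * e) +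
        j (α : A) ^ e * j (α⁻¹ : Aˣ) ^ e * hβp d + hαp e)
  refine le_antisymm ?_ hle
  intro p hp
  rw [RingHom.mem_ker] at hp
  let π := Ideal.Quotient.mk I
  have hmem : ∀ q ∈ ({MvPolynomial.X 0 * MvPolynomial.X 1 - 1,
         (MvPolynomial.X 1 : MvPolynomial (Fin 3) v.unitBall) ^ ℓ * MvPolynomial.X 2 ^ m -
           MvPolynomial.C g₁,
         MvPolynomial.C g₂ * MvPolynomial.X 1 ^ e * MvPolynomial.X 2 ^ d -
           MvPolynomial.C g₃} : Set (MvPolynomial (Fin 3) v.unitBall)), π q = 0 := fun q hq =>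
    Ideal.Quotient.eq_zero_iff_mem.mpr (Ideal.subset_span hq)
  have e1 : π (MvPolynomial.X 0) * π (MvPolynomial.X 1) = 1 := by
    have := hmem _ (Or.inl rfl)
    rwa [map_sub, map_mul, map_one, sub_eq_zero] at this
  have e2 : π (MvPolynomial.X 1) ^ ℓ * π (MvPolynomial.X 2) ^ m = π (MvPolynomial.C g₁) := by
    have := hmem _ (Or.inr (Or.inl rfl))
    rwa [map_sub, map_mul, map_pow, map_pow, sub_eq_zero] at this
  have e3 : π (MvPolynomial.C g₂) * π (MvPolynomial.X 1) ^ e * π (MvPolynomial.X 2) ^ d =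
      π (MvPolynomial.C g₃) := by
    have := hmem _ (Or.inr (Or.inr rfl))
    rwa [map_sub, map_mul, map_mul, map_pow, map_pow, sub_eq_zero] at this
  have e1' : π (MvPolynomial.X 1) * π (MvPolynomial.X 0) = 1 := by
    rw [← map_mul, mul_comm, map_mul, e1]
  let z : (MvPolynomial (Fin 3) v.unitBall ⧸ I)ˣ :=
    ⟨π (MvPolynomial.X 1), π (MvPolynomial.X 0), e1', e1⟩
  let ψ : (MvPolynomial (Fin 3) v.unitBall ⧸ I) →+* Localization.Away φ :=
    Ideal.Quotient.lift I (P : MvPolynomial (Fin 3) v.unitBall →+* Localization.Away φ)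
      (fun a ha => hle ha)
  have hψπ : ∀ q, ψ (π q) = P q := fun q => rfl
  refine Ideal.Quotient.eq_zero_iff_mem.mp ?_
  refine aleph_inj (v.unitBall.subtype) Subtype.val_injective j hj
    (π.comp MvPolynomial.C) ψ (fun r => hPC r) φ u hu m ℓ d e hm hde α β z
    (π (MvPolynomial.X 2)) ?_ ?_ g₁ g₂ g₃ e2 e3 ?_ ?_ (π p) hp
  · change P (MvPolynomial.X 1) = _
    rw [hP1, zpow_neg, zpow_natCast, ← inv_pow, Units.val_pow_eq_pow_val, hui]
  · rw [hψπ, hP2, zpow_natCast, Units.val_pow_eq_pow_val, hu, map_mul, map_pow]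
  · rintro ⟨a, ha⟩ ⟨b, hb⟩
    change a = φ * b at hb
    have hb' : a = (g₃ : A) * (θ * b) := by
      rw [hb, hg₃]
      linear_combination (-φ * b) * θ.mul_inv
    refine ⟨⟨θ * b, ?_⟩, Subtype.ext hb'⟩
    change 0 ≤ v (θ * b)
    have ha' : 0 ≤ v a := ha
    rw [hb, v.map_mul] at ha'
    rwa [v.map_mul, hθ]
  · intro q
    obtain ⟨q, rfl⟩ := Ideal.Quotient.mk_surjective q
    induction q using MvPolynomial.induction_on' with
    | monomial s a =>
      apply AddSubmonoid.subset_closure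
      refine ⟨a, (s 1 : ℤ) - s 0, s 2, ?_⟩
      rw [MvPolynomial.monomial_eq, Finsupp.prod_fintype _ _ (by simp), Fin.prod_univ_three,
        zpow_sub, zpow_natCast, zpow_natCast, ← inv_pow, Units.val_mul,
        Units.val_pow_eq_pow_val, Units.val_pow_eq_pow_val]
      simp only [map_mul, map_pow]
      change π (MvPolynomial.C a) * (π (MvPolynomial.X 0) ^ s 0 * π (MvPolynomial.X 1) ^ s 1 *
        π (MvPolynomial.X 2) ^ s 2) = π (MvPolynomial.C a) * (π (MvPolynomial.X 1) ^ s 1 *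
        π (MvPolynomial.X 0) ^ s 0) * π (MvPolynomial.X 2) ^ s 2
      ring
    | add p q hp hq =>
      rw [map_add]
      exact add_mem hp hq
end
end

section
/- Let (K, v_K) be a field with a non-trivial real-valued valuation and let (A, v) be a scalable semi-valued (K, v_K)-algebra which is a domain with ker v = {0}, such that ⋂_{n≥0} φⁿA = {0} for the prime element φ ∈ A below. Let π, θ ∈ A^× be units with v(π) > 0 and v(θ) = v(φ) (so π and θ⁻¹φ lie in A°). Let p, r ∈ ℕ and q, s ≥ 1 be integers with r·q − p·s = 1. Then the kernel of the A°-algebra homomorphism A°[X, Y] → A[φ⁻¹] sending X to π^{−p}(θ⁻¹φ)^{q} and Y to π^{r}(θ⁻¹φ)^{−s} is the ideal generated by X^{s}·Y^{q} − π and X^{r}·Y^{p} − θ⁻¹φ. -/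
noncomputable section

/-- Multiplication by `P` is injective modulo `(M₁ - P, M₂ - t)`. -/
theorem gimel_torsion_free {R : Type*} [CommRing R] [IsDomain R] (P t : R) (hP : P ≠ 0)
    (hPt : ∀ c, P ∣ t * c → P ∣ c) (d e : Fin 2 →₀ ℕ) (he : e ≠ 0)
    (x : MvPolynomial (Fin 2) R)
    (hx : MvPolynomial.C P * x ∈ Ideal.span
      {MvPolynomial.monomial d (1 : R) - MvPolynomial.C P,
       MvPolynomial.monomial e (1 : R) - MvPolynomial.C t}) :
    x ∈ Ideal.span
      {MvPolynomial.monomial d (1 : R) - MvPolynomial.C P,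
       MvPolynomial.monomial e (1 : R) - MvPolynomial.C t} := by
  classical
  obtain ⟨y, z, hyz⟩ := Ideal.mem_span_pair.1 hx
  have hco : ∀ n, P * x.coeff n =
      ((if d ≤ n then y.coeff (n - d) else 0) - P * y.coeff n) +
      ((if e ≤ n then z.coeff (n - e) else 0) - t * z.coeff n) := by
    intro n
    have := congrArg (MvPolynomial.coeff n) hyz
    rw [mul_comm y, mul_comm z, sub_mul, sub_mul] at this
    simp only [MvPolynomial.coeff_add, MvPolynomial.coeff_sub, MvPolynomial.coeff_C_mul,
      MvPolynomial.coeff_monomial_mul', one_mul] at this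
    exact this.symm
  have hz : ∀ n, ¬ d ≤ n → P ∣ z.coeff n := by
    intro n
    induction n using WellFoundedLT.induction with
    | ind n ih =>
      intro hn
      apply hPt
      have h := hco n
      rw [if_neg hn] at h
      by_cases hen : e ≤ n
      · rw [if_pos hen] at h
        have hlt : n - e < n := by
          refine lt_of_le_of_ne tsub_le_self ?_
          intro h1
          apply he
          have h2 := tsub_add_cancel_of_le hen
          rw [h1] at h2
          simpa using h2
        obtain ⟨k, hk⟩ := ih (n - e) hlt (fun h => hn (h.trans tsub_le_self))
        refine ⟨k - x.coeff n - y.coeff n, ?_⟩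
        rw [hk] at h
        linear_combination h
      · rw [if_neg hen] at h
        refine ⟨- x.coeff n - y.coeff n, ?_⟩
        linear_combination h
  obtain ⟨u, hu⟩ : MvPolynomial.C P ∣ z.modMonomial d := by
    rw [MvPolynomial.C_dvd_iff_dvd_coeff]
    intro n
    by_cases hn : d ≤ n
    · rw [MvPolynomial.coeff_modMonomial_of_le _ hn]; exact dvd_zero _
    · rw [MvPolynomial.coeff_modMonomial_of_not_le _ hn]; exact hz n hn
  have hzdec := MvPolynomial.divMonomial_add_modMonomial z d
  rw [hu] at hzdec
  set w := z.divMonomial d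
  set f := MvPolynomial.monomial d (1 : R) - MvPolynomial.C P with hf
  set g := MvPolynomial.monomial e (1 : R) - MvPolynomial.C t with hg
  have h1 : MvPolynomial.C P * (x - g * (u + w)) = f * (y + g * w) := by
    rw [← hzdec] at hyz
    linear_combination -hyz + g * w * hf
  obtain ⟨k, hk⟩ : MvPolynomial.C P ∣ y + g * w := by
    rw [MvPolynomial.C_dvd_iff_dvd_coeff]
    intro n
    have h2 : MvPolynomial.C P * (x - g * (u + w) + (y + g * w)) =
        MvPolynomial.monomial d (1 : R) * (y + g * w) := by
      linear_combination h1 + (y + g * w) * hf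
    have h3 := congrArg (MvPolynomial.coeff (d + n)) h2
    rw [MvPolynomial.coeff_C_mul, MvPolynomial.coeff_monomial_mul, one_mul] at h3
    exact ⟨_, h3.symm⟩
  rw [hk] at h1
  have hCP : (MvPolynomial.C P : MvPolynomial (Fin 2) R) ≠ 0 := by simpa using hP
  have h4 : x - g * (u + w) = f * k := by
    apply mul_left_cancel₀ hCP
    linear_combination h1
  exact Ideal.mem_span_pair.2 ⟨k, u + w, by linear_combination -h4⟩

theorem gimel_units {L : Type*} [CommRing L] (a a' b b' : L) (ha : a * a' = 1)
    (hb : b * b' = 1) (p q r s : ℕ) (hdet : r * q = p * s + 1) :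
    (a' ^ p * b ^ q) ^ s * (a ^ r * b' ^ s) ^ q = a ∧
    (a' ^ p * b ^ q) ^ r * (a ^ r * b' ^ s) ^ p = b := by
  constructor
  · calc _ = a ^ (r * q) * a' ^ (p * s) * (b * b') ^ (q * s) := by
          simp only [mul_pow, ← pow_mul]; ring
      _ = a * (a * a') ^ (p * s) * (b * b') ^ (q * s) := by rw [hdet]; ring
      _ = a := by rw [ha, hb]; simp
  · calc _ = (a * a') ^ (r * p) * (b ^ (r * q) * b' ^ (p * s)) := by
          simp only [mul_pow, ← pow_mul]; ring
      _ = b * (a * a') ^ (r * p) * (b * b') ^ (p * s) := by rw [hdet]; ring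
      _ = b := by rw [ha, hb]; simp

theorem gimel_abstract {R L : Type*} [CommRing R] [IsDomain R] [CommRing L] [Algebra R L]
    (hinj : Function.Injective (algebraMap R L)) (P t : R) (hP : P ≠ 0)
    (hPt : ∀ c, P ∣ t * c → P ∣ c) (a' b' : L) (ha : algebraMap R L P * a' = 1)
    (hb : algebraMap R L t * b' = 1)
    (p q r s : ℕ) (hq : 1 ≤ q) (hs : 1 ≤ s) (hdet : r * q = p * s + 1) :
    RingHom.ker (MvPolynomial.aeval (R := R)
        ![a' ^ p * (algebraMap R L t) ^ q, (algebraMap R L P) ^ r * b' ^ s]) =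
      Ideal.span
        {(MvPolynomial.X 0 : MvPolynomial (Fin 2) R) ^ s * MvPolynomial.X 1 ^ q -
           MvPolynomial.C P,
         (MvPolynomial.X 0 : MvPolynomial (Fin 2) R) ^ r * MvPolynomial.X 1 ^ p -
           MvPolynomial.C t} := by
  obtain ⟨hu1, hu2⟩ := gimel_units _ _ _ _ ha hb p q r s hdet
  set I := Ideal.span
        {(MvPolynomial.X 0 : MvPolynomial (Fin 2) R) ^ s * MvPolynomial.X 1 ^ q -
           MvPolynomial.C P,
         (MvPolynomial.X 0 : MvPolynomial (Fin 2) R) ^ r * MvPolynomial.X 1 ^ p -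
           MvPolynomial.C t} with hI
  set ev := MvPolynomial.aeval (R := R)
        ![a' ^ p * (algebraMap R L t) ^ q, (algebraMap R L P) ^ r * b' ^ s] with hev
  have hle : I ≤ RingHom.ker ev := by
    rw [hI, Ideal.span_le]
    rintro F (rfl | rfl)
    · simp [hev, RingHom.mem_ker, hu1]
    · simp [hev, RingHom.mem_ker, hu2]
  refine le_antisymm ?_ hle
  have hmon : ∀ m n : ℕ, (MvPolynomial.X 0 : MvPolynomial (Fin 2) R) ^ m * MvPolynomial.X 1 ^ n
      = MvPolynomial.monomial (Finsupp.single 0 m + Finsupp.single 1 n) (1 : R) := by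
    intro m n
    rw [MvPolynomial.X_pow_eq_monomial, MvPolynomial.X_pow_eq_monomial,
      MvPolynomial.monomial_mul, one_mul]
  have hr : r ≠ 0 := by rintro rfl; simp at hdet
  have htf : ∀ x, MvPolynomial.C P * x ∈ I → x ∈ I := by
    intro x hx
    rw [hI, hmon, hmon] at hx ⊢
    refine gimel_torsion_free P t hP hPt _ _ ?_ x hx
    intro h
    have := DFunLike.congr_fun h 0
    simp at this
    exact hr this
  have htf' : ∀ (n : ℕ) x, MvPolynomial.C P ^ n * x ∈ I → x ∈ I := by
    intro n
    induction n with
    | zero => intro x hx; simpa using hx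
    | succ n ih =>
      intro x hx
      apply ih
      apply htf
      rwa [← mul_assoc, ← pow_succ']
  let mk := Ideal.Quotient.mk I
  have e1 : mk (MvPolynomial.X 0) ^ s * mk (MvPolynomial.X 1) ^ q = mk (MvPolynomial.C P) := by
    rw [← map_pow, ← map_pow, ← map_mul]
    exact Ideal.Quotient.eq.2 (Ideal.subset_span (by simp))
  have e2 : mk (MvPolynomial.X 0) ^ r * mk (MvPolynomial.X 1) ^ p = mk (MvPolynomial.C t) := by
    rw [← map_pow, ← map_pow, ← map_mul]
    exact Ideal.Quotient.eq.2 (Ideal.subset_span (by simp))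
  have e3 : mk (MvPolynomial.C P) ^ p * mk (MvPolynomial.X 0) = mk (MvPolynomial.C t) ^ q := by
    rw [← e1, ← e2]
    simp only [mul_pow, ← pow_mul, hdet]
    ring
  have e4 : mk (MvPolynomial.C t) ^ s * mk (MvPolynomial.X 1) = mk (MvPolynomial.C P) ^ r := by
    rw [← e1, ← e2]
    simp only [mul_pow, ← pow_mul]
    rw [mul_comm q r, hdet]
    ring
  have key : ∀ F, ∃ (m n : ℕ) (c : R),
      mk (MvPolynomial.C P) ^ m * mk (MvPolynomial.C t) ^ n * mk F = mk (MvPolynomial.C c) := by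
    intro F
    induction F using MvPolynomial.induction_on with
    | C c => exact ⟨0, 0, c, by simp⟩
    | add F G hF hG =>
      obtain ⟨m, n, c, h⟩ := hF
      obtain ⟨m', n', c', h'⟩ := hG
      refine ⟨m + m', n + n', P ^ m' * t ^ n' * c + P ^ m * t ^ n * c', ?_⟩
      simp only [map_add, map_mul, map_pow, ← h, ← h']
      ring
    | mul_X F i hF =>
      obtain ⟨m, n, c, h⟩ := hF
      fin_cases i
      · refine ⟨m + p, n, c * t ^ q, ?_⟩
        simp only [map_mul, map_pow, ← h, ← e3, Fin.zero_eta]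
        ring
      · refine ⟨m, n + s, c * P ^ r, ?_⟩
        simp only [map_mul, map_pow, ← h, ← e4, Fin.mk_one]
        ring
  intro F hF
  obtain ⟨m, n, c, h⟩ := key F
  have hc : c = 0 := by
    have h1 : MvPolynomial.C P ^ m * MvPolynomial.C t ^ n * F - MvPolynomial.C c ∈ I := by
      apply Ideal.Quotient.eq.1
      simpa only [map_mul, map_pow] using h
    have h2 := hle h1
    rw [RingHom.mem_ker] at h2 hF
    rw [map_sub, map_mul, hF, mul_zero, zero_sub, neg_eq_zero, hev, MvPolynomial.aeval_C] at h2
    exact hinj (by rw [h2, map_zero])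
  rw [hc, map_zero, map_zero] at h
  have hdvd : mk (MvPolynomial.C t) ∣ mk (MvPolynomial.C P) ^ (r + p) := by
    rw [← e1, ← e2, mul_pow, ← pow_mul, ← pow_mul]
    apply mul_dvd_mul <;> apply pow_dvd_pow <;> nlinarith
  obtain ⟨k, hk⟩ := pow_dvd_pow_of_dvd hdvd n
  apply htf' (m + (r + p) * n)
  apply Ideal.Quotient.eq_zero_iff_mem.1
  change mk _ = 0
  rw [map_mul, map_pow, pow_add, pow_mul, hk]
  linear_combination k * h

/-- With `(A, v)` a scalable semi-valued `(K, v_K)`-algebra, a domain with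
trivial kernel and `⋂ₙ φⁿA = 0` for the prime `φ`, let `π, θ ∈ A^×` with `v(π) > 0` and
`v(θ) = v(φ)`, and let `p, r ∈ ℕ`, `q, s ≥ 1` with `rq − ps = 1`.  Then the kernel of the
`A°`-algebra map `A°[X, Y] → A[φ⁻¹]`, `X ↦ π^{−p}(θ⁻¹φ)^q`, `Y ↦ π^{r}(θ⁻¹φ)^{−s}`, is the
ideal generated by `X^s·Y^q − π` and `X^r·Y^p − θ⁻¹φ`. -/
theorem kernel_aeval_enlargement_case_gimel
    {K A : Type*} [Field K] [CommRing A] [IsDomain A] [Algebra K A]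
    (vK : AddValuation K (WithTop ℝ)) (hnt : vK.IsNontrivial)
    (v : AddValuation A (WithTop ℝ))
    (hext : ∀ x : K, v (algebraMap K A x) = vK x)
    (hker : ∀ x : A, v x = ⊤ → x = 0)
    (hscal : v.ScalableOn ⊤)
    (φ : A) (hφ : Prime φ)
    (hsep : ∀ x : A, (∀ n : ℕ, φ ^ n ∣ x) → x = 0)
    (π θ : Aˣ) (hπ : 0 < v ↑π) (hθ : v ↑θ = v φ)
    (p q r s : ℕ) (hq : 1 ≤ q) (hs : 1 ≤ s) (hdet : r * q = p * s + 1)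
    (πel tel : v.unitBall)
    (hπel : (πel : A) = ↑π) (htel : (tel : A) = (↑θ⁻¹ : A) * φ) :
    RingHom.ker (MvPolynomial.aeval (R := v.unitBall)
        ![algebraMap A (Localization.Away φ) ((↑π⁻¹ : A) ^ p * ((↑θ⁻¹ : A) * φ) ^ q),
          algebraMap A (Localization.Away φ) ((↑π : A) ^ r * (↑θ : A) ^ s) *
            (Localization.Away.invSelf φ) ^ s]) =
      Ideal.span
        {(MvPolynomial.X 0 : MvPolynomial (Fin 2) v.unitBall) ^ s * MvPolynomial.X 1 ^ q -
           MvPolynomial.C πel,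
         (MvPolynomial.X 0 : MvPolynomial (Fin 2) v.unitBall) ^ r * MvPolynomial.X 1 ^ p -
           MvPolynomial.C tel} := by
  have hvt : v (tel : A) = 0 := by
    rw [htel, AddValuation.map_mul, ← hθ, ← AddValuation.map_mul, Units.inv_mul,
      AddValuation.map_one]
  have hφ0 := hφ.ne_zero
  have hinjA : Function.Injective (algebraMap A (Localization.Away φ)) :=
    IsLocalization.injective _ (powers_le_nonZeroDivisors_of_noZeroDivisors hφ0)
  have halg : ∀ x : v.unitBall, algebraMap v.unitBall (Localization.Away φ) x =
      algebraMap A (Localization.Away φ) (x : A) := fun x => rfl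
  have hinv : algebraMap A (Localization.Away φ) φ * Localization.Away.invSelf φ = 1 :=
    by rw [← Localization.mk_one_eq_algebraMap, Localization.Away.invSelf, Localization.mk_mul, ← Localization.mk_one, Localization.mk_eq_mk_iff, Localization.r_iff_exists]; exact ⟨1, by simp⟩
  have hP : πel ≠ 0 := by
    intro h
    rw [h] at hπel
    exact π.ne_zero hπel.symm
  have main := gimel_abstract (R := v.unitBall) (L := Localization.Away φ)
    (fun x y h => Subtype.ext (hinjA h)) πel tel hP
    (by
      rintro c ⟨k, hk⟩
      have hk' : (tel : A) * c = π * k := by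
        rw [← hπel]; exact congrArg Subtype.val hk
      have h2 : (tel : A) * (↑π⁻¹ * c) = k := by
        calc (tel : A) * (↑π⁻¹ * c) = ↑π⁻¹ * (tel * c) := by ring
          _ = k := by rw [hk', Units.inv_mul_cancel_left]
      have h3 : v (↑π⁻¹ * (c : A)) = v (k : A) := by
        rw [← h2, AddValuation.map_mul v (tel : A), hvt, zero_add]
      refine ⟨⟨↑π⁻¹ * c, ?_⟩, ?_⟩
      · change 0 ≤ v _
        rw [h3]; exact k.2
      · apply Subtype.ext
        change (c : A) = πel * (↑π⁻¹ * c)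
        rw [hπel, Units.mul_inv_cancel_left])
    (algebraMap A _ (↑π⁻¹ : A)) (algebraMap A _ (θ : A) * Localization.Away.invSelf φ)
    (by rw [halg, hπel, ← map_mul, Units.mul_inv, map_one])
    (by
      rw [halg, htel, map_mul]
      have : algebraMap A (Localization.Away φ) (↑θ⁻¹ : A) * algebraMap A _ (θ : A) = 1 := by
        rw [← map_mul, Units.inv_mul, map_one]
      linear_combination algebraMap A (Localization.Away φ) φ * Localization.Away.invSelf φ * this + hinv)
    p q r s hq hs hdet
  rw [← main, halg, halg, hπel, htel]
  simp only [map_mul, map_pow, mul_pow, mul_assoc]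
end
end
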